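/- Let A be a Noetherian local complete intersection ring, M a finitely generated A-module, and I an ideal that is either principal or has a principal reduction generated by an A-regular element. Then there exist i_0, n_0 such that either Tor_i^A(M, A/I^n) = 0 for all i ≥ i_0, n ≥ n_0, or there is a nonempty finite subset 𝒜 of Spec(A) such that for every p ∈ 𝒜, either p ∈ Ass_A(Tor_{2i}^A(M, A/I^n)) for all i ≥ i_0 and n ≥ n_0, or p ∈ Ass_A(Tor_{2i+1}^A(M, A/I^n)) for all i ≥ i_0 and n ≥ n_0. -/

import Mathlib

/-!
The proof reduces the powers `I ^ n` to a single module and then studies `Tor_i(M, N)` for two fixed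
modules over a complete intersection `A`.

*Reduction.* `Tor_{i+2}(M, A/Iⁿ) ≅ Tor_{i+1}(M, Iⁿ)`. If `I = (a)`, then `Iⁿ ≅ A/(0 : aⁿ)`, and
the annihilators `(0 : aⁿ)` stabilise, so one more shift gives `Tor_{i+1}(M, (0 : a^{n₀}))`. If `y`
is a nonzerodivisor with `I^{n+1} = y Iⁿ` for `n ≥ m₀`, then `Iⁿ ≅ I^{m₀}`. In both cases the
result follows from `tor_dichotomy`.

*Completion.* The completion `B` of `A` is faithfully flat, `B ⊗ Tor^A(M, N)` is
`Tor^B(B ⊗ M, B ⊗ N)`, and primes associated to `B ⊗ T` contract to primes associated to `T`. So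
it is enough to treat `B = Q/(f₁, …, f_c)` with `Q` regular local and `f` a regular sequence.

*Resolution over `B`.* A finite module over `B` has a finite free resolution `F` over `Q`
(`exists_isFFR_of_regular`). Multiplication by `fⱼ` is null-homotopic on `F`, and these homotopies
extend to a matrix `σ` of polynomials in `X₁, …, X_c` with constant term the differential and
`σ² = ∑ fⱼ Xⱼ` (`IsFFR.exists_higherHomotopy`, after Shamash and Eisenbud). Letting `Xⱼ` act on
divided powers as a shift, `σ` becomes the differential of a free resolution over `B`
(`exists_isPerRes`). Its exactness is proved by adding one equation at a time. The shifts commute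
with the differential and have degree `-2`.

*Asymptotics.* Tensoring the resolution with `M` keeps the following structure in large degrees: the
shifts are successively surjective on the joint kernels of the preceding ones, and their common
kernel is zero. This replaces the Noetherian property of `Ext` over the ring of cohomology operators
by a dual, Artinian one. Let `p` be minimal among the primes at which the homology is nonzero in
arbitrarily large degrees; if there is none, the homology vanishes eventually. By minimality the
localised homology has finite length, descending chains of stable saturated families of cycles
terminate (`satFam_stabilizes`), and so in large degrees a class at `p` killed by all shifts is zero
(`socle_eventually_zero`). Hence vanishing at `p` in a large degree `i` implies vanishing in degree
`i + 2`, so the homology at `p` is nonzero in all large degrees of some parity. For primes `q < p`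
eventual vanishing forces vanishing in all degrees of the tower (`vanAt_all`), hence `p` is minimal
in the support of this homology and is associated to it (`tower_dichotomy`).
-/

open CategoryTheory

universe u

/-- A Noetherian local ring is regular if its maximal ideal is generated by
`dim Q` many elements. -/
def IsRegularLocal (Q : Type u) [CommRing Q] [IsLocalRing Q] [IsNoetherianRing Q] : Prop :=
  ∃ s : Finset Q, Ideal.span (s : Set Q) = IsLocalRing.maximalIdeal Q ∧
    (s.card : WithBot ℕ∞) = ringKrullDim Q

/-- A Noetherian local ring `A` is a complete intersection if its `m`-adic completion is
`Q/(f₁,…,f_c)` for a regular local ring `Q` and a `Q`-regular sequence `f₁,…,f_c`. -/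
def IsLocalCompleteIntersection (A : Type u) [CommRing A] [IsLocalRing A]
    [IsNoetherianRing A] : Prop :=
  ∃ (Q : Type u) (_ : CommRing Q) (_ : IsLocalRing Q) (_ : IsNoetherianRing Q),
    IsRegularLocal Q ∧
    ∃ rs : List Q, RingTheory.Sequence.IsRegular Q rs ∧
      Nonempty ((AdicCompletion (IsLocalRing.maximalIdeal A) A) ≃+*
        (Q ⧸ Ideal.span {x | x ∈ rs}))

/-! ### Modules supported on primes not strictly below a given one -/

/-- A finitely generated module `X` whose localizations at the primes strictly below `p` vanish
has an Artinian localization at `p`. -/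
lemma isArtinian_localized_of_forall_lt {R : Type*} [CommRing R] [IsNoetherianRing R]
    {X : Type*} [AddCommGroup X] [Module R X] [Module.Finite R X] (p : Ideal R) [p.IsPrime]
    (h : ∀ q : Ideal R, q.IsPrime → q < p → ∀ x : X, ∃ s ∉ q, s • x = 0) :
    IsArtinian (Localization p.primeCompl) (LocalizedModule p.primeCompl X) := by
  set Rp := Localization p.primeCompl
  set Xp := LocalizedModule p.primeCompl X
  have : IsNoetherianRing Rp := IsLocalization.isNoetherianRing p.primeCompl Rp inferInstance
  have : IsLocalRing Rp := Localization.AtPrime.isLocalRing p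
  have : Module.Finite Rp Xp :=
    Module.Finite.of_isLocalizedModule p.primeCompl (LocalizedModule.mkLinearMap p.primeCompl X)
  let a := Module.annihilator Rp Xp
  -- Every prime containing the annihilator of `X_p` is the maximal ideal.
  have key : ∀ J : Ideal Rp, J.IsPrime → a ≤ J → J.IsMaximal := by
    intro J hJ haJ
    have hle : J ≤ IsLocalRing.maximalIdeal Rp := IsLocalRing.le_maximalIdeal hJ.ne_top
    let q := J.comap (algebraMap R Rp)
    have : q.IsPrime := Ideal.IsPrime.comap _
    have hqp : q ≤ p := by
      have h1 := Ideal.comap_mono (f := algebraMap R Rp) hle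
      have h2 : (IsLocalRing.maximalIdeal Rp).comap (algebraMap R Rp) = p :=
        Localization.AtPrime.under_maximalIdeal
      exact h1.trans h2.le
    have hqe : q = p := by
      by_contra hne
      have hlt : q < p := lt_of_le_of_ne hqp hne
      classical
      obtain ⟨G, hG⟩ := (Module.Finite.fg_top (R := R) (M := X))
      choose s hs hs0 using h q inferInstance hlt
      have hprod : (∏ g ∈ G, s g) ∉ q := by
        intro hmem
        obtain ⟨g, -, hg⟩ := (Ideal.IsPrime.prod_mem_iff (hp := ‹q.IsPrime›)).1 hmem
        exact hs g hg
      have hk : ∀ x : X, (∏ g ∈ G, s g) • x = 0 := by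
        intro x
        have hx : x ∈ Submodule.span R (G : Set X) := by rw [hG]; trivial
        induction hx using Submodule.span_induction with
        | mem y hy =>
          rw [← Finset.prod_erase_mul G s hy, mul_smul, hs0, smul_zero]
        | zero => simp
        | add y z _ _ hy hz => rw [smul_add, hy, hz, add_zero]
        | smul r y _ hy => rw [smul_comm, hy, smul_zero]
      have : algebraMap R Rp (∏ g ∈ G, s g) ∈ a := by
        rw [Module.mem_annihilator]
        intro y
        induction y using LocalizedModule.induction_on with
        | _ m t =>
          rw [algebraMap_smul, LocalizedModule.smul'_mk, hk]
          simp
      exact hprod (haJ this)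
    have : J = IsLocalRing.maximalIdeal Rp := by
      rw [← IsLocalization.map_under p.primeCompl Rp J]
      change Ideal.map (algebraMap R Rp) q = _
      rw [hqe]
      exact Localization.AtPrime.map_eq_maximalIdeal
    rw [this]
    infer_instance
  have : Ring.KrullDimLE 0 (Rp ⧸ a) := Ring.krullDimLE_zero_iff.mpr fun J hJ => by
    have h1 := key (J.comap (Ideal.Quotient.mk a)) (Ideal.IsPrime.comap _) (by
      intro x hx
      rw [Ideal.mem_comap, Ideal.Quotient.eq_zero_iff_mem.2 hx]
      exact J.zero_mem)
    have h2 := Ideal.map_eq_top_or_isMaximal_of_surjective (Ideal.Quotient.mk a)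
      Ideal.Quotient.mk_surjective h1
    rw [Ideal.map_comap_of_surjective _ Ideal.Quotient.mk_surjective] at h2
    exact h2.resolve_left hJ.ne_top
  have : IsArtinianRing (Rp ⧸ a) := isArtinianRing_iff_krullDimLE_zero.2 inferInstance
  let : Module (Rp ⧸ a) Xp := Module.quotientAnnihilator
  have : IsScalarTower Rp (Rp ⧸ a) Xp := .of_algebraMap_smul fun _ _ => rfl
  have : Module.Finite (Rp ⧸ a) Xp := Module.Finite.of_restrictScalars_finite Rp _ _
  have hX : IsArtinian (Rp ⧸ a) Xp := isArtinian_of_fg_of_artinian'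
  exact (isArtinian_of_surjective_algebraMap (R := Rp ⧸ a) (S := Rp) (M := Xp)
    Ideal.Quotient.mk_surjective)

/-- Descending chain condition for the submodules between `B` and `Z` which are saturated with
respect to the complement of `p`, when `Z / B` is supported on primes not strictly below `p`. -/
lemma saturated_chain_stabilizes {R : Type*} [CommRing R] [IsNoetherianRing R]
    {C : Type*} [AddCommGroup C] [Module R C] (p : Ideal R) [p.IsPrime]
    (Z B : Submodule R C) (hZ : Z.FG)
    (h : ∀ q : Ideal R, q.IsPrime → q < p → ∀ z ∈ Z, ∃ s ∉ q, s • z ∈ B)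
    (W : ℕ → Submodule R C) (hW : Antitone W) (hB : ∀ m, B ≤ W m) (hWZ : ∀ m, W m ≤ Z)
    (hsat : ∀ m, ∀ z ∈ Z, ∀ s ∉ p, s • z ∈ W m → z ∈ W m) :
    ∃ m₀, ∀ m ≥ m₀, W m = W m₀ := by
  let B' : Submodule R Z := B.comap Z.subtype
  have : Module.Finite R Z := Module.Finite.iff_fg.2 hZ
  have hart : IsArtinian (Localization p.primeCompl) (LocalizedModule p.primeCompl (Z ⧸ B')) := by
    apply isArtinian_localized_of_forall_lt
    intro q hq hqp x
    obtain ⟨z, rfl⟩ := Submodule.mkQ_surjective _ x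
    obtain ⟨s, hs, hz⟩ := h q hq hqp z z.2
    refine ⟨s, hs, ?_⟩
    rw [← map_smul, Submodule.mkQ_apply, Submodule.Quotient.mk_eq_zero]
    exact hz
  let W' : ℕ → Submodule R (Z ⧸ B') := fun m => ((W m).comap Z.subtype).map B'.mkQ
  have hW' : Antitone W' := fun m n hmn => Submodule.map_mono (Submodule.comap_mono (hW hmn))
  let L : ℕ → Submodule (Localization p.primeCompl) (LocalizedModule p.primeCompl (Z ⧸ B')) :=
    fun m => Submodule.localized p.primeCompl (W' m)
  have hL : Antitone L := by
    intro m n hmn x hx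
    obtain ⟨y, hy, s, rfl⟩ := hx
    exact ⟨y, hW' hmn hy, s, rfl⟩
  obtain ⟨m₀, hm₀⟩ := IsArtinian.monotone_stabilizes (R := Localization p.primeCompl)
    (M := LocalizedModule p.primeCompl (Z ⧸ B')) ⟨fun m => OrderDual.toDual (L m), hL⟩
  refine ⟨m₀, fun m hm => le_antisymm (hW hm) fun z hz => ?_⟩
  have hLm : L m₀ = L m := hm₀ m hm
  have hzZ := hWZ _ hz
  have h1 : LocalizedModule.mk (B'.mkQ ⟨z, hzZ⟩) 1 ∈ L m₀ :=
    ⟨_, ⟨⟨z, hzZ⟩, hz, rfl⟩, 1, by simp [LocalizedModule.mk_eq]⟩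
  rw [hLm] at h1
  obtain ⟨y, ⟨w, hw, rfl⟩, s, hy⟩ := h1
  rw [← IsLocalizedModule.mk_eq_mk', LocalizedModule.mk_eq] at hy
  obtain ⟨t, ht⟩ := hy
  have ht' : B'.mkQ ((t : R) • (1 : R) • w - (t : R) • (s : R) • ⟨z, hzZ⟩) = 0 := by
    rw [map_sub, map_smul, map_smul, map_smul, map_smul, sub_eq_zero, one_smul]
    simpa [Submonoid.smul_def] using ht
  rw [Submodule.mkQ_apply, Submodule.Quotient.mk_eq_zero] at ht'
  have h3 := hB m ht'
  simp only [one_smul, map_sub, map_smul, Submodule.subtype_apply] at h3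
  have h4 : (t : R) • (w : C) ∈ W m := (W m).smul_mem _ hw
  have h5 : (t : R) • (s : R) • z ∈ W m := by
    have := (W m).sub_mem h4 h3
    simpa using this
  exact hsat m z hzZ s s.2 (hsat m _ (Z.smul_mem _ hzZ) t t.2 h5)

/-! ### Towers of operators on a complex -/

section Tower

variable {R : Type*} [CommRing R] {C : Type*} [AddCommGroup C] [Module R C]

/-- A graded complex `(V i, d)` inside an ambient module `C`, with commuting chain operators
`χ ∈ L` of degree `-2`. -/
structure IsSys (d : Module.End R C) (V : ℕ → Submodule R C) (L : List (Module.End R C)) :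
    Prop where
  dd : ∀ x, d (d x) = 0
  dV : ∀ i, ∀ x ∈ V (i + 1), d x ∈ V i
  χV : ∀ χ ∈ L, ∀ i, ∀ x ∈ V (i + 2), χ x ∈ V i
  χd : ∀ χ ∈ L, ∀ x, d (χ x) = χ (d x)
  comm : ∀ χ ∈ L, ∀ ψ ∈ L, ∀ x, χ (ψ x) = ψ (χ x)

/-- The operators of `L` are successively surjective on the joint kernels of the preceding ones,
and the joint kernel of all of them is an exact complex. -/
def Tower (d : Module.End R C) : List (Module.End R C) → (ℕ → Submodule R C) → Prop
  | [], V => ∀ i, ∀ z ∈ V i, d z = 0 → ∃ b ∈ V (i + 1), d b = z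
  | χ :: L, V => (∀ i, ∀ v ∈ V i, ∃ w ∈ V (i + 2), χ w = v) ∧
      Tower d L (fun i => V i ⊓ LinearMap.ker χ)

/-- The homology of `V` in degree `i` (with all elements killed by `d` counted as cycles) vanishes
after localizing at the prime `q`. -/
def VanAt (q : Ideal R) (d : Module.End R C) (V : ℕ → Submodule R C) (i : ℕ) : Prop :=
  ∀ z ∈ V i, d z = 0 → ∃ s ∉ q, ∃ b ∈ V (i + 1), d b = s • z

variable {d : Module.End R C} {V : ℕ → Submodule R C} {χ : Module.End R C}
  {L : List (Module.End R C)}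

lemma IsSys.tail (h : IsSys d V (χ :: L)) : IsSys d (fun i => V i ⊓ LinearMap.ker χ) L where
  dd := h.dd
  dV i x hx := ⟨h.dV i x hx.1, by
    have := hx.2
    rw [SetLike.mem_coe, LinearMap.mem_ker] at this ⊢
    rw [← h.χd χ (by simp), this, map_zero]⟩
  χV ψ hψ i x hx := ⟨h.χV ψ (by simp [hψ]) i x hx.1, by
    have := hx.2
    rw [SetLike.mem_coe, LinearMap.mem_ker] at this ⊢
    rw [h.comm χ (by simp) ψ (by simp [hψ]), this, map_zero]⟩
  χd ψ hψ := h.χd ψ (by simp [hψ])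
  comm ψ hψ φ hφ := h.comm ψ (by simp [hψ]) φ (by simp [hφ])

lemma not_mem_mul {q : Ideal R} (hq : q.IsPrime) {s t : R} (hs : s ∉ q) (ht : t ∉ q) :
    s * t ∉ q := fun h => (hq.mem_or_mem h).elim hs ht

lemma VanAt.ker (q : Ideal R) (hq : q.IsPrime) (h : IsSys d V (χ :: L))
    (hsurj : ∀ i, ∀ v ∈ V i, ∃ w ∈ V (i + 2), χ w = v) {j : ℕ}
    (h0 : VanAt q d V j) (h1 : VanAt q d V (j + 1)) :
    VanAt q d (fun i => V i ⊓ LinearMap.ker χ) (j + 1) := by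
  rintro k ⟨hkV, hkχ⟩ hdk
  obtain ⟨s, hs, b, hb, hdb⟩ := h1 k hkV hdk
  have hχ := List.mem_cons_self (a := χ) (l := L)
  obtain ⟨t, ht, b2, hb2, hdb2⟩ := h0 (χ b) (h.χV χ hχ j b hb) (by
    rw [h.χd χ hχ, hdb, map_smul, LinearMap.mem_ker.1 hkχ, smul_zero])
  obtain ⟨b', hb', rfl⟩ := hsurj _ b2 hb2
  refine ⟨t * s, not_mem_mul hq ht hs, t • b - d b',
    ⟨(V (j + 1 + 1)).sub_mem ((V _).smul_mem t hb) (h.dV _ _ hb'), ?_⟩, ?_⟩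
  · rw [SetLike.mem_coe, LinearMap.mem_ker, map_sub, map_smul, ← h.χd χ hχ, hdb2, sub_self]
  · rw [map_sub, h.dd, map_smul, hdb, sub_zero, smul_smul]

lemma VanAt.descend (q : Ideal R) (hq : q.IsPrime) (h : IsSys d V (χ :: L))
    (hsurj : ∀ i, ∀ v ∈ V i, ∃ w ∈ V (i + 2), χ w = v) {i : ℕ}
    (h0 : VanAt q d V (i + 2)) (h1 : VanAt q d (fun i => V i ⊓ LinearMap.ker χ) (i + 1)) :
    VanAt q d V i := by
  intro c hc hdc
  have hχ := List.mem_cons_self (a := χ) (l := L)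
  obtain ⟨c', hc', rfl⟩ := hsurj i c hc
  obtain ⟨s, hs, k, hk, hdk⟩ := h1 (d c') ⟨h.dV _ _ hc', by
    rw [SetLike.mem_coe, LinearMap.mem_ker, ← h.χd χ hχ, hdc]⟩ (h.dd _)
  obtain ⟨t, ht, b, hb, hdb⟩ := h0 (s • c' - k)
    ((V (i + 2)).sub_mem ((V _).smul_mem s hc') hk.1) (by
      rw [map_sub, map_smul, hdk, sub_self])
  refine ⟨t * s, not_mem_mul hq ht hs, χ b, h.χV χ hχ _ b hb, ?_⟩
  rw [h.χd χ hχ, hdb, map_smul, map_sub, LinearMap.mem_ker.1 hk.2, sub_zero, map_smul, smul_smul]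

/-- Local vanishing in all large degrees forces local vanishing in all degrees. -/
lemma vanAt_all (q : Ideal R) (hq : q.IsPrime) : ∀ (L : List (Module.End R C))
    (V : ℕ → Submodule R C), IsSys d V L → Tower d L V → (∃ N, ∀ i ≥ N, VanAt q d V i) →
    ∀ i, VanAt q d V i
  | [], V, _, hT, _, i => by
    intro z hz hdz
    obtain ⟨b, hb, hdb⟩ := hT i z hz hdz
    exact ⟨1, fun h => hq.ne_top ((Ideal.eq_top_iff_one q).2 h), b, hb, by rw [hdb, one_smul]⟩
  | χ :: L, V, h, hT, ⟨N, hN⟩, i => by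
    have ih := vanAt_all q hq L _ h.tail hT.2 ⟨N + 1, fun i hi => by
      obtain ⟨j, rfl⟩ : ∃ j, i = j + 1 := ⟨i - 1, by omega⟩
      exact VanAt.ker q hq h hT.1 (hN j (by omega)) (hN (j + 1) (by omega))⟩
    have key : ∀ n i, i + 2 * n ≥ N → VanAt q d V i := by
      intro n
      induction n with
      | zero => exact fun i hi => hN i hi
      | succ n ihn =>
        intro i hi
        exact VanAt.descend q hq h hT.1 (ihn (i + 2) (by omega)) (ih (i + 1))
    exact key N i (by omega)

/-- A doubly indexed antitone family whose diagonal and columns stabilize does so uniformly. -/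
lemma stabilize_uniform {α : Type*} [PartialOrder α] (F : ℕ → ℕ → α)
    (h1 : ∀ m m' r, m ≤ m' → F m' r ≤ F m r) (h2 : ∀ m r r', r ≤ r' → F m r' ≤ F m r)
    (hd : ∃ m₀, ∀ m ≥ m₀, F m m = F m₀ m₀) (hc : ∀ r, ∃ m₀, ∀ m ≥ m₀, F m r = F m₀ r) :
    ∃ m₀, ∀ m ≥ m₀, ∀ r, F m r = F m₀ r := by
  obtain ⟨D, hD⟩ := hd
  choose c hc using hc
  refine ⟨D + ∑ r ∈ Finset.range D, c r, ?_⟩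
  have key : ∀ m ≥ D, ∀ r ≥ D, F m r = F D D := by
    intro m hm r hr
    refine le_antisymm ((h1 _ _ _ hm).trans (h2 _ _ _ hr)) ?_
    rw [← hD (max m r) (by omega)]
    exact (h1 _ _ _ (le_max_left m r)).trans (h2 _ _ _ (le_max_right m r))
  intro m hm r
  rcases lt_or_ge r D with hr | hr
  · have : c r ≤ ∑ r ∈ Finset.range D, c r :=
      Finset.single_le_sum (f := c) (fun _ _ => Nat.zero_le _) (Finset.mem_range.2 hr)
    exact (hc r m (by omega)).trans (hc r _ (by omega)).symm
  · rw [key m (by omega) r hr, key _ (by omega) r hr]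

/-- The cycles `u ∈ V i` such that, up to boundaries and multipliers outside `p`, `u` is of the
form `χⁿ w` with `w ∈ W (i + 2n)`. -/
def imgPow (p : Ideal R) (hp : p.IsPrime) (d χ : Module.End R C) (V V' W : ℕ → Submodule R C)
    (n i : ℕ) : Submodule R C where
  carrier := {u | u ∈ V' i ∧ d u = 0 ∧ ∃ s ∉ p, ∃ w ∈ W (i + 2 * n), ∃ b ∈ V (i + 1),
    s • u - (χ ^ n) w = d b}
  zero_mem' := ⟨(V' i).zero_mem, map_zero d, 1, fun h => hp.ne_top ((Ideal.eq_top_iff_one p).2 h),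
    0, (W _).zero_mem, 0, (V _).zero_mem, by simp⟩
  add_mem' := by
    rintro u v ⟨hu, hdu, s, hs, w, hw, b, hb, e⟩ ⟨hv, hdv, t, ht, w', hw', b', hb', e'⟩
    refine ⟨(V' i).add_mem hu hv, by rw [map_add, hdu, hdv, add_zero], s * t,
      not_mem_mul hp hs ht, t • w + s • w', (W _).add_mem ((W _).smul_mem _ hw)
        ((W _).smul_mem _ hw'), t • b + s • b', (V _).add_mem ((V _).smul_mem _ hb)
        ((V _).smul_mem _ hb'), ?_⟩
    simp only [map_add, map_smul, ← e, ← e']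
    module
  smul_mem' := by
    rintro r u ⟨hu, hdu, s, hs, w, hw, b, hb, e⟩
    refine ⟨(V' i).smul_mem _ hu, by rw [map_smul, hdu, smul_zero], s, hs, r • w,
      (W _).smul_mem _ hw, r • b, (V _).smul_mem _ hb, ?_⟩
    simp only [map_smul, ← e]
    module

/-- A family of submodules of the cycles of `V` containing all boundaries, saturated with respect
to the complement of `p`, and stable under the operators in `L`. -/
structure IsSatFam (p : Ideal R) (d : Module.End R C) (V : ℕ → Submodule R C)
    (L : List (Module.End R C)) (W : ℕ → Submodule R C) : Prop where
  bd : ∀ i, ∀ x ∈ V (i + 1), d x ∈ W i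
  le : ∀ i, ∀ w ∈ W i, w ∈ V i ∧ d w = 0
  sat : ∀ i, ∀ z ∈ V i, d z = 0 → ∀ s ∉ p, s • z ∈ W i → z ∈ W i
  inv : ∀ χ ∈ L, ∀ i, ∀ w ∈ W (i + 2), χ w ∈ W i

lemma pow_comm_d (h : IsSys d V (χ :: L)) (n : ℕ) (x : C) : d ((χ ^ n) x) = (χ ^ n) (d x) := by
  induction n generalizing x with
  | zero => rfl
  | succ n ih => rw [pow_succ, Module.End.mul_apply, ih, h.χd χ (by simp)]; rfl

lemma pow_comm_χ (h : IsSys d V (χ :: L)) {ψ : Module.End R C} (hψ : ψ ∈ χ :: L) (n : ℕ) (x : C) :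
    ψ ((χ ^ n) x) = (χ ^ n) (ψ x) := by
  induction n generalizing x with
  | zero => rfl
  | succ n ih => rw [pow_succ, Module.End.mul_apply, ih, h.comm ψ hψ χ (by simp)]; rfl

lemma IsSatFam.pow_mem {p : Ideal R} {W : ℕ → Submodule R C} (hW : IsSatFam p d V (χ :: L) W)
    (n : ℕ) : ∀ i, ∀ w ∈ W (i + 2 * n), (χ ^ n) w ∈ W i := by
  induction n with
  | zero => exact fun i w hw => hw
  | succ n ih =>
    intro i w hw
    rw [pow_succ, Module.End.mul_apply]
    exact ih i _ (hW.inv χ (by simp) _ w hw)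

lemma imgPow_mono_W {p : Ideal R} {hp : p.IsPrime} {V' W W' : ℕ → Submodule R C}
    (hW : ∀ i, W' i ≤ W i) (n i : ℕ) :
    imgPow p hp d χ V V' W' n i ≤ imgPow p hp d χ V V' W n i := by
  rintro u ⟨hu, hdu, s, hs, w, hw, b, hb, e⟩
  exact ⟨hu, hdu, s, hs, w, hW _ hw, b, hb, e⟩

lemma imgPow_anti {p : Ideal R} {hp : p.IsPrime} {V' W : ℕ → Submodule R C}
    (hW : IsSatFam p d V (χ :: L) W) {n n' : ℕ} (hn : n ≤ n') (i : ℕ) :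
    imgPow p hp d χ V V' W n' i ≤ imgPow p hp d χ V V' W n i := by
  rintro u ⟨hu, hdu, s, hs, w, hw, b, hb, e⟩
  obtain ⟨k, rfl⟩ := Nat.exists_eq_add_of_le hn
  refine ⟨hu, hdu, s, hs, (χ ^ k) w, hW.pow_mem k _ w ?_, b, hb, ?_⟩
  · rwa [show i + 2 * n + 2 * k = i + 2 * (n + k) by ring]
  · rw [← Module.End.mul_apply, ← pow_add]; exact e

lemma imgPow_sat {p : Ideal R} {hp : p.IsPrime} {V' W : ℕ → Submodule R C} {n i : ℕ}
    (z : C) (hz : z ∈ V' i) (hdz : d z = 0) (t : R) (ht : t ∉ p)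
    (h : t • z ∈ imgPow p hp d χ V V' W n i) : z ∈ imgPow p hp d χ V V' W n i := by
  obtain ⟨-, -, s, hs, w, hw, b, hb, e⟩ := h
  exact ⟨hz, hdz, s * t, not_mem_mul hp hs ht, w, hw, b, hb, by rw [← e, smul_smul]⟩

lemma one_notMem {p : Ideal R} (hp : p.IsPrime) : (1 : R) ∉ p :=
  fun h => hp.ne_top ((Ideal.eq_top_iff_one p).2 h)

lemma imgPow_bd (h : IsSys d V (χ :: L)) {p : Ideal R} {hp : p.IsPrime} {V' W : ℕ → Submodule R C}
    {n i : ℕ} (x : C) (hx : x ∈ V (i + 1)) (hdx : d x ∈ V' i) :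
    d x ∈ imgPow p hp d χ V V' W n i :=
  ⟨hdx, h.dd _, 1, one_notMem hp, 0, (W _).zero_mem, x, hx, by simp⟩

lemma isSatFam_imgPow (h : IsSys d V (χ :: L)) {p : Ideal R} {hp : p.IsPrime}
    {W : ℕ → Submodule R C} (hW : IsSatFam p d V (χ :: L) W) (n : ℕ) :
    IsSatFam p d (fun i => V i ⊓ LinearMap.ker χ) L
      (imgPow p hp d χ V (fun i => V i ⊓ LinearMap.ker χ) W n) where
  bd i x hx := imgPow_bd h x hx.1 (h.tail.dV i x hx)
  le i w hw := ⟨hw.1, hw.2.1⟩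
  sat i z hz hdz s hs hsz := imgPow_sat z hz hdz s hs hsz
  inv ψ hψ i u hu := by
    obtain ⟨hu, hdu, s, hs, w, hw, b, hb, e⟩ := hu
    have hψL : ψ ∈ χ :: L := List.mem_cons_of_mem _ hψ
    refine ⟨h.tail.χV ψ hψ i u hu, by rw [h.χd ψ hψL, hdu, map_zero], s, hs, ψ w,
      hW.inv ψ hψL _ w ?_, ψ b, h.χV ψ hψL _ b hb, ?_⟩
    · rwa [show i + 2 * n + 2 = i + 2 + 2 * n by ring]
    · rw [h.χd ψ hψL, ← e, map_sub, map_smul, pow_comm_χ h hψL]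

/-- Descending chain condition for saturated stable families of cycles, when the homology is
supported, in large degrees, on primes not strictly below `p`. -/
lemma satFam_stabilizes [IsNoetherianRing R] (p : Ideal R) (hp : p.IsPrime) :
    ∀ (L : List (Module.End R C)) (V : ℕ → Submodule R C), IsSys d V L → Tower d L V →
    (∀ i, (V i).FG) → (∀ q : Ideal R, q.IsPrime → q < p → ∃ N, ∀ i ≥ N, VanAt q d V i) →
    ∀ (W : ℕ → ℕ → Submodule R C), Antitone W → (∀ m, IsSatFam p d V L (W m)) →
    ∃ m₀, ∀ m ≥ m₀, W m = W m₀
  | [], V, _, hT, _, _, W, _, hW => by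
    refine ⟨0, fun m _ => funext fun i => le_antisymm ?_ ?_⟩ <;>
    · intro z hz
      obtain ⟨h1, h2⟩ := (hW _).le i z hz
      obtain ⟨b, hb, rfl⟩ := hT i z h1 h2
      exact (hW _).bd i b hb
  | χ :: L, V, h, hT, hFG, hq, W, hanti, hW => by
    have hχ := List.mem_cons_self (a := χ) (l := L)
    have hall : ∀ q : Ideal R, q.IsPrime → q < p → ∀ i, VanAt q d V i :=
      fun q hq1 hq2 => vanAt_all q hq1 _ V h hT (hq q hq1 hq2)
    have hall' : ∀ q : Ideal R, q.IsPrime → q < p → ∃ N, ∀ i ≥ N,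
        VanAt q d (fun i => V i ⊓ LinearMap.ker χ) i := fun q hq1 hq2 => ⟨1, fun i hi => by
      obtain ⟨j, rfl⟩ : ∃ j, i = j + 1 := ⟨i - 1, by omega⟩
      exact VanAt.ker q hq1 h hT.1 (hall q hq1 hq2 j) (hall q hq1 hq2 (j + 1))⟩
    have FGle : ∀ i (X : Submodule R C), X ≤ V i → X.FG := fun i X hX => by
      have : Module.Finite R (V i) := Module.Finite.iff_fg.2 (hFG i)
      have := (IsNoetherian.noetherian (X.comap (V i).subtype)).map (V i).subtype
      rwa [Submodule.map_comap_eq, Submodule.range_subtype, inf_eq_right.2 hX] at this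
    have ih := satFam_stabilizes p hp L (fun i => V i ⊓ LinearMap.ker χ) h.tail hT.2
      (fun i => FGle i _ inf_le_left) hall'
    -- `U m n` collects the classes of `χⁿ W m` on the kernel of `χ`.
    let U : ℕ → ℕ → ℕ → Submodule R C := fun m n =>
      imgPow p hp d χ V (fun i => V i ⊓ LinearMap.ker χ) (W m) n
    have hU1 : ∀ m m' r, m ≤ m' → U m' r ≤ U m r := fun m m' r hm i =>
      imgPow_mono_W (fun i => hanti hm i) r i
    have hU2 : ∀ m r r', r ≤ r' → U m r' ≤ U m r := fun m r r' hr i => imgPow_anti (hW m) hr i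
    obtain ⟨m₁, hm₁⟩ := stabilize_uniform U hU1 hU2
      (ih (fun m => U m m) (fun m m' hm => (hU1 _ _ _ hm).trans (hU2 _ _ _ hm))
        fun m => isSatFam_imgPow h (hW m) m)
      (fun r => ih (fun m => U m r) (fun m m' hm => hU1 _ _ _ hm)
        fun m => isSatFam_imgPow h (hW m) r)
    -- `Y m n` collects the classes of `χⁿ W m` in a fixed (low) degree.
    let Y : ℕ → ℕ → ℕ → Submodule R C := fun j m n => imgPow p hp d χ V V (W m) n j
    have hY1 : ∀ j m m' r, m ≤ m' → Y j m' r ≤ Y j m r := fun j m m' r hm =>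
      imgPow_mono_W (fun i => hanti hm i) r j
    have hY2 : ∀ j m r r', r ≤ r' → Y j m r' ≤ Y j m r := fun j m r r' hr =>
      imgPow_anti (hW m) hr j
    have hYst : ∀ j (f : ℕ → ℕ), Monotone f → ∃ m₀, ∀ m ≥ m₀, Y j m (f m) = Y j m₀ (f m₀) := by
      intro j f hf
      refine saturated_chain_stabilizes p (V j ⊓ LinearMap.ker d) ((V (j + 1)).map d)
        (FGle j _ inf_le_left) ?_ (fun m => Y j m (f m))
        (fun m m' hm => (hY1 _ _ _ _ hm).trans (hY2 _ _ _ _ (hf hm))) ?_ ?_ ?_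
      · rintro q hq1 hq2 z ⟨hz, hdz⟩
        obtain ⟨s, hs, b, hb, e⟩ := hall q hq1 hq2 j z hz hdz
        exact ⟨s, hs, b, hb, e⟩
      · rintro m _ ⟨x, hx, rfl⟩
        exact imgPow_bd h x hx (h.dV j x hx)
      · exact fun m u hu => ⟨hu.1, hu.2.1⟩
      · exact fun m z hz s hs hsz => imgPow_sat z hz.1 hz.2 s hs hsz
    have hYu : ∀ j, ∃ m₀, ∀ m ≥ m₀, ∀ r, Y j m r = Y j m₀ r := fun j =>
      stabilize_uniform (Y j) (hY1 j) (hY2 j) (hYst j id monotone_id)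
        (fun r => hYst j (fun _ => r) monotone_const)
    obtain ⟨m₂, hm₂⟩ := hYu 0
    obtain ⟨m₃, hm₃⟩ := hYu 1
    refine ⟨m₁ + m₂ + m₃, fun m hm => ?_⟩
    set M := m₁ + m₂ + m₃ with hM
    have hUM : ∀ r, U M r = U m r := fun r => by rw [hm₁ m (by omega), hm₁ M (by omega)]
    have hYM : ∀ j < 2, ∀ r, Y j M r = Y j m r := by
      intro j hj r
      interval_cases j
      · rw [hm₂ m (by omega), hm₂ M (by omega)]
      · rw [hm₃ m (by omega), hm₃ M (by omega)]
    have claim : ∀ r k, ∀ w ∈ W M (k + 2 * r), ∀ s ∉ p, ∀ b ∈ V (k + 1),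
        s • (χ ^ r) w = d b → w ∈ W m (k + 2 * r) := by
      intro r
      induction r with
      | zero =>
        intro k w hw s hs b hb e
        refine (hW m).sat k w ((hW M).le k w hw).1 ((hW M).le k w hw).2 s hs ?_
        have : s • w = d b := e
        rw [this]
        exact (hW m).bd k b hb
      | succ r ihr =>
        intro k w hw s hs b hb e
        have hidx : k + 2 + 2 * r = k + 2 * (r + 1) := by ring
        rw [← hidx] at hw ⊢
        have hv := (hW M).pow_mem r _ w hw
        obtain ⟨hvV, hdv⟩ := (hW M).le _ _ hv
        obtain ⟨b', hb', rfl⟩ := hT.1 _ b hb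
        have huV : s • (χ ^ r) w - d b' ∈ U M r (k + 2) := by
          refine ⟨⟨(V _).sub_mem ((V _).smul_mem _ hvV) (h.dV _ _ hb'), ?_⟩, ?_, 1, one_notMem hp,
            s • w, (W M _).smul_mem _ hw, -b', (V _).neg_mem hb', ?_⟩
          · rw [SetLike.mem_coe, LinearMap.mem_ker, map_sub, map_smul, ← h.χd χ hχ, ← e, pow_succ']
            exact sub_self _
          · rw [map_sub, map_smul, hdv, h.dd, smul_zero, sub_zero]
          · rw [map_smul, map_neg]
            module
        rw [hUM] at huV
        obtain ⟨-, -, t, ht, w', hw', c, hc, e'⟩ := huV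
        have h1 := ihr (k + 2) ((t * s) • w - w')
          ((W M _).sub_mem ((W M _).smul_mem _ hw) (hanti hm _ hw')) 1 (one_notMem hp)
          (c + t • b') ((V _).add_mem hc ((V _).smul_mem _ hb')) (by
            rw [map_add, ← e', map_sub, map_smul, map_smul]
            module)
        have h2 := (W m _).add_mem h1 hw'
        rw [sub_add_cancel] at h2
        obtain ⟨h3, h4⟩ := (hW M).le _ w hw
        exact (hW m).sat _ w h3 h4 _ (not_mem_mul hp ht hs) h2
    refine funext fun i => le_antisymm (hanti hm i) fun w hw => ?_
    obtain ⟨j, r, hj, rfl⟩ : ∃ j r, j < 2 ∧ i = j + 2 * r := ⟨i % 2, i / 2, by omega, by omega⟩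
    obtain ⟨h3, h4⟩ := (hW M).le _ w hw
    have hv := (hW M).le _ _ ((hW M).pow_mem r _ w hw)
    have hu : (χ ^ r) w ∈ Y j M r := ⟨hv.1, hv.2, 1, one_notMem hp, w, hw, 0, (V _).zero_mem, by
      simp⟩
    rw [hYM j hj] at hu
    obtain ⟨-, -, s, hs, w', hw', b, hb, e⟩ := hu
    have h1 := claim r j (s • w - w') ((W M _).sub_mem ((W M _).smul_mem _ hw) (hanti hm _ hw')) 1
      (one_notMem hp) b hb (by rw [← e, map_sub, map_smul, one_smul])
    have h2 := (W m _).add_mem h1 hw'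
    rw [sub_add_cancel] at h2
    exact (hW m).sat _ w h3 h4 s hs h2

/-- In large degrees, a cycle all of whose images under the `χ ∈ L` are boundaries locally at `p`
is itself a boundary locally at `p`. -/
lemma socle_eventually_zero [IsNoetherianRing R] (p : Ideal R) (hp : p.IsPrime)
    (h : IsSys d V L) (hT : Tower d L V) (hFG : ∀ i, (V i).FG)
    (hq : ∀ q : Ideal R, q.IsPrime → q < p → ∃ N, ∀ i ≥ N, VanAt q d V i) :
    ∃ N, ∀ i ≥ N, ∀ z ∈ V (i + 2), d z = 0 →
      (∀ χ ∈ L, ∃ s ∉ p, ∃ b ∈ V (i + 1), s • χ z = d b) →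
      ∃ s ∉ p, ∃ b ∈ V (i + 3), d b = s • z := by
  let B : ℕ → Submodule R C := fun i =>
    { carrier := {z | z ∈ V i ∧ d z = 0 ∧ ∃ s ∉ p, ∃ b ∈ V (i + 1), s • z = d b}
      zero_mem' := ⟨(V i).zero_mem, map_zero d, 1, one_notMem hp, 0, (V _).zero_mem, by simp⟩
      add_mem' := by
        rintro u v ⟨hu, hdu, s, hs, b, hb, e⟩ ⟨hv, hdv, t, ht, b', hb', e'⟩
        refine ⟨(V i).add_mem hu hv, by rw [map_add, hdu, hdv, add_zero], s * t,
          not_mem_mul hp hs ht, t • b + s • b', (V _).add_mem ((V _).smul_mem _ hb)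
          ((V _).smul_mem _ hb'), ?_⟩
        simp only [map_add, map_smul, ← e, ← e']
        module
      smul_mem' := by
        rintro r u ⟨hu, hdu, s, hs, b, hb, e⟩
        refine ⟨(V i).smul_mem _ hu, by rw [map_smul, hdu, smul_zero], s, hs, r • b,
          (V _).smul_mem _ hb, ?_⟩
        simp only [map_smul, ← e]
        module }
  let S : ℕ → Submodule R C := fun i =>
    { carrier := {z | z ∈ V i ∧ d z = 0 ∧ ∀ χ ∈ L, ∀ j, i = j + 2 → χ z ∈ B j}
      zero_mem' := ⟨(V i).zero_mem, map_zero d, fun χ _ j _ => by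
        rw [map_zero]; exact (B j).zero_mem⟩
      add_mem' := by
        rintro u v ⟨hu, hdu, h1⟩ ⟨hv, hdv, h2⟩
        refine ⟨(V i).add_mem hu hv, by rw [map_add, hdu, hdv, add_zero], fun χ hχ j hj => ?_⟩
        rw [map_add]
        exact (B j).add_mem (h1 χ hχ j hj) (h2 χ hχ j hj)
      smul_mem' := by
        rintro r u ⟨hu, hdu, h1⟩
        refine ⟨(V i).smul_mem _ hu, by rw [map_smul, hdu, smul_zero], fun χ hχ j hj => ?_⟩
        rw [map_smul]
        exact (B j).smul_mem _ (h1 χ hχ j hj) }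
  have Binv : ∀ χ ∈ L, ∀ i, ∀ z ∈ B (i + 2), χ z ∈ B i := by
    rintro χ hχ i z ⟨hz, hdz, s, hs, b, hb, e⟩
    exact ⟨h.χV χ hχ i z hz, by rw [h.χd χ hχ, hdz, map_zero], s, hs, χ b, h.χV χ hχ _ b hb, by
      rw [← map_smul, e, h.χd χ hχ]⟩
  have BS : ∀ i, B i ≤ S i := by
    rintro i z hz
    refine ⟨hz.1, hz.2.1, fun χ hχ j hj => ?_⟩
    subst hj
    exact Binv χ hχ j z hz
  have Bsat : ∀ i, ∀ z ∈ V i, d z = 0 → ∀ s ∉ p, s • z ∈ B i → z ∈ B i := by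
    rintro i z hz hdz t ht ⟨-, -, s, hs, b, hb, e⟩
    exact ⟨hz, hdz, s * t, not_mem_mul hp hs ht, b, hb, by rw [← e, smul_smul]⟩
  have Bbd : ∀ i, ∀ x ∈ V (i + 1), d x ∈ B i := fun i x hx =>
    ⟨h.dV i x hx, h.dd x, 1, one_notMem hp, x, hx, one_smul _ _⟩
  -- Replacing the socle `S` by `B` below degree `m + 2` gives a descending chain of stable families;
  -- where it stabilises, `S` and `B` agree in all larger degrees.
  let W : ℕ → ℕ → Submodule R C := fun m i => if i < m + 2 then B i else S i
  have WB : ∀ m i, i < m + 2 → W m i = B i := fun m i hi => if_pos hi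
  have WS : ∀ m i, ¬ i < m + 2 → W m i = S i := fun m i hi => if_neg hi
  have BW : ∀ m i, B i ≤ W m i := by
    intro m i
    by_cases hi : i < m + 2
    · rw [WB m i hi]
    · rw [WS m i hi]; exact BS i
  have hanti : Antitone W := by
    intro m m' hm i
    by_cases hi : i < m' + 2
    · rw [WB m' i hi]; exact BW m i
    · rw [WS m' i hi, WS m i (by omega)]
  have hsat : ∀ m, IsSatFam p d V L (W m) := by
    intro m
    refine ⟨fun i x hx => BW m i (Bbd i x hx), fun i w hw => ?_, fun i z hz hdz s hs hsz => ?_,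
      fun χ hχ i w hw => ?_⟩
    · by_cases hi : i < m + 2
      · rw [WB m i hi] at hw; exact ⟨hw.1, hw.2.1⟩
      · rw [WS m i hi] at hw; exact ⟨hw.1, hw.2.1⟩
    · by_cases hi : i < m + 2
      · rw [WB m i hi] at hsz ⊢; exact Bsat i z hz hdz s hs hsz
      · rw [WS m i hi] at hsz ⊢
        refine ⟨hz, hdz, fun χ hχ j hj => ?_⟩
        subst hj
        refine Bsat j _ (h.χV χ hχ j z hz) (by rw [h.χd χ hχ, hdz, map_zero]) s hs ?_
        rw [← map_smul]
        exact hsz.2.2 χ hχ j rfl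
    · refine BW m i ?_
      by_cases hi : i + 2 < m + 2
      · rw [WB m _ hi] at hw; exact Binv χ hχ i w hw
      · rw [WS m _ hi] at hw; exact hw.2.2 χ hχ i rfl
  obtain ⟨m₀, hm₀⟩ := satFam_stabilizes p hp L V h hT hFG hq W hanti hsat
  refine ⟨m₀, fun i hi z hz hdz hχ => ?_⟩
  have h1 : z ∈ W m₀ (i + 2) := by
    rw [WS m₀ _ (by omega)]
    refine ⟨hz, hdz, fun χ hχL j hj => ?_⟩
    obtain rfl : i = j := by omega
    obtain ⟨s, hs, b, hb, e⟩ := hχ χ hχL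
    exact ⟨h.χV χ hχL i z hz, by rw [h.χd χ hχL, hdz, map_zero], s, hs, b, hb, e⟩
  rw [← hm₀ (i + 1) (by omega), WB _ _ (by omega)] at h1
  obtain ⟨-, -, s, hs, b, hb, e⟩ := h1
  exact ⟨s, hs, b, hb, e.symm⟩

lemma vanAt_step [IsNoetherianRing R] (p : Ideal R) (hp : p.IsPrime)
    (h : IsSys d V L) (hT : Tower d L V) (hFG : ∀ i, (V i).FG)
    (hq : ∀ q : Ideal R, q.IsPrime → q < p → ∃ N, ∀ i ≥ N, VanAt q d V i) :
    ∃ N, ∀ i ≥ N, VanAt p d V i → VanAt p d V (i + 2) := by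
  obtain ⟨N, hN⟩ := socle_eventually_zero p hp h hT hFG hq
  refine ⟨N, fun i hi hv z hz hdz => hN i hi z hz hdz fun χ hχ => ?_⟩
  obtain ⟨s, hs, b, hb, e⟩ := hv (χ z) (h.χV χ hχ i z hz) (by rw [h.χd χ hχ, hdz, map_zero])
  exact ⟨s, hs, b, hb, e.symm⟩

/-- If the homology is nonzero at `p` in degree `i` and vanishes there at all primes strictly
below `p`, then `p` is the annihilator of a homology class. -/
lemma exists_class_of_not_vanAt [IsNoetherianRing R] (p : Ideal R) (hp : p.IsPrime) {i : ℕ}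
    (hdV : ∀ x ∈ V (i + 1), d x ∈ V i) (hd : ∀ x, d (d x) = 0)
    (hq : ∀ q : Ideal R, q.IsPrime → q < p → VanAt q d V i) (hn : ¬ VanAt p d V i) :
    ∃ z ∈ V i, d z = 0 ∧ ∀ r : R, r ∈ p ↔ ∃ b ∈ V (i + 1), d b = r • z := by
  unfold VanAt at hn
  push Not at hn
  obtain ⟨z, hz, hdz, hn⟩ := hn
  let B := (V (i + 1)).map d
  let f : R →ₗ[R] C ⧸ B := LinearMap.toSpanSingleton R _ (B.mkQ z)
  have hf : ∀ r, r ∈ LinearMap.ker f ↔ ∃ b ∈ V (i + 1), d b = r • z := by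
    intro r
    rw [LinearMap.mem_ker, LinearMap.toSpanSingleton_apply, ← map_smul, Submodule.mkQ_apply,
      Submodule.Quotient.mk_eq_zero]
    rfl
  let J : Ideal R := LinearMap.ker f
  have hmin : p ∈ J.minimalPrimes := by
    refine ⟨⟨hp, fun r hr => ?_⟩, ?_⟩
    · by_contra hrp
      obtain ⟨b, hb, e⟩ := (hf r).1 hr
      exact hn r hrp b hb e
    · rintro q ⟨hq1, hq2⟩ hqp
      by_contra hpq
      obtain ⟨s, hs, b, hb, e⟩ := hq q hq1 (lt_of_le_not_ge hqp hpq) z hz hdz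
      exact hs (hq2 ((hf s).2 ⟨b, hb, e⟩))
  have hass : p ∈ associatedPrimes R (R ⧸ J) := by
    apply Module.associatedPrimes.minimalPrimes_annihilator_subset_associatedPrimes
    rwa [Ideal.annihilator_quotient]
  obtain ⟨-, x, hx⟩ := isAssociatedPrime_iff.1 hass
  obtain ⟨r, rfl⟩ := Ideal.Quotient.mk_surjective x
  refine ⟨r • z, (V i).smul_mem _ hz, by rw [map_smul, hdz, smul_zero], fun s => ?_⟩
  rw [smul_smul, ← hf, hx, Submodule.mem_colon_singleton, Submodule.mem_bot,
    ← Ideal.Quotient.eq_zero_iff_mem]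
  rfl

end Tower

/-- The dichotomy for the homology of a tower: it vanishes in large degrees, or some prime `p` is
the annihilator of a homology class in all large degrees of some fixed parity. -/
theorem tower_dichotomy {R : Type*} [CommRing R] [IsNoetherianRing R] {C : Type*} [AddCommGroup C]
    [Module R C] {d : Module.End R C} {V : ℕ → Submodule R C} {L : List (Module.End R C)}
    (h : IsSys d V L) (hT : Tower d L V) (hFG : ∀ i, (V i).FG) (hloc : IsLocalRing R) :
    (∃ N, ∀ i ≥ N, ∀ z ∈ V i, d z = 0 → ∃ b ∈ V (i + 1), d b = z) ∨
    ∃ p : Ideal R, p.IsPrime ∧ ∃ a, ∀ k, ∃ z ∈ V (a + 2 * k), d z = 0 ∧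
      ∀ r : R, r ∈ p ↔ ∃ b ∈ V (a + 2 * k + 1), d b = r • z := by
  by_cases hall : ∀ p : Ideal R, p.IsPrime → ∃ N, ∀ i ≥ N, VanAt p d V i
  · left
    obtain ⟨N, hN⟩ := hall (IsLocalRing.maximalIdeal R) inferInstance
    refine ⟨N, fun i hi z hz hdz => ?_⟩
    obtain ⟨s, hs, b, hb, e⟩ := hN i hi z hz hdz
    obtain ⟨u, rfl⟩ : IsUnit s := by simpa using hs
    exact ⟨(↑u⁻¹ : R) • b, (V _).smul_mem _ hb, by
      rw [map_smul, e, smul_smul, Units.inv_mul, one_smul]⟩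
  · right
    push Not at hall
    -- `p` is minimal among the primes at which the homology is nonzero in arbitrarily large degrees
    obtain ⟨p, ⟨hp, hpN⟩, hmin⟩ : ∃ p : Ideal R,
        (p.IsPrime ∧ ∀ N, ∃ i ≥ N, ¬ VanAt p d V i) ∧
        ∀ q : Ideal R, q.IsPrime → q < p → ∃ N, ∀ i ≥ N, VanAt q d V i := by
      obtain ⟨p, hp⟩ := hall
      induction hh : p.height using WellFoundedLT.induction generalizing p with
      | _ n ih =>
        by_cases hm : ∀ q : Ideal R, q.IsPrime → q < p → ∃ N, ∀ i ≥ N, VanAt q d V i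
        · exact ⟨p, hp, hm⟩
        · push Not at hm
          obtain ⟨q, hq1, hqp, hq2⟩ := hm
          have := hp.1
          refine ih q.height ?_ q ⟨hq1, hq2⟩ rfl
          rw [← hh]
          refine lt_of_lt_of_le ?_ (Ideal.height_add_one_le_of_lt_of_isPrime hqp)
          exact ENat.lt_add_one_iff (Ideal.height_ne_top_of_isPrime) |>.2 le_rfl
    -- local vanishing at `p` propagates upwards in steps of two, so one parity class never vanishes
    have hstep := vanAt_step p hp h hT hFG hmin
    obtain ⟨N, hN⟩ := hstep
    have hev : ∀ a ≥ N, VanAt p d V a → ∀ k, VanAt p d V (a + 2 * k) := by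
      intro a ha hv k
      induction k with
      | zero => exact hv
      | succ k ih => exact hN (a + 2 * k) (by omega) ih
    obtain ⟨a, ha⟩ : ∃ a, ∀ k, ¬ VanAt p d V (a + 2 * k) := by
      by_contra hcon
      push Not at hcon
      obtain ⟨k, hk⟩ := hcon N
      obtain ⟨l, hl⟩ := hcon (N + 1)
      obtain ⟨i, hi, hni⟩ := hpN (N + 2 * k + 2 * l + 1)
      rcases Nat.even_or_odd' (i - N) with ⟨c, hc | hc⟩
      · have := hev _ (by omega) hk (c - k)
        rw [show N + 2 * k + 2 * (c - k) = i by omega] at this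
        exact hni this
      · have := hev _ (by omega) hl (c - l)
        rw [show N + 1 + 2 * l + 2 * (c - l) = i by omega] at this
        exact hni this
    exact ⟨p, hp, a, fun k => exists_class_of_not_vanAt p hp (h.dV _) h.dd
      (fun q hq1 hq2 => vanAt_all q hq1 L V h hT (hmin q hq1 hq2) _) (ha k)⟩

/-! ### Regular local rings are domains -/

open IsLocalRing in
/-- A regular local ring of positive dimension has a parameter outside all minimal primes whose
quotient is again regular local. -/
lemma exists_regular_parameter (Q : Type*) [CommRing Q] [IsRegularLocalRing Q] (n : ℕ)
    (hdim : ringKrullDim Q = n + 1) :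
    ∃ x ∈ maximalIdeal Q, (∀ P ∈ minimalPrimes Q, x ∉ P) ∧
      IsRegularLocalRing (Q ⧸ Ideal.span {x}) ∧ ringKrullDim (Q ⧸ Ideal.span {x}) = n := by
  classical
  have hheight : (maximalIdeal Q).height = n + 1 := by
    have h := maximalIdeal_height_eq_ringKrullDim (R := Q)
    rw [hdim] at h
    exact_mod_cast h
  have hmP : ∀ P ∈ minimalPrimes Q, ¬ maximalIdeal Q ≤ P := by
    intro P hP hle
    have hPp : P.IsPrime := hP.1.1
    have h1 := Ideal.height_mono hle
    have h2 : P.height = 0 := Ideal.height_eq_zero_iff.2 hP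
    rw [hheight, h2] at h1
    simp at h1
  have hm2 : ¬ maximalIdeal Q ≤ maximalIdeal Q ^ 2 := by
    intro hle
    have h1 : maximalIdeal Q = ⊥ := by
      apply Submodule.eq_bot_of_le_smul_of_le_jacobson_bot (maximalIdeal Q) _
        (IsNoetherian.noetherian _)
      · rwa [smul_eq_mul, ← pow_two]
      · exact maximalIdeal_le_jacobson _
    rw [h1] at hheight
    have : (⊥ : Ideal Q).IsPrime := h1 ▸ inferInstance
    simp only [Ideal.height_bot] at hheight
    exact absurd hheight.symm (by simp)
  have hfin := minimalPrimes.finite_of_isNoetherianRing Q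
  obtain ⟨x, hxm, hx⟩ : ∃ x ∈ maximalIdeal Q, x ∉ maximalIdeal Q ^ 2 ∧
      ∀ P ∈ minimalPrimes Q, x ∉ P := by
    by_contra hcon
    push Not at hcon
    have := (Ideal.subset_union_prime (s := insert (maximalIdeal Q ^ 2) hfin.toFinset)
      (f := fun P => P) (maximalIdeal Q ^ 2) (maximalIdeal Q ^ 2) (by
        intro P hP hne _
        have hP' : P ∈ minimalPrimes Q := by simpa [hne] using hP
        exact hP'.1.1) (I := maximalIdeal Q)).1 (by
        intro x hx
        simp only [Finset.coe_insert, Set.Finite.coe_toFinset, Set.mem_insert_iff,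
          Set.iUnion_iUnion_eq_or_left, Set.mem_union, Set.mem_iUnion, SetLike.mem_coe]
        by_cases h : x ∈ maximalIdeal Q ^ 2
        · exact Or.inl h
        · obtain ⟨P, hP, hxP⟩ := hcon x hx h
          exact Or.inr ⟨P, hP, hxP⟩)
    obtain ⟨P, hP, hle⟩ := this
    simp only [Finset.mem_insert, Set.Finite.mem_toFinset] at hP
    rcases hP with rfl | hP
    · exact hm2 hle
    · exact hmP P hP hle
  have hfg := IsNoetherian.noetherian (maximalIdeal Q)
  let S := (Submodule.FG.finite_generators hfg).toFinset
  have hScard : S.card = n + 1 := by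
    have h1 : S.card = (maximalIdeal Q).spanFinrank := by
      rw [← Submodule.FG.generators_ncard hfg, Set.ncard_eq_toFinset_card _
        (Submodule.FG.finite_generators hfg)]
    have h2 := IsRegularLocalRing.spanFinrank_maximalIdeal (R := Q)
    rw [hdim, ← h1] at h2
    exact_mod_cast h2
  have hSspan : Ideal.span (S : Set Q) = maximalIdeal Q := by
    rw [Set.Finite.coe_toFinset]
    exact Submodule.span_generators _
  -- Some coefficient of `x` in terms of the generators is a unit.
  obtain ⟨a, -, ha⟩ := Submodule.mem_span_finset.1 (hSspan.symm ▸ hxm : x ∈ Ideal.span (S : Set Q))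
  obtain ⟨g, hg, hag⟩ : ∃ g ∈ S, IsUnit (a g) := by
    by_contra hcon
    push Not at hcon
    apply hx.1
    rw [← ha, pow_two]
    refine Ideal.sum_mem _ fun g hg => Ideal.mul_mem_mul ?_ ?_
    · exact (mem_maximalIdeal _).2 (hcon g hg)
    · rw [← hSspan]; exact Ideal.subset_span hg
  have hle : maximalIdeal Q ≤ Ideal.span {x} ⊔ Ideal.span ((S.erase g : Finset Q) : Set Q) := by
    rw [← hSspan, Ideal.span_le]
    intro y hy
    by_cases hyg : y = g
    · subst y
      have h1 : a g * g = x - ∑ z ∈ S.erase g, a z * z := by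
        rw [← ha, ← Finset.sum_erase_add S _ hg]
        simp
      obtain ⟨u, hu⟩ := hag
      have h2 : g = (↑u⁻¹ : Q) * (x - ∑ z ∈ S.erase g, a z * z) := by
        rw [← h1, ← hu, Units.inv_mul_cancel_left]
      rw [SetLike.mem_coe]
      suffices h : (↑u⁻¹ : Q) * (x - ∑ z ∈ S.erase g, a z * z) ∈ Ideal.span {x} ⊔
          Ideal.span ((S.erase g : Finset Q) : Set Q) by rwa [← h2] at h
      refine Ideal.mul_mem_left _ _ (Ideal.sub_mem _ ?_ ?_)
      · exact Ideal.mem_sup_left (Ideal.mem_span_singleton_self x)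
      · exact Ideal.mem_sup_right (Ideal.sum_mem _ fun z hz =>
          Ideal.mul_mem_left _ _ (Ideal.subset_span hz))
    · exact Ideal.mem_sup_right (Ideal.subset_span (Finset.mem_coe.2
        (Finset.mem_erase.2 ⟨hyg, hy⟩)))
  have hne : Ideal.span {x} ≠ ⊤ := by
    rw [Ne, Ideal.span_singleton_eq_top]
    exact hxm
  have : Nontrivial (Q ⧸ Ideal.span {x}) := Ideal.Quotient.nontrivial_iff.2 hne
  have : IsLocalRing (Q ⧸ Ideal.span {x}) :=
    IsLocalRing.of_surjective' (Ideal.Quotient.mk _) Ideal.Quotient.mk_surjective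
  let T : Finset (Q ⧸ Ideal.span {x}) := (S.erase g).image (Ideal.Quotient.mk _)
  have hTspan : Ideal.span (T : Set (Q ⧸ Ideal.span {x})) = maximalIdeal _ := by
    have hloc : (maximalIdeal Q).map (Ideal.Quotient.mk (Ideal.span {x})) = maximalIdeal _ :=
      IsLocalRing.map_maximalIdeal_of_surjective (Ideal.Quotient.mk (Ideal.span {x}))
        Ideal.Quotient.mk_surjective
    rw [Finset.coe_image, ← Ideal.map_span, ← hloc]
    apply le_antisymm
    · apply Ideal.map_mono
      rw [← hSspan]
      exact Ideal.span_mono (Finset.coe_subset.2 (Finset.erase_subset _ _))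
    · refine (Ideal.map_mono hle).trans ?_
      rw [Ideal.map_sup, Ideal.map_quotient_self, bot_sup_eq]
  have hrank : (maximalIdeal (Q ⧸ Ideal.span {x})).spanFinrank ≤ n := by
    rw [← hTspan]
    refine (Submodule.spanFinrank_span_le_ncard_of_finite T.finite_toSet).trans ?_
    rw [Set.ncard_coe_finset]
    refine Finset.card_image_le.trans ?_
    rw [Finset.card_erase_of_mem hg, hScard]
    omega
  have hd1 : (n : WithBot ℕ∞) ≤ ringKrullDim (Q ⧸ Ideal.span {x}) := by
    have h := ringKrullDim_le_ringKrullDim_quotient_add_card (R := Q) (s := {x}) (by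
      rw [IsLocalRing.ringJacobson_eq_maximalIdeal]; simpa using hxm)
    rw [hdim] at h
    simp only [Finset.card_singleton, Nat.cast_one] at h
    rw [Finset.coe_singleton] at h
    have hht := maximalIdeal_height_eq_ringKrullDim (R := Q ⧸ Ideal.span {x})
    obtain ⟨e, he⟩ := ENat.ne_top_iff_exists.1
      (Ideal.height_ne_top_of_isPrime (I := maximalIdeal (Q ⧸ Ideal.span {x})))
    rw [← hht, ← he] at h ⊢
    have h' : n + 1 ≤ e + 1 := by exact_mod_cast h
    exact_mod_cast Nat.le_of_succ_le_succ h'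
  have hd2 := ringKrullDim_le_spanFinrank_maximalIdeal (Q ⧸ Ideal.span {x})
  have hrank' : ((maximalIdeal (Q ⧸ Ideal.span {x})).spanFinrank : WithBot ℕ∞) ≤ n := by
    exact_mod_cast hrank
  exact ⟨x, hxm, hx.2, .of_spanFinrank_maximalIdeal_le _ (hrank'.trans hd1),
    le_antisymm (hd2.trans hrank') hd1⟩

open IsLocalRing in
lemma isField_of_regular_dim_zero (Q : Type*) [CommRing Q] [IsRegularLocalRing Q]
    (hdim : ringKrullDim Q = 0) : IsField Q := by
  have h := IsRegularLocalRing.spanFinrank_maximalIdeal (R := Q)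
  rw [hdim] at h
  have h' : (maximalIdeal Q).spanFinrank = 0 := by exact_mod_cast h
  rw [Submodule.spanFinrank_eq_zero_iff_eq_bot (IsNoetherian.noetherian _)] at h'
  exact IsLocalRing.isField_iff_maximalIdeal_eq.2 h'

open IsLocalRing in
/-- Regular local rings are domains. -/
lemma isDomain_of_regular (n : ℕ) : ∀ (Q : Type u) [CommRing Q] [IsRegularLocalRing Q],
    ringKrullDim Q = n → IsDomain Q := by
  induction n with
  | zero => exact fun Q _ _ h => (isField_of_regular_dim_zero Q (by simpa using h)).isDomain
  | succ n ih =>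
    intro Q _ _ h
    obtain ⟨x, hxm, hx, hreg, hdim⟩ := exists_regular_parameter Q n (by exact_mod_cast h)
    have := ih _ hdim
    have hprime : (Ideal.span {x}).IsPrime := (Ideal.Quotient.isDomain_iff_prime _).1 this
    obtain ⟨P, hP, hPx⟩ := Ideal.exists_minimalPrimes_le (bot_le : ⊥ ≤ Ideal.span {x})
    have hPp : P.IsPrime := hP.1.1
    have hP0 : P = ⊥ := by
      apply Submodule.eq_bot_of_le_smul_of_le_jacobson_bot (Ideal.span {x}) _
        (IsNoetherian.noetherian _)
      · intro y hy
        obtain ⟨z, rfl⟩ := Ideal.mem_span_singleton'.1 (hPx hy)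
        have hz : z ∈ P := (hPp.mem_or_mem hy).resolve_right (hx P hP)
        exact Ideal.mul_mem_mul_rev (Ideal.mem_span_singleton_self x) hz
      · refine le_trans ?_ (maximalIdeal_le_jacobson _)
        rw [Ideal.span_singleton_le_iff_mem]
        exact hxm
    rw [hP0] at hPp
    exact IsDomain.of_bot_isPrime Q

/-! ### Finite free resolutions over a regular local ring -/

/-- The `n`-th syzygy modules of `N` (with respect to all choices of finite free covers) are
free. -/
def SyzFree (Q : Type u) [CommRing Q] :
    ℕ → (N : Type u) → [AddCommGroup N] → [Module Q N] → Prop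
  | 0, N, _, _ => Module.Free Q N
  | n + 1, N, _, _ => ∀ (r : ℕ) (f : (Fin r → Q) →ₗ[Q] N), Function.Surjective f →
      SyzFree Q n (LinearMap.ker f)

lemma SyzFree.congr {Q : Type u} [CommRing Q] (n : ℕ) : ∀ {N N' : Type u} [AddCommGroup N]
    [Module Q N] [AddCommGroup N'] [Module Q N'] (_ : N ≃ₗ[Q] N'),
    SyzFree Q n N → SyzFree Q n N' := by
  induction n with
  | zero =>
    intro N N' _ _ _ _ e h
    have : Module.Free Q N := h
    exact Module.Free.of_equiv e
  | succ n ih =>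
    intro N N' _ _ _ _ e h r f hf
    have h1 := h r (e.symm.toLinearMap ∘ₗ f) (e.symm.surjective.comp hf)
    exact ih (LinearEquiv.ofEq _ _ (by rw [LinearEquiv.ker_comp])) h1

open Pointwise in
/-- Freeness of syzygies lifts from `K / x K` over `Q / x` to `K` over `Q`, if `x` is regular on
`Q` and `K`. -/
lemma SyzFree.of_quotSMulTop {Q : Type u} [CommRing Q] [IsNoetherianRing Q] {x : Q}
    (hx : x ∈ (⊥ : Ideal Q).jacobson) (hreg : IsSMulRegular Q x) (n : ℕ) :
    ∀ (K : Type u) [AddCommGroup K] [Module Q K] [Module.Finite Q K], IsSMulRegular K x →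
      SyzFree (Q ⧸ Ideal.span {x}) n (QuotSMulTop x K) → SyzFree Q n K := by
  induction n with
  | zero =>
    intro K _ _ _ hK h
    have : Module.FinitePresentation Q K := Module.finitePresentation_of_finite Q K
    exact (Module.free_quotSMulTop_iff_free Q K hx hK).1 h
  | succ n ih =>
    intro K _ _ _ hK h r g hg
    let Q' := Q ⧸ Ideal.span {x}
    let mkK : K →ₗ[Q] QuotSMulTop x K := Submodule.mkQ _
    let f : (Fin r → Q') →ₗ[Q'] QuotSMulTop x K :=
      Fintype.linearCombination Q' (fun i => mkK (g (Pi.single i 1)))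
    have hf : ∀ v : Fin r → Q, f (fun i => Ideal.Quotient.mk _ (v i)) = mkK (g v) := by
      intro v
      have h1 : v = ∑ i, v i • Pi.single i (1 : Q) := by
        ext j; simp [Finset.sum_apply, Pi.single_apply]
      conv_rhs => rw [h1]
      rw [map_sum, map_sum, Fintype.linearCombination_apply]
      refine Finset.sum_congr rfl fun i _ => ?_
      rw [map_smul, map_smul]
      rfl
    have hlift : ∀ c : Fin r → Q', ∃ v : Fin r → Q, (fun i => Ideal.Quotient.mk _ (v i)) = c := by
      intro c
      choose v hv using fun i => Ideal.Quotient.mk_surjective (c i)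
      exact ⟨v, funext hv⟩
    have hmk0 : ∀ k, mkK k = 0 ↔ ∃ k', x • k' = k := by
      intro k
      rw [Submodule.mkQ_apply, Submodule.Quotient.mk_eq_zero,
        Submodule.mem_smul_pointwise_iff_exists]
      simp
    have hfs : Function.Surjective f := by
      intro y
      obtain ⟨k, rfl⟩ := Submodule.mkQ_surjective _ y
      obtain ⟨v, rfl⟩ := hg k
      exact ⟨_, hf v⟩
    have h1 := h r f hfs
    let K1 := LinearMap.ker g
    have hK1 : IsSMulRegular K1 x := by
      intro a b hab
      ext i
      have := congrArg (fun z : K1 => z.1 i) hab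
      exact hreg this
    let φ : K1 →ₗ[Q] LinearMap.ker f :=
      { toFun := fun y => ⟨fun i => Ideal.Quotient.mk _ (y.1 i), by
          rw [LinearMap.mem_ker, hf, LinearMap.mem_ker.1 y.2, map_zero]⟩
        map_add' := fun y z => by ext i; simp
        map_smul' := fun c y => by
          ext i
          simp [Algebra.smul_def]
          rfl }
    have hφs : Function.Surjective φ := by
      rintro ⟨c, hc⟩
      obtain ⟨v, rfl⟩ := hlift c
      rw [LinearMap.mem_ker, hf, hmk0] at hc
      obtain ⟨k, hk⟩ := hc
      obtain ⟨w, rfl⟩ := hg k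
      refine ⟨⟨v - x • w, by rw [LinearMap.mem_ker, map_sub, map_smul, hk, sub_self]⟩, ?_⟩
      ext i
      simp [φ]
    have hφk : LinearMap.ker φ = x • ⊤ := by
      ext y
      rw [LinearMap.mem_ker, Submodule.mem_smul_pointwise_iff_exists]
      constructor
      · intro hy
        have h2 : ∀ i, ∃ z, y.1 i = x * z := by
          intro i
          have := congrArg (fun z : LinearMap.ker f => z.1 i) hy
          have h3 : Ideal.Quotient.mk (Ideal.span {x}) (y.1 i) = 0 := this
          rw [Ideal.Quotient.eq_zero_iff_mem, Ideal.mem_span_singleton] at h3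
          exact h3
        choose z hz using h2
        have hyz : y.1 = x • z := funext hz
        refine ⟨⟨z, ?_⟩, trivial, ?_⟩
        · have h4 := y.2
          rw [LinearMap.mem_ker, hyz, map_smul] at h4
          exact hK.right_eq_zero_of_smul h4
        · ext i; exact (hz i).symm
      · rintro ⟨z, -, rfl⟩
        ext i
        change Ideal.Quotient.mk (Ideal.span {x}) (x * z.1 i) = 0
        rw [Ideal.Quotient.eq_zero_iff_mem]
        exact Ideal.mul_mem_right _ _ (Ideal.mem_span_singleton_self x)
    let e0 : QuotSMulTop x K1 →ₗ[Q] LinearMap.ker f := Submodule.liftQ _ φ hφk.ge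
    have he0 : Function.Bijective e0 := by
      constructor
      · rw [← LinearMap.ker_eq_bot]
        exact Submodule.ker_liftQ_eq_bot _ _ _ hφk.le
      · intro y
        obtain ⟨z, rfl⟩ := hφs y
        exact ⟨Submodule.mkQ _ z, by simp [e0]⟩
    let e : QuotSMulTop x K1 ≃ₗ[Q'] LinearMap.ker f :=
      (LinearEquiv.ofBijective e0 he0).extendScalarsOfSurjective Ideal.Quotient.mk_surjective
    exact ih K1 hK1 (SyzFree.congr n e.symm h1)

/-- Over a regular local ring of dimension `n`, all `n`-th syzygies of finite modules are free. -/
lemma syzFree_of_regular (n : ℕ) : ∀ (Q : Type u) [CommRing Q] [IsRegularLocalRing Q],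
    ringKrullDim Q = n → ∀ (N : Type u) [AddCommGroup N] [Module Q N] [Module.Finite Q N],
    SyzFree Q n N := by
  induction n with
  | zero =>
    intro Q _ _ h N _ _ _
    let : Field Q := (isField_of_regular_dim_zero Q (by simpa using h)).toField
    exact Module.Free.of_divisionRing Q N
  | succ n ih =>
    intro Q _ _ h N _ _ _ r f hf
    have := isDomain_of_regular (n + 1) Q h
    obtain ⟨x, hxm, hx, hreg, hdim⟩ := exists_regular_parameter Q n (by exact_mod_cast h)
    have hx0 : x ≠ 0 := by
      rintro rfl
      obtain ⟨P, hP, -⟩ := Ideal.exists_minimalPrimes_le (bot_le : ⊥ ≤ IsLocalRing.maximalIdeal Q)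
      exact hx P hP P.zero_mem
    have hQ : IsSMulRegular Q x := fun a b hab => mul_left_cancel₀ hx0 hab
    have : IsNoetherianRing (Q ⧸ Ideal.span {x}) := inferInstance
    refine SyzFree.of_quotSMulTop (IsLocalRing.maximalIdeal_le_jacobson _ hxm) hQ n _ ?_ ?_
    · intro a b hab
      ext i
      exact hQ (congrArg (fun z : LinearMap.ker f => z.1 i) hab)
    · have : Module.Finite (Q ⧸ Ideal.span {x}) (QuotSMulTop x (LinearMap.ker f)) :=
        Module.Finite.of_restrictScalars_finite Q _ _
      exact ih (Q ⧸ Ideal.span {x}) hdim _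

/-- `v` is concentrated in degree `i` with respect to the grading `deg` of the index set. -/
def InDeg {ι R : Type*} [Zero R] (deg : ι → ℕ) (i : ℕ) (v : ι → R) : Prop :=
  ∀ b, v b ≠ 0 → deg b = i

/-- A finite free resolution of `N`, with underlying graded free module `ι → Q`, differential
the matrix `d`, and augmentation `ε`. -/
structure IsFFR {Q : Type*} [CommRing Q] {N : Type*} [AddCommGroup N] [Module Q N]
    {ι : Type} [Fintype ι] (deg : ι → ℕ) (d : Matrix ι ι Q) (ε : (ι → Q) →ₗ[Q] N) : Prop where
  deg_d : ∀ b' b, d b' b ≠ 0 → deg b' + 1 = deg b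
  dd : d * d = 0
  exact_succ : ∀ i v, InDeg deg (i + 1) v → d.mulVec v = 0 →
    ∃ u, InDeg deg (i + 2) u ∧ d.mulVec u = v
  exact_zero : ∀ v, InDeg deg 0 v → ε v = 0 → ∃ u, InDeg deg 1 u ∧ d.mulVec u = v
  surj : ∀ n, ∃ v, InDeg deg 0 v ∧ ε v = n
  ε_d : ∀ u, ε (d.mulVec u) = 0
  ε_deg : ∀ b v, deg b ≠ 0 → (∀ b', b' ≠ b → v b' = 0) → ε v = 0

lemma IsFFR.of_free {Q : Type u} [CommRing Q] [Nontrivial Q] (N : Type u) [AddCommGroup N]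
    [Module Q N] [Module.Finite Q N] [Module.Free Q N] :
    ∃ (ι : Type) (_ : Fintype ι) (deg : ι → ℕ) (d : Matrix ι ι Q) (ε : (ι → Q) →ₗ[Q] N),
      IsFFR deg d ε := by
  let B := Module.finBasis Q N
  refine ⟨Fin (Module.finrank Q N), inferInstance, fun _ => 0, 0, B.equivFun.symm.toLinearMap,
    ⟨by simp, by simp, ?_, ?_, ?_, by simp, by simp⟩⟩
  · intro i v hv _
    refine ⟨0, by simp [InDeg], ?_⟩
    ext b
    by_contra hb
    have := hv b (by simpa using Ne.symm hb)
    simp at this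
  · intro v _ hv
    refine ⟨0, by simp [InDeg], ?_⟩
    have hv0 : v = 0 := (LinearEquiv.map_eq_zero_iff B.equivFun.symm).1 hv
    simp [hv0]
  · intro n
    exact ⟨B.equivFun n, by simp [InDeg], by simp⟩

lemma IsFFR.of_ker {Q : Type u} [CommRing Q] {N : Type u} [AddCommGroup N]
    [Module Q N] {r : ℕ} (f : (Fin r → Q) →ₗ[Q] N) (hf : Function.Surjective f)
    {ι' : Type} [Fintype ι'] {deg' : ι' → ℕ} {d' : Matrix ι' ι' Q}
    {ε' : (ι' → Q) →ₗ[Q] LinearMap.ker f} (h : IsFFR deg' d' ε') :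
    ∃ (ι : Type) (_ : Fintype ι) (deg : ι → ℕ) (d : Matrix ι ι Q) (ε : (ι → Q) →ₗ[Q] N),
      IsFFR deg d ε := by
  classical
  let E : Matrix (Fin r) ι' Q := LinearMap.toMatrix' ((LinearMap.ker f).subtype ∘ₗ ε')
  have hE : ∀ v, E.mulVec v = (ε' v).1 := fun v => by
    rw [LinearMap.toMatrix'_mulVec]; rfl
  have hEd : E * d' = 0 := by
    apply Matrix.ext_of_mulVec_single
    intro j
    rw [← Matrix.mulVec_mulVec, hE, h.ε_d, Matrix.zero_mulVec]
    rfl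
  let deg : Fin r ⊕ ι' → ℕ := Sum.elim (fun _ => 0) (fun b => deg' b + 1)
  let d : Matrix (Fin r ⊕ ι') (Fin r ⊕ ι') Q := Matrix.fromBlocks 0 E 0 d'
  have hd : ∀ v, d.mulVec v = Sum.elim (E.mulVec (v ∘ Sum.inr)) (d'.mulVec (v ∘ Sum.inr)) := by
    intro v
    rw [Matrix.fromBlocks_mulVec]
    simp
  refine ⟨Fin r ⊕ ι', inferInstance, deg, d, f ∘ₗ LinearMap.funLeft Q Q Sum.inl,
    ⟨?_, ?_, ?_, ?_, ?_, ?_, ?_⟩⟩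
  · rintro (b' | b') (b | b) hb
    · simp [d] at hb
    · have hb0 : deg' b = 0 := by
        by_contra hne
        apply hb
        have : E b' b = 0 := by
          have h1 := h.ε_deg b (Pi.single b 1) hne (fun c hc => by simp [hc])
          have h2 := hE (Pi.single b 1)
          rw [h1] at h2
          have h3 := congrFun h2 b'
          simpa using h3
        exact this
      simp [deg, hb0]
    · simp [d] at hb
    · have := h.deg_d b' b hb
      simp [deg, this]
  · simp [d, Matrix.fromBlocks_multiply, hEd, h.dd]
  · intro i v hv hdv
    rw [hd] at hdv
    have h1 : E.mulVec (v ∘ Sum.inr) = 0 := by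
      ext a; exact congrFun hdv (Sum.inl a)
    have h2 : d'.mulVec (v ∘ Sum.inr) = 0 := by
      ext a; exact congrFun hdv (Sum.inr a)
    have hv' : InDeg deg' i (v ∘ Sum.inr) := fun b hb => by
      have := hv (Sum.inr b) hb
      simpa [deg] using this
    have hvl : ∀ a, v (Sum.inl a) = 0 := fun a => by
      by_contra hne
      have := hv _ hne
      simp [deg] at this
    obtain ⟨u, hu, hdu⟩ : ∃ u, InDeg deg' (i + 1) u ∧ d'.mulVec u = v ∘ Sum.inr := by
      cases i with
      | zero =>
        refine h.exact_zero _ hv' ?_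
        rw [hE] at h1
        exact Subtype.ext h1
      | succ i => exact h.exact_succ i _ hv' h2
    refine ⟨Sum.elim 0 u, ?_, ?_⟩
    · rintro (b | b) hb
      · simp at hb
      · simp [deg, hu b hb]
    · rw [hd]
      ext (a | a)
      · have : E.mulVec u = 0 := by
          rw [hE]
          have : ε' u = 0 := by
            have h5 : u = ∑ b, Pi.single b (u b) := by
              ext c; simp [Finset.sum_apply, Pi.single_apply]
            rw [h5, map_sum]
            refine Finset.sum_eq_zero fun b _ => ?_
            by_cases hb : u b = 0
            · simp [hb]
            · exact h.ε_deg b _ (by rw [hu b hb]; omega) (fun c hc => by simp [hc])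
          rw [this]; rfl
        rw [hvl]
        exact congrFun this a
      · exact congrFun hdu a
  · intro v hv hεv
    have hk : (v ∘ Sum.inl) ∈ LinearMap.ker f := hεv
    obtain ⟨u, hu, hεu⟩ := h.surj ⟨_, hk⟩
    have hvr : ∀ a, v (Sum.inr a) = 0 := fun a => by
      by_contra hne
      have := hv _ hne
      simp [deg] at this
    have hd0 : d'.mulVec u = 0 := by
      ext b'
      rw [Matrix.mulVec, dotProduct]
      refine Finset.sum_eq_zero fun b _ => ?_
      by_cases h1 : d' b' b = 0
      · rw [h1, zero_mul]
      · by_cases h2 : u b = 0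
        · rw [h2, mul_zero]
        · have := h.deg_d b' b h1
          rw [hu b h2] at this
          omega
    refine ⟨Sum.elim 0 u, ?_, ?_⟩
    · rintro (b | b) hb
      · simp at hb
      · simp [deg, hu b hb]
    · rw [hd]
      ext (a | a)
      · have : E.mulVec u = v ∘ Sum.inl := by rw [hE, hεu]
        exact congrFun this a
      · rw [hvr]
        exact congrFun hd0 a
  · intro n
    obtain ⟨v, rfl⟩ := hf n
    refine ⟨Sum.elim v 0, ?_, ?_⟩
    · rintro (b | b) hb
      · rfl
      · simp at hb
    · rfl
  · intro u
    have : LinearMap.funLeft Q Q Sum.inl (d.mulVec u) = E.mulVec (u ∘ Sum.inr) := by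
      rw [hd]; rfl
    rw [LinearMap.comp_apply, this, hE]
    exact (ε' _).2
  · rintro (b | b) v hb hv
    · simp [deg] at hb
    · have : LinearMap.funLeft Q Q Sum.inl v = 0 := by
        ext a; exact hv _ (by simp)
      rw [LinearMap.comp_apply, this, map_zero]

lemma SyzFree.exists_isFFR {Q : Type u} [CommRing Q] [IsNoetherianRing Q] [Nontrivial Q] (n : ℕ) :
    ∀ (N : Type u) [AddCommGroup N] [Module Q N] [Module.Finite Q N], SyzFree Q n N →
    ∃ (ι : Type) (_ : Fintype ι) (deg : ι → ℕ) (d : Matrix ι ι Q) (ε : (ι → Q) →ₗ[Q] N),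
      IsFFR deg d ε := by
  induction n with
  | zero =>
    intro N _ _ _ h
    have : Module.Free Q N := h
    exact IsFFR.of_free N
  | succ n ih =>
    intro N _ _ _ h
    obtain ⟨r, f, hf⟩ := Module.Finite.exists_fin' Q N
    obtain ⟨ι', _, deg', d', ε', hker⟩ := ih (LinearMap.ker f) (h r f hf)
    exact IsFFR.of_ker f hf hker

/-- Finite modules over a regular local ring have finite free resolutions. -/
theorem exists_isFFR_of_regular (Q : Type u) [CommRing Q] [IsRegularLocalRing Q] (N : Type u)
    [AddCommGroup N] [Module Q N] [Module.Finite Q N] :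
    ∃ (ι : Type) (_ : Fintype ι) (deg : ι → ℕ) (d : Matrix ι ι Q) (ε : (ι → Q) →ₗ[Q] N),
      IsFFR deg d ε := by
  have h := IsRegularLocalRing.spanFinrank_maximalIdeal (R := Q)
  exact SyzFree.exists_isFFR _ N (syzFree_of_regular _ Q h.symm N)

/-! ### Systems of higher homotopies -/

section Homotopy

variable {Q : Type u} [CommRing Q] {N : Type u} [AddCommGroup N] [Module Q N]
  {ι : Type} [Fintype ι] {deg : ι → ℕ} {d : Matrix ι ι Q} {ε : (ι → Q) →ₗ[Q] N}

lemma IsFFR.ε_eq_zero (h : IsFFR deg d ε) {v : ι → Q} (hv : ∀ b, v b ≠ 0 → deg b ≠ 0) :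
    ε v = 0 := by
  classical
  have h5 : v = ∑ b, Pi.single b (v b) := by
    ext c; simp [Finset.sum_apply, Pi.single_apply]
  rw [h5, map_sum]
  refine Finset.sum_eq_zero fun b _ => ?_
  by_cases hb : v b = 0
  · simp [hb]
  · exact h.ε_deg b _ (hv b hb) (fun c hc => by simp [hc])

lemma IsFFR.exact (h : IsFFR deg d ε) (i : ℕ) (v : ι → Q) (hv : InDeg deg i v)
    (hd : d.mulVec v = 0) (hε : ε v = 0) : ∃ u, InDeg deg (i + 1) u ∧ d.mulVec u = v := by
  cases i with
  | zero => exact h.exact_zero v hv hε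
  | succ i => exact h.exact_succ i v hv hd

/-- A homogeneous chain endomorphism of a free resolution which is zero on the resolved module
is null-homotopic. -/
lemma IsFFR.nullHomotopy (h : IsFFR deg d ε) (k : ℕ) (G : Matrix ι ι Q)
    (hdeg : ∀ b' b, G b' b ≠ 0 → deg b' = deg b + k) (hG : d * G = G * d)
    (hε : ∀ b, ε (fun b' => G b' b) = 0) :
    ∃ s : Matrix ι ι Q, (∀ b' b, s b' b ≠ 0 → deg b' = deg b + k + 1) ∧ d * s + s * d = G := by
  classical
  have key : ∀ n : ℕ, ∃ s : Matrix ι ι Q, (∀ b' b, s b' b ≠ 0 → deg b' = deg b + k + 1) ∧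
      ∀ b' b, deg b < n → (d * s + s * d) b' b = G b' b := by
    intro n
    induction n with
    | zero => exact ⟨0, by simp, by simp⟩
    | succ n ih =>
      obtain ⟨s, hs, hsG⟩ := ih
      have h1 : ∀ b, ∃ u : ι → Q, deg b = n → (InDeg deg (n + k + 1) u ∧
          d.mulVec u = fun b' => (G - s * d) b' b) := by
        intro b
        by_cases hb : deg b = n
        swap
        · exact ⟨0, fun h => absurd h hb⟩
        have hsd : ∀ b', (s * d) b' b ≠ 0 → deg b' = n + k := by
          intro b' hne
          rw [Matrix.mul_apply] at hne
          obtain ⟨c, -, hc⟩ := Finset.exists_ne_zero_of_sum_ne_zero hne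
          have e1 := hs b' c (left_ne_zero_of_mul hc)
          have e2 := h.deg_d c b (right_ne_zero_of_mul hc)
          omega
        have hsd' : ∀ b', (s * d) b' b ≠ 0 → deg b' ≠ 0 := by
          intro b' hne
          rw [Matrix.mul_apply] at hne
          obtain ⟨c, -, hc⟩ := Finset.exists_ne_zero_of_sum_ne_zero hne
          have e1 := hs b' c (left_ne_zero_of_mul hc)
          omega
        obtain ⟨u, hu, hdu⟩ := h.exact (n + k) (fun b' => (G - s * d) b' b) (by
            intro b' hne
            by_cases hg : G b' b = 0
            · refine hsd b' fun h0 => hne ?_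
              simp [hg, h0]
            · rw [hdeg b' b hg, hb]) (by
            ext b'
            change (d * (G - s * d)) b' b = 0
            rw [Matrix.mul_sub, hG, ← Matrix.mul_assoc]
            have e0 : (d * s * d) b' b = (G * d) b' b := by
              have e3 : ((d * s + s * d) * d) b' b = (G * d) b' b := by
                rw [Matrix.mul_apply, Matrix.mul_apply]
                refine Finset.sum_congr rfl fun c _ => ?_
                by_cases hc : d c b = 0
                · simp [hc]
                · rw [hsG b' c (by have := h.deg_d c b hc; omega)]
              rw [Matrix.add_mul, Matrix.mul_assoc s d d, h.dd, Matrix.mul_zero, add_zero] at e3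
              exact e3
            rw [Matrix.sub_apply, e0, sub_self]) (by
            have e1 : (fun b' => (G - s * d) b' b) =
              (fun b' => G b' b) - (fun b' => (s * d) b' b) := rfl
            rw [e1, map_sub, hε, zero_sub, neg_eq_zero]
            exact h.ε_eq_zero hsd')
        exact ⟨u, fun _ => ⟨hu, hdu⟩⟩
      choose u hu using h1
      let s' : Matrix ι ι Q := fun b' b => if deg b = n then u b b' else s b' b
      have hs'd : ∀ b' b, deg b ≤ n → (s' * d) b' b = (s * d) b' b := by
        intro b' b hb
        rw [Matrix.mul_apply, Matrix.mul_apply]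
        refine Finset.sum_congr rfl fun c _ => ?_
        by_cases hc : d c b = 0
        · simp [hc]
        · have := h.deg_d c b hc
          simp only [s']
          rw [if_neg (by omega)]
      refine ⟨s', ?_, ?_⟩
      · intro b' b hne
        simp only [s'] at hne
        split_ifs at hne with hb
        · rw [(hu b hb).1 b' hne, hb]
        · exact hs b' b hne
      · intro b' b hb
        rw [Matrix.add_apply, hs'd b' b (by omega)]
        by_cases hbn : deg b = n
        · have e1 : (d * s') b' b = d.mulVec (u b) b' := by
            rw [Matrix.mul_apply]
            simp only [s', if_pos hbn]
            rfl
          rw [e1, (hu b hbn).2]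
          exact sub_add_cancel _ _
        · have e1 : (d * s') b' b = (d * s) b' b := by
            rw [Matrix.mul_apply, Matrix.mul_apply]
            simp only [s', if_neg hbn]
          rw [e1, ← Matrix.add_apply]
          exact hsG b' b (by omega)
  obtain ⟨s, hs, hsG⟩ := key (Finset.univ.sup deg + 1)
  refine ⟨s, hs, ?_⟩
  ext b' b
  exact hsG b' b (Nat.lt_succ_of_le (Finset.le_sup (Finset.mem_univ b)))

/-- The coefficient matrix of the monomial `γ` in a matrix of polynomials. -/
noncomputable def mcoeff {c : ℕ} (γ : Fin c →₀ ℕ) (X : Matrix ι ι (MvPolynomial (Fin c) Q)) :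
    Matrix ι ι Q :=
  fun b' b => (X b' b).coeff γ

lemma mcoeff_mul {c : ℕ} (γ : Fin c →₀ ℕ) (X Y : Matrix ι ι (MvPolynomial (Fin c) Q)) :
    mcoeff γ (X * Y) = ∑ p ∈ Finset.HasAntidiagonal.antidiagonal γ, mcoeff p.1 X * mcoeff p.2 Y := by
  classical
  ext b' b
  simp only [mcoeff, Matrix.mul_apply, MvPolynomial.coeff_sum, MvPolynomial.coeff_mul,
    Matrix.sum_apply]
  exact Finset.sum_comm

/-- The polynomial `∑ⱼ fⱼ Xⱼ`. -/
noncomputable def linForm {c : ℕ} (f : Fin c → Q) : MvPolynomial (Fin c) Q :=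
  ∑ j, MvPolynomial.monomial (Finsupp.single j 1) (f j)

lemma coeff_linForm {c : ℕ} (f : Fin c → Q) {γ : Fin c →₀ ℕ}
    (h : (linForm f).coeff γ ≠ 0) : ∃ j, γ = Finsupp.single j 1 := by
  classical
  rw [linForm, MvPolynomial.coeff_sum] at h
  obtain ⟨j, -, hj⟩ := Finset.exists_ne_zero_of_sum_ne_zero h
  rw [MvPolynomial.coeff_monomial] at hj
  exact ⟨j, by by_contra hne; exact hj (if_neg fun h => hne h.symm)⟩

lemma coeff_linForm_mem {c : ℕ} (f : Fin c → Q) (γ : Fin c →₀ ℕ) (I : Ideal Q)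
    (hI : ∀ j, f j ∈ I) : (linForm f).coeff γ ∈ I := by
  classical
  rw [linForm, MvPolynomial.coeff_sum]
  refine sum_mem fun j _ => ?_
  rw [MvPolynomial.coeff_monomial]
  split_ifs
  · exact hI j
  · exact I.zero_mem

/-- `σ` is a system of higher homotopies: the coefficient of a monomial of degree `m` in `σ` maps
the component of degree `n` to the one of degree `n + 2m - 1`, the constant coefficient of `σ`
is `d`, and `σ² = ∑ⱼ fⱼ Xⱼ`. -/
structure IsHigherHomotopy [DecidableEq ι] {c : ℕ} (deg : ι → ℕ) (d : Matrix ι ι Q) (f : Fin c → Q)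
    (σ : Matrix ι ι (MvPolynomial (Fin c) Q)) : Prop where
  hom : ∀ b' b γ, (σ b' b).coeff γ ≠ 0 → deg b' + 1 = deg b + 2 * γ.degree
  zero : mcoeff 0 σ = d
  sq : ∀ b' b, (σ * σ) b' b = if b' = b then linForm f else 0

theorem IsFFR.exists_higherHomotopy [DecidableEq ι] (h : IsFFR deg d ε) {c : ℕ} (f : Fin c → Q)
    (hf : ∀ j, ∀ n : N, f j • n = 0) : ∃ σ, IsHigherHomotopy deg d f σ := by
  let W : Matrix ι ι (MvPolynomial (Fin c) Q) := Matrix.scalar ι (linForm f)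
  have hWa : ∀ b' b, W b' b = if b' = b then linForm f else 0 := fun b' b => by
    simp [W, Matrix.diagonal_apply]
  have hWdeg : ∀ b' b γ, mcoeff γ W b' b ≠ 0 → b' = b ∧ γ.degree = 1 := by
    intro b' b γ hne
    rw [mcoeff, hWa] at hne
    split_ifs at hne with hb
    · obtain ⟨j, rfl⟩ := coeff_linForm f hne
      exact ⟨hb, by simp⟩
    · simp at hne
  have key : ∀ m : ℕ, ∃ σ : Matrix ι ι (MvPolynomial (Fin c) Q),
      (∀ b' b γ, (σ b' b).coeff γ ≠ 0 → deg b' + 1 = deg b + 2 * γ.degree) ∧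
      mcoeff 0 σ = d ∧ ∀ γ : Fin c →₀ ℕ, γ.degree < m + 1 → mcoeff γ (σ * σ - W) = 0 := by
    intro m
    induction m with
    | zero =>
      refine ⟨d.map MvPolynomial.C, ?_, ?_, ?_⟩
      · intro b' b γ hne
        rw [Matrix.map_apply, MvPolynomial.coeff_C] at hne
        split_ifs at hne with h0
        · subst h0
          simpa using h.deg_d b' b hne
        · exact absurd rfl hne
      · ext b' b
        simp [mcoeff]
      · intro γ hγ
        have : d.map MvPolynomial.C * d.map MvPolynomial.C =
            (0 : Matrix ι ι (MvPolynomial (Fin c) Q)) := by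
          rw [← Matrix.map_mul, h.dd]
          ext; simp
        rw [this, zero_sub]
        ext b' b
        by_contra hne
        have h1 : mcoeff γ W b' b ≠ 0 := fun h0 => hne (by
          simp only [mcoeff] at h0 ⊢
          simp [h0])
        have := (hWdeg _ _ _ h1).2
        omega
    | succ m ih =>
      obtain ⟨σ, hσ, hσ0, hR⟩ := ih
      set R := σ * σ - W with hRdef
      have hεσ : ∀ γ v, ε ((mcoeff γ σ).mulVec v) = 0 := by
        intro γ v
        by_cases hγ : γ = 0
        · rw [hγ, hσ0, h.ε_d]
        · refine h.ε_eq_zero fun b' hne => ?_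
          rw [Matrix.mulVec, dotProduct] at hne
          obtain ⟨b, -, hb⟩ := Finset.exists_ne_zero_of_sum_ne_zero hne
          have e1 := hσ b' b γ (left_ne_zero_of_mul hb)
          have e2 : γ.degree ≠ 0 := fun h0 => hγ ((Finsupp.degree_eq_zero_iff γ).1 h0)
          omega
      have hsub : ∀ γ, mcoeff γ R = mcoeff γ (σ * σ) - mcoeff γ W := by
        intro γ; ext b' b; simp [mcoeff, hRdef]
      have hRdeg : ∀ γ b' b, mcoeff γ R b' b ≠ 0 → deg b' + 2 = deg b + 2 * γ.degree := by
        intro γ b' b hne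
        by_cases hW : mcoeff γ W b' b = 0
        · rw [hsub, Matrix.sub_apply, hW, sub_zero, mcoeff_mul, Matrix.sum_apply] at hne
          obtain ⟨p, hp, hne⟩ := Finset.exists_ne_zero_of_sum_ne_zero hne
          rw [Matrix.mul_apply] at hne
          obtain ⟨b'', -, hne⟩ := Finset.exists_ne_zero_of_sum_ne_zero hne
          have e1 := hσ _ _ _ (left_ne_zero_of_mul hne)
          have e2 := hσ _ _ _ (right_ne_zero_of_mul hne)
          have e3 := congrArg Finsupp.degree (Finset.HasAntidiagonal.mem_antidiagonal.1 hp)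
          rw [map_add] at e3
          omega
        · obtain ⟨rfl, e⟩ := hWdeg _ _ _ hW
          omega
      have hcomm : σ * R = R * σ := by
        rw [hRdef, mul_sub, sub_mul, mul_assoc]
        congr 1
        exact ((Matrix.scalar_commute _ (fun r' => Commute.all _ _) σ).eq).symm
      -- In order `m + 1`, products with `R` only see the constant coefficient.
      have hlow : ∀ (X Y : Matrix ι ι (MvPolynomial (Fin c) Q)) (γ : Fin c →₀ ℕ) (n : ℕ),
          γ.degree ≤ n → (∀ γ : Fin c →₀ ℕ, γ.degree < n → mcoeff γ Y = 0) →
          mcoeff γ (X * Y) = mcoeff 0 X * mcoeff γ Y ∧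
          mcoeff γ (Y * X) = mcoeff γ Y * mcoeff 0 X := by
        intro X Y γ n hγ hY
        have hlt : ∀ p q : Fin c →₀ ℕ, p + q = γ → p ≠ 0 → q.degree < n := by
          intro p q hpq hp
          have e3 := congrArg Finsupp.degree hpq
          have e2 : p.degree ≠ 0 := fun h0 => hp ((Finsupp.degree_eq_zero_iff p).1 h0)
          rw [map_add] at e3
          omega
        constructor
        · rw [mcoeff_mul, Finset.sum_eq_single (0, γ)]
          · rintro ⟨p, q⟩ hp hne
            rw [Finset.HasAntidiagonal.mem_antidiagonal] at hp
            rw [hY q (hlt p q hp ?_), mul_zero]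
            rintro rfl
            simp at hp
            exact hne (by rw [hp])
          · intro hne
            simp at hne
        · rw [mcoeff_mul, Finset.sum_eq_single (γ, 0)]
          · rintro ⟨p, q⟩ hp hne
            rw [Finset.HasAntidiagonal.mem_antidiagonal] at hp
            rw [hY p (hlt q p (by rw [add_comm]; exact hp) ?_), zero_mul]
            rintro rfl
            simp at hp
            exact hne (by rw [hp])
          · intro hne
            simp at hne
      have hs : ∀ γ : Fin c →₀ ℕ, ∃ s : Matrix ι ι Q, γ.degree = m + 1 →
          (∀ b' b, s b' b ≠ 0 → deg b' = deg b + 2 * m + 1) ∧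
          d * s + s * d = mcoeff γ R := by
        intro γ
        by_cases hγ : γ.degree = m + 1
        swap
        · exact ⟨0, fun h => absurd h hγ⟩
        obtain ⟨s, h1, h2⟩ := h.nullHomotopy (2 * m) (mcoeff γ R) (by
            intro b' b hne
            have := hRdeg γ b' b hne
            omega) (by
            have e1 := hlow σ R γ (m + 1) hγ.le hR
            rw [← hσ0, ← e1.1, ← e1.2, hcomm]) (by
            intro b
            have e1 : (fun b' => mcoeff γ R b' b) = (mcoeff γ R).mulVec (Pi.single b 1) := by
              ext b'; simp
            have e2 : (mcoeff γ W).mulVec (Pi.single b 1) =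
                Pi.single b ((linForm f).coeff γ) := by
              ext b'
              simp only [Matrix.mulVec_single_one, Matrix.col_apply, mcoeff, hWa]
              by_cases hb : b' = b
              · subst hb; simp
              · simp [hb]
            have e3 : ∀ n : N, (linForm f).coeff γ • n = 0 := by
              intro n
              have := coeff_linForm_mem f γ (Module.annihilator Q N)
                (fun j => Module.mem_annihilator.2 (hf j))
              exact Module.mem_annihilator.1 this n
            have e4 : (Pi.single b ((linForm f).coeff γ) : ι → Q) =
                (linForm f).coeff γ • Pi.single b 1 := by
              ext b'; simp [Pi.single_apply]
            rw [e1, hsub, Matrix.sub_mulVec, map_sub, e2, e4, map_smul, e3, sub_zero,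
              mcoeff_mul, Matrix.sum_mulVec, map_sum]
            refine Finset.sum_eq_zero fun p _ => ?_
            rw [← Matrix.mulVec_mulVec, hεσ])
        exact ⟨s, fun _ => ⟨h1, h2⟩⟩
      choose s hs using hs
      let T : Matrix ι ι (MvPolynomial (Fin c) Q) := fun b' b =>
        ∑ γ ∈ Finset.finsuppAntidiag Finset.univ (m + 1), MvPolynomial.monomial γ (s γ b' b)
      have hT : ∀ γ, mcoeff γ T = if γ.degree = m + 1 then s γ else 0 := by
        intro γ
        ext b' b
        simp only [mcoeff, T, MvPolynomial.coeff_sum, MvPolynomial.coeff_monomial,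
          Finset.sum_ite_eq', Finset.mem_finsuppAntidiag, Finset.subset_univ, and_true,
          ← Finsupp.degree_eq_sum]
        split_ifs <;> rfl
      have hT0 : ∀ γ : Fin c →₀ ℕ, γ.degree < m + 1 → mcoeff γ T = 0 := fun γ hγ => by
        rw [hT, if_neg (by omega)]
      have hTsub : ∀ X Y γ, mcoeff γ (X - Y : Matrix ι ι (MvPolynomial (Fin c) Q)) =
          mcoeff γ X - mcoeff γ Y := by
        intro X Y γ; ext; simp [mcoeff]
      have hTadd : ∀ X Y γ, mcoeff γ (X + Y : Matrix ι ι (MvPolynomial (Fin c) Q)) =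
          mcoeff γ X + mcoeff γ Y := by
        intro X Y γ; ext; simp [mcoeff]
      refine ⟨σ - T, ?_, ?_, ?_⟩
      · intro b' b γ hne
        by_cases h0 : (σ b' b).coeff γ = 0
        · have e1 : mcoeff γ T b' b ≠ 0 := by
            intro h1
            apply hne
            simp only [mcoeff] at h1
            rw [Matrix.sub_apply, MvPolynomial.coeff_sub, h0, h1, sub_zero]
          rw [hT] at e1
          split_ifs at e1 with hγ
          · have := (hs γ hγ).1 b' b e1
            omega
          · exact absurd rfl e1
        · exact hσ b' b γ h0
      · rw [hTsub, hσ0, hT0 0 (by simp), sub_zero]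
      · intro γ hγ
        have e1 : (σ - T) * (σ - T) - W = R - (σ * T + T * σ) + T * T := by
          rw [hRdef]; noncomm_ring
        have e2 := hlow σ T γ (m + 1) (by omega) hT0
        have e3 := hlow T T γ (m + 1) (by omega) hT0
        rw [e1, hTadd, hTsub, hTadd, e2.1, e2.2, e3.1, hT0 0 (by simp), zero_mul, add_zero, hσ0]
        by_cases hγ' : γ.degree = m + 1
        · rw [hT, if_pos hγ', (hs γ hγ').2, sub_self]
        · rw [hR γ (by omega), hT0 γ (by omega)]
          simp
  obtain ⟨σ, h1, h2, h3⟩ := key (Finset.univ.sup deg + 1)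
  refine ⟨σ, h1, h2, fun b' b => ?_⟩
  rw [← hWa, ← sub_eq_zero, ← Matrix.sub_apply]
  ext γ
  by_cases hγ : γ.degree < Finset.univ.sup deg + 1 + 1
  · have := congrFun (congrFun (h3 γ hγ) b') b
    simpa [mcoeff] using this
  · by_contra hne
    have hsup := Finset.le_sup (f := deg) (Finset.mem_univ b')
    rw [MvPolynomial.coeff_zero, Matrix.sub_apply, MvPolynomial.coeff_sub] at hne
    by_cases hW : (W b' b).coeff γ = 0
    · rw [hW, sub_zero] at hne
      have hne' : mcoeff γ (σ * σ) b' b ≠ 0 := hne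
      rw [mcoeff_mul, Matrix.sum_apply] at hne'
      obtain ⟨p, hp, hne⟩ := Finset.exists_ne_zero_of_sum_ne_zero hne'
      rw [Matrix.mul_apply] at hne
      obtain ⟨b'', -, hne⟩ := Finset.exists_ne_zero_of_sum_ne_zero hne
      have e1 := h1 _ _ _ (left_ne_zero_of_mul hne)
      have e2 := h1 _ _ _ (right_ne_zero_of_mul hne)
      have e3 := congrArg Finsupp.degree (Finset.HasAntidiagonal.mem_antidiagonal.1 hp)
      rw [map_add] at e3
      omega
    · have := (hWdeg _ _ _ hW).2
      omega

end Homotopy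

/-! ### The complex built from a system of higher homotopies -/

section Periodic

variable {R : Type*} [CommRing R] {M : Type*} [AddCommGroup M] [Module R M] {c : ℕ}

/-- The polynomial `p` acts on families `g : (Fin c →₀ ℕ) → M`, the variable `Xⱼ` acting as the
shift `g ↦ g (· + eⱼ)`. -/
noncomputable def act (M : Type*) [AddCommGroup M] [Module R M] (p : MvPolynomial (Fin c) R) :
    Module.End R ((Fin c →₀ ℕ) → M) :=
  ∑ γ ∈ p.support, p.coeff γ • LinearMap.funLeft R M (fun α => α + γ)

lemma act_apply (p : MvPolynomial (Fin c) R) (g : (Fin c →₀ ℕ) → M) (α : Fin c →₀ ℕ) :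
    act M p g α = ∑ γ ∈ p.support, p.coeff γ • g (α + γ) := by
  simp [act, LinearMap.sum_apply, Finset.sum_apply, LinearMap.funLeft_apply]

lemma act_eq_sum (p : MvPolynomial (Fin c) R) (s : Finset (Fin c →₀ ℕ)) (hs : p.support ⊆ s) :
    act M p = ∑ γ ∈ s, p.coeff γ • LinearMap.funLeft R M (fun α => α + γ) := by
  refine Finset.sum_subset hs fun γ _ hγ => ?_
  rw [MvPolynomial.notMem_support_iff.1 hγ, zero_smul]

lemma act_add (p q : MvPolynomial (Fin c) R) : act M (p + q) = act M p + act M q := by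
  classical
  rw [act_eq_sum p (p.support ∪ q.support) Finset.subset_union_left,
    act_eq_sum q (p.support ∪ q.support) Finset.subset_union_right,
    act_eq_sum (p + q) (p.support ∪ q.support) MvPolynomial.support_add,
    ← Finset.sum_add_distrib]
  simp [add_smul]

lemma act_zero : act M (0 : MvPolynomial (Fin c) R) = 0 := by
  simp [act]

lemma act_monomial (γ : Fin c →₀ ℕ) (a : R) :
    act M (MvPolynomial.monomial γ a) = a • LinearMap.funLeft R M (fun α => α + γ) := by
  classical
  rw [act_eq_sum _ {γ} MvPolynomial.support_monomial_subset]
  simp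

lemma act_mul (p q : MvPolynomial (Fin c) R) : act M (p * q) = act M p * act M q := by
  induction p using MvPolynomial.induction_on' with
  | add p p' hp hp' => rw [add_mul, act_add, hp, hp', act_add, add_mul]
  | monomial γ a =>
    induction q using MvPolynomial.induction_on' with
    | add q q' hq hq' => rw [mul_add, act_add, hq, hq', act_add, mul_add]
    | monomial γ' a' =>
      rw [MvPolynomial.monomial_mul, act_monomial, act_monomial, act_monomial]
      ext g α
      simp only [mul_smul, LinearMap.smul_apply, Pi.smul_apply, LinearMap.funLeft_apply, add_assoc,
        Module.End.mul_apply, map_smul]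
      exact smul_comm _ _ _

lemma act_sum {κ : Type*} (s : Finset κ) (p : κ → MvPolynomial (Fin c) R) :
    act M (∑ k ∈ s, p k) = ∑ k ∈ s, act M (p k) := by
  classical
  induction s using Finset.induction_on with
  | empty => simp [act_zero]
  | insert a s ha ih => rw [Finset.sum_insert ha, act_add, ih, Finset.sum_insert ha]

variable {ι : Type} [Fintype ι]

/-- The endomorphism of `⨁ᵦ (divided powers) ⊗ M` given by a matrix of polynomials. -/
noncomputable def dmap (M : Type*) [AddCommGroup M] [Module R M]
    (σ : Matrix ι ι (MvPolynomial (Fin c) R)) : Module.End R (ι → (Fin c →₀ ℕ) → M) :=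
  LinearMap.pi fun b' => ∑ b, act M (σ b' b) ∘ₗ LinearMap.proj b

lemma dmap_apply (σ : Matrix ι ι (MvPolynomial (Fin c) R)) (v : ι → (Fin c →₀ ℕ) → M) (b' : ι) :
    dmap M σ v b' = ∑ b, act M (σ b' b) (v b) := by
  simp [dmap, LinearMap.sum_apply]

lemma dmap_dmap (σ τ : Matrix ι ι (MvPolynomial (Fin c) R)) (v : ι → (Fin c →₀ ℕ) → M) :
    dmap M σ (dmap M τ v) = dmap M (σ * τ) v := by
  funext b'
  simp only [dmap_apply, Matrix.mul_apply, act_sum, act_mul, map_sum, LinearMap.sum_apply,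
    Module.End.mul_apply]
  exact Finset.sum_comm

lemma dmap_mem (K : Submodule R M) (σ : Matrix ι ι (MvPolynomial (Fin c) R))
    (v : ι → (Fin c →₀ ℕ) → M) (b' : ι) (α : Fin c →₀ ℕ)
    (h : ∀ b γ, (σ b' b).coeff γ ≠ 0 → v b (α + γ) ∈ K) : dmap M σ v b' α ∈ K := by
  rw [dmap_apply, Finset.sum_apply]
  refine sum_mem fun b _ => ?_
  rw [act_apply]
  refine sum_mem fun γ hγ => K.smul_mem _ (h b γ (MvPolynomial.mem_support_iff.1 hγ))

lemma exists_of_dmap_ne_zero {σ : Matrix ι ι (MvPolynomial (Fin c) R)}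
    {v : ι → (Fin c →₀ ℕ) → M} {b' : ι} {α : Fin c →₀ ℕ} (h : dmap M σ v b' α ≠ 0) :
    ∃ b γ, (σ b' b).coeff γ ≠ 0 ∧ v b (α + γ) ≠ 0 := by
  by_contra! hne
  exact h ((Submodule.mem_bot R).1 (dmap_mem ⊥ σ v b' α
    fun b γ hb => (Submodule.mem_bot R).2 (hne b γ hb)))

/-- The shift `Xⱼ`, acting on all components. -/
noncomputable def chi (R : Type*) [CommRing R] (M : Type*) [AddCommGroup M] [Module R M]
    (ι : Type) {c : ℕ} (j : Fin c) : Module.End R (ι → (Fin c →₀ ℕ) → M) :=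
  LinearMap.pi fun b => LinearMap.funLeft R M (fun α => α + Finsupp.single j 1) ∘ₗ
    LinearMap.proj b

lemma chi_apply (j : Fin c) (v : ι → (Fin c →₀ ℕ) → M) (b : ι) (α : Fin c →₀ ℕ) :
    chi R M ι j v b α = v b (α + Finsupp.single j 1) := rfl

lemma chi_dmap (j : Fin c) (σ : Matrix ι ι (MvPolynomial (Fin c) R))
    (v : ι → (Fin c →₀ ℕ) → M) :
    chi R M ι j (dmap M σ v) = dmap M σ (chi R M ι j v) := by
  funext b' α
  simp only [chi_apply, dmap_apply, Finset.sum_apply, act_apply]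
  refine Finset.sum_congr rfl fun b _ => Finset.sum_congr rfl fun γ _ => ?_
  rw [add_right_comm]

/-- Elements of internal degree `i` supported on the monomials in the first `k` variables; the
monomial `α` in the component `b` has degree `2|α| + deg b`. -/
def degPart (R : Type*) [CommRing R] (M : Type*) [AddCommGroup M] [Module R M] (c : ℕ)
    (deg : ι → ℕ) (k i : ℕ) : Submodule R (ι → (Fin c →₀ ℕ) → M) where
  carrier := {v | ∀ b α, v b α ≠ 0 → 2 * α.degree + deg b = i ∧ ∀ j : Fin c, k ≤ j → α j = 0}
  add_mem' := by
    intro v w hv hw b α hne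
    by_cases h : v b α = 0
    · exact hw b α fun h' => hne (by simp [h, h'])
    · exact hv b α h
  zero_mem' := by intro b α h; exact absurd rfl h
  smul_mem' := by
    intro r v hv b α hne
    exact hv b α fun h => hne (by simp [h])

lemma mem_degPart {deg : ι → ℕ} {k i : ℕ} {v : ι → (Fin c →₀ ℕ) → M} :
    v ∈ degPart R M c deg k i ↔
      ∀ b α, v b α ≠ 0 → 2 * α.degree + deg b = i ∧ ∀ j : Fin c, k ≤ j → α j = 0 := Iff.rfl

/-- Homogeneity of a matrix of polynomials, as a map of degree `-1`. -/
def IsHomMat (deg : ι → ℕ) (σ : Matrix ι ι (MvPolynomial (Fin c) R)) : Prop :=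
  ∀ b' b γ, (σ b' b).coeff γ ≠ 0 → deg b' + 1 = deg b + 2 * γ.degree

lemma dmap_mem_degPart {deg : ι → ℕ} {σ : Matrix ι ι (MvPolynomial (Fin c) R)}
    (hσ : IsHomMat deg σ) {k i : ℕ} {v : ι → (Fin c →₀ ℕ) → M}
    (hv : v ∈ degPart R M c deg k (i + 1)) : dmap M σ v ∈ degPart R M c deg k i := by
  intro b' α hne
  obtain ⟨b, γ, h1, h2⟩ := exists_of_dmap_ne_zero hne
  have h3 := hσ b' b γ h1
  obtain ⟨h4, h5⟩ := hv b _ h2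
  rw [map_add] at h4
  refine ⟨by omega, fun j hj => ?_⟩
  have := h5 j hj
  rw [Finsupp.add_apply] at this
  omega

lemma dmap_eq_zero_of_mem {deg : ι → ℕ} {σ : Matrix ι ι (MvPolynomial (Fin c) R)}
    (hσ : IsHomMat deg σ) {k : ℕ} {v : ι → (Fin c →₀ ℕ) → M}
    (hv : v ∈ degPart R M c deg k 0) : dmap M σ v = 0 := by
  funext b' α
  by_contra hne
  obtain ⟨b, γ, h1, h2⟩ := exists_of_dmap_ne_zero hne
  have h3 := hσ b' b γ h1
  obtain ⟨h4, h5⟩ := hv b _ h2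
  rw [map_add] at h4
  omega

lemma chi_mem_degPart {deg : ι → ℕ} {k i : ℕ} (j : Fin c) {v : ι → (Fin c →₀ ℕ) → M}
    (hv : v ∈ degPart R M c deg k (i + 2)) : chi R M ι j v ∈ degPart R M c deg k i := by
  intro b' α hne
  rw [chi_apply] at hne
  obtain ⟨h4, h5⟩ := hv _ _ hne
  rw [map_add, Finsupp.degree_single] at h4
  refine ⟨by omega, fun j hj => ?_⟩
  have := h5 j hj
  rw [Finsupp.add_apply] at this
  omega

lemma chi_eq_zero_of_mem {deg : ι → ℕ} {k i : ℕ} (j : Fin c) {v : ι → (Fin c →₀ ℕ) → M}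
    (hv : v ∈ degPart R M c deg k i) (hj : k ≤ j) : chi R M ι j v = 0 := by
  funext b α
  by_contra hne
  rw [chi_apply] at hne
  have := (hv _ _ hne).2 j hj
  simp at this

lemma exists_chi_lift {deg : ι → ℕ} {i : ℕ} (j : Fin c) {w : ι → (Fin c →₀ ℕ) → M}
    (hw : w ∈ degPart R M c deg (j + 1) i) :
    ∃ v ∈ degPart R M c deg (j + 1) (i + 2), chi R M ι j v = w := by
  classical
  refine ⟨fun b α => if α j = 0 then 0 else w b (α - Finsupp.single j 1), ?_, ?_⟩
  · intro b α hne
    beta_reduce at hne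
    split_ifs at hne with hα
    · exact absurd rfl hne
    obtain ⟨h1, h2⟩ := hw _ _ hne
    have hle : Finsupp.single j 1 ≤ α := by
      rw [Finsupp.single_le_iff]; omega
    have h3 : (α - Finsupp.single j 1) + Finsupp.single j 1 = α := tsub_add_cancel_of_le hle
    have h4 := congrArg Finsupp.degree h3
    rw [map_add, Finsupp.degree_single] at h4
    refine ⟨by omega, fun j' hj' => ?_⟩
    have h5 := h2 j' hj'
    have h6 : j ≠ j' := by
      rintro rfl
      omega
    rw [← h3, Finsupp.add_apply, h5, Finsupp.single_apply, if_neg h6, add_zero]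
  · funext b α
    rw [chi_apply]
    simp

lemma exists_restrict {deg : ι → ℕ} {i : ℕ} (j : Fin c) {z : ι → (Fin c →₀ ℕ) → M}
    (hz : z ∈ degPart R M c deg (j + 1) i) :
    ∃ z₁ ∈ degPart R M c deg j i,
      ∀ b α, z b α = z₁ b α ∨ (z₁ b α = 0 ∧ ∃ α', z b α = chi R M ι j z b α') := by
  classical
  refine ⟨fun b α => if α j = 0 then z b α else 0, ?_, ?_⟩
  · intro b α hne
    beta_reduce at hne
    split_ifs at hne with hα
    · obtain ⟨h1, h2⟩ := hz _ _ hne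
      refine ⟨h1, fun j' hj' => ?_⟩
      rcases hj'.eq_or_lt with h | h
      · rw [← Fin.ext h]; exact hα
      · exact h2 j' h
    · exact absurd rfl hne
  · intro b α
    by_cases hα : α j = 0
    · simp [hα]
    · right
      refine ⟨by simp [hα], α - Finsupp.single j 1, ?_⟩
      rw [chi_apply, tsub_add_cancel_of_le]
      rw [Finsupp.single_le_iff]; omega

/-- On elements without divided power variables, `dmap σ` is the constant coefficient of `σ`. -/
lemma dmap_const {deg : ι → ℕ} {i : ℕ} (σ : Matrix ι ι (MvPolynomial (Fin c) R))
    {v : ι → (Fin c →₀ ℕ) → R} (hv : v ∈ degPart R R c deg 0 i) (b' : ι) (α : Fin c →₀ ℕ) :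
    dmap R σ v b' α = if α = 0 then (mcoeff 0 σ).mulVec (fun b => v b 0) b' else 0 := by
  have h0 : ∀ b α, α ≠ 0 → v b α = 0 := by
    intro b α hα
    by_contra hne
    exact hα (Finsupp.ext fun j => (hv b α hne).2 j (Nat.zero_le _))
  rw [dmap_apply, Finset.sum_apply]
  split_ifs with hα
  · subst hα
    rw [Matrix.mulVec, dotProduct]
    refine Finset.sum_congr rfl fun b _ => ?_
    rw [act_apply, Finset.sum_eq_single 0]
    · simp [mcoeff]
    · intro γ _ hγ
      rw [zero_add, h0 b γ hγ, smul_zero]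
    · intro h
      rw [MvPolynomial.notMem_support_iff.1 h, zero_smul]
  · refine Finset.sum_eq_zero fun b _ => ?_
    rw [act_apply]
    refine Finset.sum_eq_zero fun γ _ => ?_
    rw [h0, smul_zero]
    intro h
    exact hα (by simpa using (add_eq_zero.1 h).1)

end Periodic

/-! ### Exactness modulo a regular sequence -/

section Exactness

variable {Q : Type u} [CommRing Q] {ι : Type} [Fintype ι] {c : ℕ}

/-- The ideal generated by the first `k` elements of the sequence `f`. -/
def firstIdeal (f : Fin c → Q) (k : ℕ) : Ideal Q := Ideal.span {x | ∃ j : Fin c, j.val < k ∧ f j = x}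

lemma firstIdeal_succ (f : Fin c → Q) (j : Fin c) (x : Q) (hx : x ∈ firstIdeal f (j + 1)) :
    ∃ y, x - f j * y ∈ firstIdeal f j := by
  have h : firstIdeal f (j + 1) ≤ firstIdeal f j ⊔ Ideal.span {f j} := by
    refine Ideal.span_le.2 ?_
    rintro _ ⟨j', hj', rfl⟩
    rcases (Nat.lt_succ_iff.1 hj').lt_or_eq with h | h
    · exact Ideal.mem_sup_left (Ideal.subset_span ⟨j', h, rfl⟩)
    · rw [Fin.ext h]
      exact Ideal.mem_sup_right (Ideal.mem_span_singleton_self _)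
  obtain ⟨a, ha, b, hb, rfl⟩ := Submodule.mem_sup.1 (h hx)
  obtain ⟨y, rfl⟩ := Ideal.mem_span_singleton'.1 hb
  exact ⟨y, by convert ha using 1; ring⟩

lemma firstIdeal_mono (f : Fin c → Q) (k : ℕ) : firstIdeal f k ≤ firstIdeal f (k + 1) :=
  Ideal.span_mono fun _ ⟨j, hj, hx⟩ => ⟨j, by omega, hx⟩

/-- Families all of whose entries lie in the ideal `I`. -/
def modI (I : Ideal Q) (ι : Type) (c : ℕ) : Submodule Q (ι → (Fin c →₀ ℕ) → Q) where
  carrier := {v | ∀ b α, v b α ∈ I}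
  add_mem' := fun hv hw b α => I.add_mem (hv b α) (hw b α)
  zero_mem' := fun _ _ => I.zero_mem
  smul_mem' := fun r _ hv b α => I.mul_mem_left r (hv b α)

lemma dmap_mem_modI {I : Ideal Q} (σ : Matrix ι ι (MvPolynomial (Fin c) Q))
    {v : ι → (Fin c →₀ ℕ) → Q} (hv : v ∈ modI I ι c) : dmap Q σ v ∈ modI I ι c :=
  fun b' α => dmap_mem I σ v b' α fun _ _ _ => hv _ _

variable [DecidableEq ι]

lemma dmap_sq_apply {M : Type*} [AddCommGroup M] [Module Q M] {deg : ι → ℕ} {d : Matrix ι ι Q}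
    {f : Fin c → Q}
    {σ : Matrix ι ι (MvPolynomial (Fin c) Q)} (hσ : IsHigherHomotopy deg d f σ)
    (v : ι → (Fin c →₀ ℕ) → M) :
    dmap M σ (dmap M σ v) = ∑ j, f j • chi Q M ι j v := by
  rw [dmap_dmap]
  funext b α
  rw [dmap_apply, Finset.sum_eq_single b]
  · rw [hσ.sq, if_pos rfl, linForm, act_sum]
    simp only [act_monomial, LinearMap.sum_apply, Finset.sum_apply, LinearMap.smul_apply,
      Pi.smul_apply]
    rfl
  · intro b' _ hne
    rw [hσ.sq, if_neg hne.symm, act_zero, LinearMap.zero_apply]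
  · simp

/-- Exactness, modulo the first `k` equations, of the complex using only the first `k` divided
power variables. -/
theorem exact_mod_firstIdeal {N : Type u} [AddCommGroup N] [Module Q N] {deg : ι → ℕ}
    {d : Matrix ι ι Q} {ε : (ι → Q) →ₗ[Q] N} (h : IsFFR deg d ε) {f : Fin c → Q}
    {σ : Matrix ι ι (MvPolynomial (Fin c) Q)} (hσ : IsHigherHomotopy deg d f σ)
    (hreg : ∀ j : Fin c, ∀ x, f j * x ∈ firstIdeal f j → x ∈ firstIdeal f j) (k : ℕ) (hk : k ≤ c) :
    ∀ i, ∀ z ∈ degPart Q Q c deg k (i + 1), dmap Q σ z ∈ modI (firstIdeal f k) ι c →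
      ∃ u ∈ degPart Q Q c deg k (i + 2), z - dmap Q σ u ∈ modI (firstIdeal f k) ι c := by
  have hhom : IsHomMat deg σ := hσ.hom
  induction k with
  | zero =>
    intro i z hz hdz
    have hI : ∀ x, x ∈ firstIdeal f 0 ↔ x = 0 := by
      intro x
      simp [firstIdeal]
    have h0 : ∀ b α, α ≠ 0 → z b α = 0 := by
      intro b α hα
      by_contra hne
      exact hα (Finsupp.ext fun j => (hz b α hne).2 j (Nat.zero_le _))
    obtain ⟨u, hu, hdu⟩ := h.exact_succ i (fun b => z b 0) (by
      intro b hb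
      simpa using (hz b 0 hb).1) (by
      ext b'
      have := (hI _).1 (hdz b' 0)
      rw [dmap_const σ hz, if_pos rfl, hσ.zero] at this
      exact this)
    let u' : ι → (Fin c →₀ ℕ) → Q := fun b α => if α = 0 then u b else 0
    have hu' : u' ∈ degPart Q Q c deg 0 (i + 2) := by
      intro b α hne
      simp only [u'] at hne
      split_ifs at hne with hα
      · subst hα
        simpa using hu b hne
      · exact absurd rfl hne
    refine ⟨u', hu', fun b α => ?_⟩
    rw [hI, Pi.sub_apply, Pi.sub_apply, dmap_const σ hu']
    split_ifs with hα
    · subst hα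
      have e : (fun b => u' b 0) = u := by funext b; simp [u']
      rw [e, hσ.zero, hdu, sub_self]
    · rw [h0 b α hα, sub_zero]
  | succ k ih =>
    intro i z hz hdz
    let j : Fin c := ⟨k, hk⟩
    have hjk : j.val = k := rfl
    have hzW : ∀ i, ∀ z ∈ degPart Q Q c deg (k + 1) i,
        dmap Q σ (dmap Q σ z) - f j • chi Q Q ι j z ∈ modI (firstIdeal f k) ι c := by
      intro i z hz
      rw [dmap_sq_apply hσ, ← Finset.sum_erase_eq_sub (Finset.mem_univ j)]
      refine sum_mem fun j' hj' => ?_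
      rcases lt_or_ge j'.val (k + 1) with hlt | hge
      · have hne : j' ≠ j := (Finset.mem_erase.1 hj').1
        have hlt' : j'.val < k := by
          have : j'.val ≠ k := fun h => hne (Fin.ext h)
          omega
        intro b α
        exact Ideal.mul_mem_right _ _ (Ideal.subset_span ⟨j', hlt', rfl⟩)
      · rw [chi_eq_zero_of_mem j' hz hge, smul_zero]
        exact zero_mem _
    -- Write `d z = fⱼ g` modulo the first `k` equations.
    have hdzV := dmap_mem_degPart hhom hz
    have hg : ∀ b α, ∃ y, (dmap Q σ z b α = 0 → y = 0) ∧
        dmap Q σ z b α - f j * y ∈ firstIdeal f k := by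
      intro b α
      by_cases h0 : dmap Q σ z b α = 0
      · exact ⟨0, fun _ => rfl, by simp [h0]⟩
      · obtain ⟨y, hy⟩ := firstIdeal_succ f j _ (hdz b α)
        exact ⟨y, fun h => absurd h h0, hy⟩
    choose g hg0 hg using hg
    have hgV : g ∈ degPart Q Q c deg (k + 1) i := fun b α hne =>
      hdzV b α fun h0 => hne (hg0 b α h0)
    have hdzg : dmap Q σ z - f j • g ∈ modI (firstIdeal f k) ι c := hg
    obtain ⟨g', hg'V, hg'⟩ := exists_chi_lift j hgV
    set z' := z - dmap Q σ g' with hz'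
    have hz'V : z' ∈ degPart Q Q c deg (k + 1) (i + 1) :=
      sub_mem hz (dmap_mem_degPart hhom hg'V)
    -- `z'` is a cycle modulo the first `k` equations ...
    have hdz' : dmap Q σ z' ∈ modI (firstIdeal f k) ι c := by
      have h1 := hzW _ g' hg'V
      rw [hg'] at h1
      have h2 := sub_mem hdzg h1
      rw [hz', map_sub]
      convert h2 using 1
      abel
    -- ... and so is its shift, because `fⱼ` is regular.
    have hχz' : chi Q Q ι j z' ∈ modI (firstIdeal f k) ι c := by
      have h1 := hzW _ z hz
      have h2 := sub_mem h1 (dmap_mem_modI σ hdzg)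
      have h3 : f j • (dmap Q σ g - chi Q Q ι j z) ∈ modI (firstIdeal f k) ι c := by
        rw [map_sub, map_smul] at h2
        convert h2 using 1
        rw [smul_sub]
        abel
      have h4 : dmap Q σ g - chi Q Q ι j z ∈ modI (firstIdeal f k) ι c :=
        fun b α => hreg j _ (h3 b α)
      rw [hz', map_sub, chi_dmap, hg', ← neg_sub]
      exact neg_mem h4
    obtain ⟨z₁, hz₁V, hz₁⟩ := exists_restrict j hz'V
    have hzz₁ : z' - z₁ ∈ modI (firstIdeal f k) ι c := by
      intro b α
      rw [Pi.sub_apply, Pi.sub_apply]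
      rcases hz₁ b α with h1 | ⟨h1, α', h2⟩
      · rw [h1, sub_self]; exact zero_mem _
      · rw [h1, sub_zero, h2]; exact hχz' b α'
    have hmono : ∀ v, v ∈ modI (firstIdeal f k) ι c → v ∈ modI (firstIdeal f (k + 1)) ι c :=
      fun v hv b α => firstIdeal_mono f k (hv b α)
    obtain ⟨u, huV, hu⟩ := ih (by omega) i z₁ hz₁V (by
      have e : dmap Q σ z₁ = dmap Q σ z' - dmap Q σ (z' - z₁) := by
        rw [← map_sub, sub_sub_cancel]
      rw [e]
      exact sub_mem hdz' (dmap_mem_modI σ hzz₁))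
    have huV' : u ∈ degPart Q Q c deg (k + 1) (i + 2) := fun b α hne =>
      ⟨(huV b α hne).1, fun j' hj' => (huV b α hne).2 j' (by omega)⟩
    refine ⟨u + g', add_mem huV' hg'V, hmono _ ?_⟩
    have := add_mem hzz₁ hu
    convert this using 1
    rw [map_add, hz']
    abel

end Exactness

/-! ### Resolutions over a complete intersection -/

/-- A free resolution of `N` over `B` in the form produced by a system of higher homotopies: its
differential is `dmap σ` on the graded pieces of `ι → (Fin c →₀ ℕ) → B`. -/
structure IsPerRes {B : Type*} [CommRing B] {N : Type*} [AddCommGroup N] [Module B N]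
    {ι : Type} [Fintype ι] {c : ℕ} (deg : ι → ℕ) (σ : Matrix ι ι (MvPolynomial (Fin c) B))
    (ε : (ι → B) →ₗ[B] N) : Prop where
  hom : IsHomMat deg σ
  sq : σ * σ = 0
  exact_succ : ∀ i, ∀ z ∈ degPart B B c deg c (i + 1), dmap B σ z = 0 →
    ∃ u ∈ degPart B B c deg c (i + 2), dmap B σ u = z
  exact_zero : ∀ z ∈ degPart B B c deg c 0, ε (fun b => z b 0) = 0 →
    ∃ u ∈ degPart B B c deg c 1, dmap B σ u = z
  surj : ∀ n, ∃ z ∈ degPart B B c deg c 0, ε (fun b => z b 0) = n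
  ε_d : ∀ u ∈ degPart B B c deg c 1, ε (fun b => dmap B σ u b 0) = 0

/-- Over a quotient `B` of a regular local ring `Q` by a regular sequence, every finite module has
a resolution given by a system of higher homotopies. -/
theorem exists_isPerRes {Q : Type u} [CommRing Q] [IsRegularLocalRing Q] {B : Type u} [CommRing B]
    (φ : Q →+* B) (hφ : Function.Surjective φ) {c : ℕ} (f : Fin c → Q)
    (hker : RingHom.ker φ = firstIdeal f c)
    (hreg : ∀ j : Fin c, ∀ x, f j * x ∈ firstIdeal f j → x ∈ firstIdeal f j)
    (N : Type u) [AddCommGroup N] [Module B N] [Module.Finite B N] :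
    ∃ (ι : Type) (_ : Fintype ι) (deg : ι → ℕ) (σ : Matrix ι ι (MvPolynomial (Fin c) B))
      (ε : (ι → B) →ₗ[B] N), IsPerRes deg σ ε := by
  classical
  let : Module Q N := Module.compHom N φ
  have hsmul : ∀ (q : Q) (n : N), q • n = φ q • n := fun _ _ => rfl
  have : Module.Finite Q N := by
    let : Algebra Q B := φ.toAlgebra
    have : IsScalarTower Q B N := ⟨fun q b n => by
      rw [hsmul, Algebra.smul_def, mul_smul]; rfl⟩
    have : Module.Finite Q B := Module.Finite.of_surjective (Algebra.linearMap Q B) hφ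
    exact Module.Finite.trans B N
  obtain ⟨ι, hι, deg, d, ε, h⟩ := exists_isFFR_of_regular Q N
  have hf0 : ∀ x, x ∈ firstIdeal f c ↔ φ x = 0 := fun x => by
    rw [← hker, RingHom.mem_ker]
  obtain ⟨σ, hσ⟩ := h.exists_higherHomotopy f (fun j n => by
    rw [hsmul, (hf0 (f j)).1 (Ideal.subset_span ⟨j, j.2, rfl⟩), zero_smul])
  let σ' : Matrix ι ι (MvPolynomial (Fin c) B) := σ.map (MvPolynomial.map φ)
  let ε' : (ι → B) →ₗ[B] N := Fintype.linearCombination B (fun b => ε (Pi.single b 1))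
  have hε : ∀ v : ι → Q, ε' (fun b => φ (v b)) = ε v := by
    intro v
    have h5 : v = ∑ b, v b • Pi.single b (1 : Q) := by
      ext c; simp [Finset.sum_apply, Pi.single_apply]
    conv_rhs => rw [h5]
    rw [map_sum, Fintype.linearCombination_apply]
    refine Finset.sum_congr rfl fun b _ => ?_
    rw [map_smul, hsmul]
  -- Reduction modulo the regular sequence commutes with the differentials.
  have hmap : ∀ (v : ι → (Fin c →₀ ℕ) → Q) b α,
      φ (dmap Q σ v b α) = dmap B σ' (fun b α => φ (v b α)) b α := by
    intro v b' α
    simp only [dmap_apply, Finset.sum_apply, map_sum]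
    refine Finset.sum_congr rfl fun b _ => ?_
    rw [act_apply, act_eq_sum (σ' b' b) (σ b' b).support (MvPolynomial.support_map_subset _ _)]
    simp [LinearMap.sum_apply, Finset.sum_apply, LinearMap.funLeft_apply, σ',
      MvPolynomial.coeff_map]
  have hmap' : ∀ (v : ι → (Fin c →₀ ℕ) → Q),
      dmap B σ' (fun b α => φ (v b α)) = fun b α => φ (dmap Q σ v b α) := by
    intro v; funext b α; rw [hmap]
  have hlift : ∀ i, ∀ z ∈ degPart B B c deg c i, ∃ w ∈ degPart Q Q c deg c i,
      z = fun b α => φ (w b α) := by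
    intro i z hz
    have h1 : ∀ b α, ∃ y, (z b α = 0 → y = 0) ∧ φ y = z b α := by
      intro b α
      by_cases h0 : z b α = 0
      · exact ⟨0, fun _ => rfl, by simp [h0]⟩
      · obtain ⟨y, hy⟩ := hφ (z b α)
        exact ⟨y, fun h => absurd h h0, hy⟩
    choose w hw0 hw using h1
    exact ⟨w, fun b α hne => hz b α fun h => hne (hw0 b α h), by funext b α; rw [hw]⟩
  have hpush : ∀ i, ∀ w ∈ degPart Q Q c deg c i,
      (fun b α => φ (w b α)) ∈ degPart B B c deg c i := by
    intro i w hw b α hne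
    exact hw b α fun h => hne (by simp [h])
  -- The parts of degree zero and one only involve the monomial `1`.
  have h01 : ∀ i ≤ 1, ∀ w ∈ degPart Q Q c deg c i, w ∈ degPart Q Q c deg 0 i := by
    intro i hi w hw b α hne
    refine ⟨(hw b α hne).1, fun j _ => ?_⟩
    have h1 : α.degree = 0 := by have := (hw b α hne).1; omega
    rw [(Finsupp.degree_eq_zero_iff α).1 h1]
    rfl
  have hconst : ∀ i (u : ι → Q), InDeg deg i u →
      (fun b (α : Fin c →₀ ℕ) => if α = 0 then u b else 0) ∈ degPart Q Q c deg c i := by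
    intro i u hu b α hne
    beta_reduce at hne
    split_ifs at hne with hα
    · subst hα
      simpa using hu b hne
    · exact absurd rfl hne
  have hhom : IsHomMat deg σ := hσ.hom
  refine ⟨ι, hι, deg, σ', ε', ?_, ?_, ?_, ?_, ?_, ?_⟩
  · intro b' b γ hne
    refine hhom b' b γ fun h0 => hne ?_
    simp [σ', MvPolynomial.coeff_map, h0]
  · have e : σ' * σ' = (σ * σ).map (MvPolynomial.map φ) := (Matrix.map_mul).symm
    rw [e]
    ext1 b' b
    rw [Matrix.map_apply, hσ.sq]
    split_ifs
    · ext γ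
      rw [MvPolynomial.coeff_map, Matrix.zero_apply, MvPolynomial.coeff_zero, ← hf0]
      exact coeff_linForm_mem f γ _ fun j => Ideal.subset_span ⟨j, j.2, rfl⟩
    · simp
  · intro i z hz hdz
    obtain ⟨w, hw, rfl⟩ := hlift _ z hz
    obtain ⟨u, hu, hdu⟩ := exact_mod_firstIdeal h hσ hreg c le_rfl i w hw (fun b α => by
      rw [hf0, hmap, hdz]; rfl)
    refine ⟨_, hpush _ u hu, ?_⟩
    rw [hmap']
    funext b α
    have := (hf0 _).1 (hdu b α)
    rw [Pi.sub_apply, Pi.sub_apply, map_sub, sub_eq_zero] at this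
    exact this.symm
  · intro z hz hεz
    obtain ⟨w, hw, rfl⟩ := hlift _ z hz
    rw [hε (fun b => w b 0)] at hεz
    have hw0 := h01 0 (by omega) w hw
    obtain ⟨u, hu, hdu⟩ := h.exact_zero (fun b => w b 0)
      (fun b hb => by simpa using (hw b 0 hb).1) hεz
    refine ⟨_, hpush _ _ (hconst 1 u hu), ?_⟩
    rw [hmap']
    funext b α
    rw [dmap_const σ (h01 1 le_rfl _ (hconst 1 u hu)), hσ.zero]
    by_cases hα : α = 0
    · subst hα
      simp only [if_true]
      rw [hdu]
    · have : w b α = 0 := by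
        by_contra hne
        exact hα (Finsupp.ext fun j => (hw0 b α hne).2 j (Nat.zero_le _))
      rw [if_neg hα, this]
  · intro n
    obtain ⟨v, hv, hvn⟩ := h.surj n
    refine ⟨_, hpush _ _ (hconst 0 v hv), ?_⟩
    simp only [if_true]
    rw [hε, hvn]
  · intro u hu
    obtain ⟨w, hw, rfl⟩ := hlift _ u hu
    rw [hmap', hε (fun b => dmap Q σ w b 0)]
    have : (fun b => dmap Q σ w b 0) = d.mulVec (fun b => w b 0) := by
      funext b
      rw [dmap_const σ (h01 1 le_rfl _ hw), hσ.zero, if_pos rfl]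
    rw [this, h.ε_d]

/-! ### Homology with coefficients of the resolution -/

/-- The operators `X_{k-1}, …, X₀`. -/
noncomputable def chiList (R : Type*) [CommRing R] (M : Type*) [AddCommGroup M] [Module R M]
    (ι : Type) (c : ℕ) : ℕ → List (Module.End R (ι → (Fin c →₀ ℕ) → M))
  | 0 => []
  | k + 1 => (if h : k < c then chi R M ι ⟨k, h⟩ else 0) :: chiList R M ι c k

/-- The index set of a basis of the degree `i` part: monomials `α` in the component `b` with
`2|α| + deg b = i`. -/
def BasisIndex {ι : Type} (c : ℕ) (deg : ι → ℕ) (i : ℕ) : Type :=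
  {x : ι × (Fin c →₀ ℕ) // 2 * x.2.degree + deg x.1 = i}

section Dichotomy

variable {B : Type*} [CommRing B] {M : Type*} [AddCommGroup M] [Module B M]
  {ι : Type} [Fintype ι] {c : ℕ}

instance (deg : ι → ℕ) (i : ℕ) : Finite (BasisIndex c deg i) := by
  have h : (Set.univ ×ˢ {α : Fin c →₀ ℕ | α.degree ≤ i} : Set (ι × (Fin c →₀ ℕ))).Finite :=
    Set.finite_univ.prod (Finsupp.finite_of_degree_le i)
  have h2 : {x : ι × (Fin c →₀ ℕ) | 2 * x.2.degree + deg x.1 = i}.Finite := h.subset (by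
    rintro ⟨b, α⟩ hx
    refine ⟨trivial, ?_⟩
    have : 2 * α.degree + deg b = i := hx
    change α.degree ≤ i
    omega)
  exact h2.to_subtype

noncomputable instance (deg : ι → ℕ) (i : ℕ) : Fintype (BasisIndex c deg i) := Fintype.ofFinite _

open Classical in
/-- Coordinates on the degree `i` part. -/
noncomputable def degPartEquiv (B : Type*) [CommRing B] (M : Type*) [AddCommGroup M] [Module B M]
    (c : ℕ) (deg : ι → ℕ) (i : ℕ) : degPart B M c deg c i ≃ₗ[B] (BasisIndex c deg i → M) where
  toFun v x := v.1 x.1.1 x.1.2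
  map_add' _ _ := rfl
  map_smul' _ _ := rfl
  invFun g := ⟨fun b α => if h : 2 * α.degree + deg b = i then g ⟨(b, α), h⟩ else 0, by
    intro b α hne
    beta_reduce at hne
    split_ifs at hne with h
    · exact ⟨h, fun j hj => absurd j.2 (by omega)⟩
    · exact absurd rfl hne⟩
  left_inv v := by
    ext b α
    by_cases h : 2 * α.degree + deg b = i
    · simp [h]
    · by_cases h0 : v.1 b α = 0
      · simp [h0]
      · exact absurd (v.2 b α h0).1 h
  right_inv g := by
    funext x
    have : 2 * x.1.2.degree + deg x.1.1 = i := x.2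
    simp only [this, dif_pos]
    rfl

lemma isSys_degPart {deg : ι → ℕ} {σ : Matrix ι ι (MvPolynomial (Fin c) B)}
    (hhom : IsHomMat deg σ) (hsq : σ * σ = 0) (D : ℕ) (k : ℕ) (hk : k ≤ c) :
    IsSys (dmap M σ) (fun i => degPart B M c deg k (i + D)) (chiList B M ι c k) := by
  have hL : ∀ k, k ≤ c → ∀ χ ∈ chiList B M ι c k, ∃ j, χ = chi B M ι j := by
    intro k
    induction k with
    | zero => intro _ χ hχ; simp [chiList] at hχ
    | succ k ih =>
      intro hk χ hχ
      rw [chiList, List.mem_cons, dif_pos (by omega : k < c)] at hχ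
      rcases hχ with rfl | hχ
      · exact ⟨_, rfl⟩
      · exact ih (by omega) χ hχ
  refine ⟨?_, ?_, ?_, ?_, ?_⟩
  · intro x
    rw [dmap_dmap, hsq]
    funext b α
    rw [dmap_apply]
    simp [act_zero]
  · intro i x hx
    exact dmap_mem_degPart hhom (by rwa [add_right_comm] at hx)
  · intro χ hχ i x hx
    obtain ⟨j, rfl⟩ := hL k hk χ hχ
    exact chi_mem_degPart j (by rwa [add_right_comm] at hx)
  · intro χ hχ x
    obtain ⟨j, rfl⟩ := hL k hk χ hχ
    exact (chi_dmap j σ x).symm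
  · intro χ hχ ψ hψ x
    obtain ⟨j, rfl⟩ := hL k hk χ hχ
    obtain ⟨j', rfl⟩ := hL k hk ψ hψ
    funext b α
    simp only [chi_apply, add_right_comm]

lemma tower_degPart {deg : ι → ℕ} (σ : Matrix ι ι (MvPolynomial (Fin c) B)) (k : ℕ)
    (hk : k ≤ c) : Tower (dmap M σ) (chiList B M ι c k)
      (fun i => degPart B M c deg k (i + (Finset.univ.sup deg + 1))) := by
  induction k with
  | zero =>
    intro i z hz _
    have : z = 0 := by
      funext b α
      by_contra hne
      obtain ⟨h1, h2⟩ := hz b α hne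
      have h3 : α = 0 := Finsupp.ext fun j => h2 j (Nat.zero_le _)
      have := Finset.le_sup (f := deg) (Finset.mem_univ b)
      rw [h3, map_zero] at h1
      omega
    exact ⟨0, zero_mem _, by rw [this, map_zero]⟩
  | succ k ih =>
    have hkc : k < c := by omega
    rw [chiList, dif_pos hkc]
    refine ⟨fun i v hv => ?_, ?_⟩
    · obtain ⟨w, hw, e⟩ := exists_chi_lift (⟨k, hkc⟩ : Fin c) hv
      exact ⟨w, by beta_reduce; rw [add_right_comm]; exact hw, e⟩
    · convert ih (by omega) using 2 with i
      ext v
      constructor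
      · rintro ⟨hv, hχ⟩ b α hne
        refine ⟨(hv b α hne).1, fun j hj => ?_⟩
        rcases hj.eq_or_lt with h | h
        · by_contra h0
          apply hne
          have hj' : j = ⟨k, hkc⟩ := Fin.ext h.symm
          subst hj'
          have e := congrFun (congrFun hχ b) (α - Finsupp.single ⟨k, hkc⟩ 1)
          rw [chi_apply, tsub_add_cancel_of_le] at e
          · exact e
          · rw [Finsupp.single_le_iff]; omega
        · exact (hv b α hne).2 j h
      · intro hv
        refine ⟨fun b α hne => ⟨(hv b α hne).1, fun j hj => (hv b α hne).2 j (by omega)⟩, ?_⟩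
        exact chi_eq_zero_of_mem _ hv le_rfl

/-- The dichotomy for the homology, with coefficients in a finite module `M`, of the complex given
by a homogeneous matrix of square zero. -/
theorem degPart_dichotomy [IsNoetherianRing B] [IsLocalRing B] [Module.Finite B M] {deg : ι → ℕ}
    {σ : Matrix ι ι (MvPolynomial (Fin c) B)} (hhom : IsHomMat deg σ) (hsq : σ * σ = 0) :
    (∃ N, ∀ i ≥ N, ∀ z ∈ degPart B M c deg c i, dmap M σ z = 0 →
      ∃ b ∈ degPart B M c deg c (i + 1), dmap M σ b = z) ∨
    ∃ p : Ideal B, p.IsPrime ∧ ∃ a, ∀ k, ∃ z ∈ degPart B M c deg c (a + 2 * k),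
      dmap M σ z = 0 ∧
      ∀ r : B, r ∈ p ↔ ∃ b ∈ degPart B M c deg c (a + 2 * k + 1), dmap M σ b = r • z := by
  have hFG : ∀ i, (degPart B M c deg c i).FG := by
    intro i
    rw [← Module.Finite.iff_fg]
    exact Module.Finite.equiv (degPartEquiv B M c deg i).symm
  -- In degrees at least `D` no constant monomials occur, so there the joint kernel of the shifts is
  -- zero.
  set D := Finset.univ.sup deg + 1 with hD
  rcases tower_dichotomy (isSys_degPart (M := M) hhom hsq D c le_rfl)
    (tower_degPart σ c le_rfl) (fun i => hFG _) inferInstance with ⟨N, hN⟩ | ⟨p, hp, a, h⟩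
  · left
    refine ⟨N + D, fun i hi z hz hdz => ?_⟩
    obtain ⟨m, rfl⟩ : ∃ m, i = m + D := ⟨i - D, by omega⟩
    obtain ⟨b, hb, e⟩ := hN m (by omega) z hz hdz
    exact ⟨b, by rw [add_right_comm]; exact hb, e⟩
  · right
    refine ⟨p, hp, a + D, fun k => ?_⟩
    obtain ⟨z, hz, hdz, hr⟩ := h k
    have e1 : a + 2 * k + D = a + D + 2 * k := by ring
    have e2 : a + 2 * k + 1 + D = a + D + 2 * k + 1 := by ring
    simp only [e1] at hz
    simp only [e2] at hr
    exact ⟨z, hz, hdz, hr⟩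

end Dichotomy

/-! ### Tor from a resolution by matrices -/

section MatrixResolution

variable {A : Type u} [CommRing A]

/-- The map `M^{J'} → M^J` given by a matrix. -/
def mact (M : Type*) [AddCommGroup M] [Module A M] {J J' : Type} [Fintype J']
    (D : Matrix J J' A) : (J' → M) →ₗ[A] (J → M) where
  toFun v b := ∑ b', D b b' • v b'
  map_add' v w := by
    funext b
    simp [smul_add, Finset.sum_add_distrib]
  map_smul' r v := by
    funext b
    simp [Finset.smul_sum, smul_comm r]

lemma mact_apply {M : Type*} [AddCommGroup M] [Module A M] {J J' : Type} [Fintype J']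
    (D : Matrix J J' A) (v : J' → M) (b : J) : mact M D v b = ∑ b', D b b' • v b' := rfl

lemma mact_mact {M : Type*} [AddCommGroup M] [Module A M] {J J' J'' : Type} [Fintype J']
    [Fintype J''] (D : Matrix J J' A) (D' : Matrix J' J'' A) (v : J'' → M) :
    mact M D (mact M D' v) = mact M (D * D') v := by
  funext b
  simp only [mact_apply, Matrix.mul_apply, Finset.smul_sum, Finset.sum_smul, mul_smul]
  exact Finset.sum_comm

open Classical in
lemma mact_single {J J' : Type} [Fintype J'] (D : Matrix J J' A) (b : J) (b' : J') :
    mact A D (Pi.single b' 1) b = D b b' := by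
  simp [mact_apply, Pi.single_apply]

open Classical in
lemma piScalarRight_mact (M : Type*) [AddCommGroup M] [Module A M] {J J' : Type} [Fintype J]
    [Fintype J'] (D : Matrix J J' A) (x : TensorProduct A M (J' → A)) :
    mact M D (TensorProduct.piScalarRight A A M J' x) =
      TensorProduct.piScalarRight A A M J (LinearMap.lTensor M (mact A D) x) := by
  induction x with
  | zero => simp
  | add x y hx hy => simp only [map_add, hx, hy]
  | tmul m v =>
    funext b
    simp [mact_apply, TensorProduct.piScalarRightHom_tmul, Finset.sum_smul, mul_smul]

/-- A resolution of `N` by finite free modules `A^{J i}` with differentials `δ i`. -/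
structure IsRes {N : Type*} [AddCommGroup N] [Module A N] {J : ℕ → Type} [∀ i, Fintype (J i)]
    (δ : ∀ i, Matrix (J i) (J (i + 1)) A) (ε : (J 0 → A) →ₗ[A] N) : Prop where
  d_d : ∀ i, δ i * δ (i + 1) = 0
  exact : ∀ i z, mact A (δ i) z = 0 → ∃ u, mact A (δ (i + 1)) u = z
  ε_d : ∀ u, ε (mact A (δ 0) u) = 0
  exact_zero : ∀ z, ε z = 0 → ∃ u, mact A (δ 0) u = z
  surj : Function.Surjective ε

/-- The homology in degree `i + 1` of the complex of the `M^{J i}`. -/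
abbrev ResHom (M : Type*) [AddCommGroup M] [Module A M] {J : ℕ → Type} [∀ i, Fintype (J i)]
    (δ : ∀ i, Matrix (J i) (J (i + 1)) A) (i : ℕ) : Type _ :=
  LinearMap.ker (mact M (δ i)) ⧸
    (LinearMap.range (mact M (δ (i + 1)))).comap (LinearMap.ker (mact M (δ i))).subtype

namespace IsRes

variable {N : Type u} [AddCommGroup N] [Module A N] {J : ℕ → Type} [∀ i, Fintype (J i)]
  {δ : ∀ i, Matrix (J i) (J (i + 1)) A} {ε : (J 0 → A) →ₗ[A] N}

lemma mact_mact_eq_zero (h : IsRes δ ε) (M : Type*) [AddCommGroup M] [Module A M] (i : ℕ)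
    (v : J (i + 2) → M) : mact M (δ i) (mact M (δ (i + 1)) v) = 0 := by
  rw [mact_mact, h.d_d]
  funext b
  simp [mact_apply]

/-- The chain complex of a matrix resolution. -/
noncomputable def cplx (h : IsRes δ ε) : ChainComplex (ModuleCat.{u} A) ℕ :=
  ChainComplex.of (fun i => ModuleCat.of A (J i → A)) (fun i => ModuleCat.ofHom (mact A (δ i)))
    (fun i => by
      ext v : 2
      exact h.mact_mact_eq_zero A i v)

lemma cplx_d (h : IsRes δ ε) (i : ℕ) :
    h.cplx.d (i + 1) i = ModuleCat.ofHom (mact A (δ i)) :=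
  ChainComplex.of_d (fun i => ModuleCat.of A (J i → A)) (fun i => ModuleCat.ofHom (mact A (δ i))) i

lemma cplx_exactAt (h : IsRes δ ε) (n : ℕ) : h.cplx.ExactAt (n + 1) := by
  rw [HomologicalComplex.exactAt_iff' _ (n + 1 + 1) (n + 1) n (by simp) (by simp),
    ShortComplex.moduleCat_exact_iff]
  intro x hx
  change h.cplx.d (n + 1) n x = 0 at hx
  rw [cplx_d] at hx
  obtain ⟨u, hu⟩ := h.exact n x hx
  refine ⟨u, ?_⟩
  change h.cplx.d (n + 1 + 1) (n + 1) u = x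
  rw [cplx_d]
  exact hu

/-- The augmentation of the chain complex of a matrix resolution. -/
noncomputable def aug (h : IsRes δ ε) : h.cplx.X 0 ⟶ ModuleCat.of A N := ModuleCat.ofHom ε

lemma d_aug (h : IsRes δ ε) : h.cplx.d 1 0 ≫ h.aug = 0 := by
  ext v
  change ε (h.cplx.d 1 0 v) = 0
  rw [cplx_d]
  exact h.ε_d v

/-- A matrix resolution as a projective resolution. -/
noncomputable def projRes (h : IsRes δ ε) : ProjectiveResolution (ModuleCat.of A N) where
  complex := h.cplx
  projective n := by
    have : Projective (ModuleCat.of A (J n → A)) := inferInstance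
    exact this
  π := (ChainComplex.toSingle₀Equiv _ _).symm ⟨h.aug, h.d_aug⟩
  quasiIso := ⟨fun n => by
    cases n
    · rw [ChainComplex.quasiIsoAt₀_iff, ShortComplex.quasiIso_iff_of_zeros']
      · let S : ShortComplex (ModuleCat.{u} A) := ShortComplex.mk (h.cplx.d 1 0) h.aug h.d_aug
        have hS : S.Exact := by
          rw [ShortComplex.moduleCat_exact_iff]
          intro x hx
          obtain ⟨u, hu⟩ := h.exact_zero x hx
          refine ⟨u, ?_⟩
          change h.cplx.d 1 0 u = x
          rw [cplx_d]
          exact hu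
        have hS' : Epi S.g := (ModuleCat.epi_iff_surjective _).2 h.surj
        refine (ShortComplex.exact_and_epi_g_iff_of_iso ?_).2 ⟨hS, hS'⟩
        exact ShortComplex.isoMk (Iso.refl _) (Iso.refl _) (Iso.refl _)
          ((Category.id_comp (h.cplx.d 1 0)).trans (Category.comp_id (h.cplx.d 1 0)).symm)
          (by
            simp [S]
            exact (Category.id_comp h.aug).trans (Category.comp_id h.aug).symm)
      all_goals rfl
    · rw [quasiIsoAt_iff_exactAt']
      · apply h.cplx_exactAt
      · apply ChainComplex.exactAt_succ_single_obj⟩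

/-- Tor in positive degrees computed from a matrix resolution. -/
lemma tor_equiv (h : IsRes δ ε) (M : Type u) [AddCommGroup M] [Module A M] (i : ℕ) :
    Nonempty ((((Tor (ModuleCat.{u} A) (i + 1)).obj (ModuleCat.of A M)).obj (ModuleCat.of A N))
      ≃ₗ[A] ResHom M δ i) := by
  classical
  let F := (MonoidalCategory.tensoringLeft (ModuleCat.{u} A)).obj (ModuleCat.of A M)
  let K := (F.mapHomologicalComplex (ComplexShape.down ℕ)).obj h.cplx
  have e1 : ((Tor (ModuleCat.{u} A) (i + 1)).obj (ModuleCat.of A M)).obj (ModuleCat.of A N) ≅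
    K.homology (i + 1) := h.projRes.isoLeftDerivedObj F (i + 1)
  let S : ShortComplex (ModuleCat.{u} A) := ShortComplex.mk
    (ModuleCat.ofHom (mact M (δ (i + 1)))) (ModuleCat.ofHom (mact M (δ i))) (by
      ext : 1
      exact LinearMap.ext fun v => h.mact_mact_eq_zero M i v)
  let θ : ∀ j, K.X j ≅ ModuleCat.of A (J j → M) := fun j =>
    (TensorProduct.piScalarRight A A M (J j)).toModuleIso
  have hθ : ∀ j, (θ (j + 1)).hom ≫ ModuleCat.ofHom (mact M (δ j)) = K.d (j + 1) j ≫ (θ j).hom := by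
    intro j
    have hd : K.d (j + 1) j = F.map (ModuleCat.ofHom (mact A (δ j))) := by
      rw [← h.cplx_d]; rfl
    rw [hd]
    ext : 1
    exact LinearMap.ext fun x => piScalarRight_mact M (δ j) x
  let e2 : K.sc (i + 1) ≅ S := K.isoSc' (i + 2) (i + 1) i (by simp) (by simp) ≪≫
    ShortComplex.isoMk (θ (i + 2)) (θ (i + 1)) (θ i) (hθ (i + 1)) (hθ i)
  have e3 : K.homology (i + 1) ≅ S.homology := ShortComplex.homologyMapIso e2
  have e4 := (e1 ≪≫ e3 ≪≫ S.moduleCatHomologyIso).toLinearEquiv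
  refine ⟨e4.trans (Submodule.quotEquivOfEq _ _ ?_)⟩
  ext x
  constructor
  · rintro ⟨u, rfl⟩
    exact ⟨u, rfl⟩
  · rintro ⟨u, hu⟩
    exact ⟨u, Subtype.ext hu⟩

end IsRes
end MatrixResolution

/-! ### Existence of matrix resolutions and dimension shifting -/

section Splice

variable {A : Type u} [CommRing A]

open Classical in
lemma exists_matrix {J J' : Type} [Fintype J'] (g : (J' → A) →ₗ[A] (J → A)) :
    ∃ D : Matrix J J' A, mact A D = g := by
  refine ⟨fun b b' => g (Pi.single b' 1) b, LinearMap.pi_ext' fun b' => LinearMap.ext_ring ?_⟩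
  funext b
  exact mact_single (A := A) (fun b b' => g (Pi.single b' 1) b) b b'

lemma mul_eq_zero_of_mact {J J' J'' : Type} [Fintype J'] [Fintype J''] (D : Matrix J J' A)
    (D' : Matrix J' J'' A) (h : ∀ v, mact A D (mact A D' v) = 0) : D * D' = 0 := by
  classical
  ext b b'
  refine (mact_single (D * D') b b').symm.trans ?_
  rw [← mact_mact, h]
  rfl

lemma exists_matrix_range [IsNoetherianRing A] {r : ℕ} (K : Submodule A (Fin r → A)) :
    ∃ (r' : ℕ) (D : Matrix (Fin r) (Fin r') A), LinearMap.range (mact A D) = K := by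
  obtain ⟨r', s, hs⟩ := Submodule.fg_iff_exists_fin_generating_family.1
    (IsNoetherian.noetherian K)
  refine ⟨r', Matrix.of fun b j => s j b, ?_⟩
  rw [← hs]
  ext x
  rw [Submodule.mem_span_range_iff_exists_fun]
  refine exists_congr fun v => ?_
  have : mact A (Matrix.of fun b j => s j b) v = ∑ j, v j • s j := by
    funext b
    simp [mact_apply, mul_comm]
  rw [this]

lemma exists_isRes [IsNoetherianRing A] (N : Type u) [AddCommGroup N] [Module A N]
    [Module.Finite A N] : ∃ (J : ℕ → Type) (_ : ∀ i, Fintype (J i))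
      (δ : ∀ i, Matrix (J i) (J (i + 1)) A) (ε : (J 0 → A) →ₗ[A] N), IsRes δ ε := by
  choose r' D hD using fun s : (Σ r : ℕ, Submodule A (Fin r → A)) => exists_matrix_range s.2
  obtain ⟨n, ε, hε⟩ := Module.Finite.exists_fin' A N
  let S : ℕ → (Σ r : ℕ, Submodule A (Fin r → A)) := fun i =>
    Nat.rec ⟨n, LinearMap.ker ε⟩ (fun _ s => ⟨r' s, LinearMap.ker (mact A (D s))⟩) i
  have hex : ∀ i, ∀ z, mact A (D (S i)) z = 0 ↔ ∃ u, mact A (D (S (i + 1))) u = z := by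
    intro i z
    have := hD (S (i + 1))
    rw [← LinearMap.mem_range, this]
    rfl
  have hex0 : ∀ z, ε z = 0 ↔ ∃ u, mact A (D (S 0)) u = z := by
    intro z
    have := hD (S 0)
    rw [← LinearMap.mem_range, this]
    rfl
  refine ⟨fun i => Fin (S i).1, fun _ => inferInstance, fun i => D (S i), ε, ?_, ?_, ?_, ?_, hε⟩
  · exact fun i => mul_eq_zero_of_mact _ _ fun v => (hex i _).2 ⟨v, rfl⟩
  · exact fun i z hz => (hex i z).1 hz
  · exact fun u => (hex0 _).2 ⟨u, rfl⟩
  · exact fun z hz => (hex0 z).1 hz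

/-- The index sets of a resolution extended by one step to the right. -/
def consIdx (J₀ : Type) (J : ℕ → Type) : ℕ → Type
  | 0 => J₀
  | i + 1 => J i

instance consIdxFintype (J₀ : Type) [Fintype J₀] (J : ℕ → Type) [∀ i, Fintype (J i)] :
    ∀ i, Fintype (consIdx J₀ J i)
  | 0 => inferInstanceAs (Fintype J₀)
  | i + 1 => inferInstanceAs (Fintype (J i))

/-- The differentials of a resolution extended by one step to the right. -/
def consMat {J₀ : Type} {J : ℕ → Type} (D : Matrix J₀ (J 0) A)
    (δ : ∀ i, Matrix (J i) (J (i + 1)) A) :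
    ∀ i, Matrix (consIdx J₀ J i) (consIdx J₀ J (i + 1)) A
  | 0 => D
  | i + 1 => δ i

lemma IsRes.cons {N K : Type u} [AddCommGroup N] [Module A N] [AddCommGroup K] [Module A K]
    {J₀ : Type} [Fintype J₀] {J : ℕ → Type} [∀ i, Fintype (J i)]
    {δ : ∀ i, Matrix (J i) (J (i + 1)) A} {ε : (J 0 → A) →ₗ[A] K} (h : IsRes δ ε)
    (f : K →ₗ[A] (J₀ → A)) (hf : Function.Injective f) (g : (J₀ → A) →ₗ[A] N)
    (hg : Function.Surjective g) (hfg : ∀ x, g x = 0 ↔ ∃ y, f y = x) (D : Matrix J₀ (J 0) A)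
    (hD : mact A D = f ∘ₗ ε) :
    IsRes (J := consIdx J₀ J) (consMat D δ) g where
  d_d
    | 0 => mul_eq_zero_of_mact D (δ 0) fun v => by
      rw [hD, LinearMap.comp_apply, h.ε_d, map_zero]
    | i + 1 => h.d_d i
  exact
    | 0, z, hz => by
      have h2 := LinearMap.congr_fun hD z
      have h3 : f (ε z) = f 0 := by
        rw [map_zero]
        exact h2.symm.trans hz
      exact h.exact_zero z (hf h3)
    | i + 1, z, hz => h.exact i z hz
  ε_d u := by
    have h2 := LinearMap.congr_fun hD u
    exact (hfg _).2 ⟨ε u, h2.symm⟩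
  exact_zero z hz := by
    obtain ⟨y, rfl⟩ := (hfg z).1 hz
    obtain ⟨u, rfl⟩ := h.surj y
    exact ⟨u, LinearMap.congr_fun hD u⟩
  surj := hg

lemma tor_shift [IsNoetherianRing A] (M : Type u) [AddCommGroup M] [Module A M]
    {N K : Type u} [AddCommGroup N] [Module A N] [AddCommGroup K] [Module A K]
    (f : K →ₗ[A] A) (hf : Function.Injective f) (g : A →ₗ[A] N)
    (hg : Function.Surjective g) (hfg : ∀ x, g x = 0 ↔ ∃ y, f y = x) (i : ℕ) :
    Nonempty ((((Tor (ModuleCat.{u} A) (i + 2)).obj (ModuleCat.of A M)).obj (ModuleCat.of A N))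
      ≃ₗ[A] (((Tor (ModuleCat.{u} A) (i + 1)).obj (ModuleCat.of A M)).obj (ModuleCat.of A K))) := by
  have : Module.Finite A K := Module.Finite.of_injective f hf
  obtain ⟨J, _, δ, ε, h⟩ := exists_isRes (A := A) K
  let e : (Unit → A) ≃ₗ[A] A := LinearEquiv.funUnique Unit A A
  obtain ⟨D, hD⟩ := exists_matrix ((e.symm.toLinearMap ∘ₗ f) ∘ₗ ε)
  have h' := h.cons (e.symm.toLinearMap ∘ₗ f) (e.symm.injective.comp hf) (g ∘ₗ e.toLinearMap)
    (hg.comp e.surjective) (fun x => by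
      simp only [LinearMap.comp_apply, LinearEquiv.coe_coe, hfg, LinearEquiv.symm_apply_eq]) D hD
  obtain ⟨e1⟩ := h.tor_equiv M i
  obtain ⟨e2⟩ := h'.tor_equiv M (i + 1)
  exact ⟨e2.trans e1.symm⟩

lemma tor_congr (M : Type u) [AddCommGroup M] [Module A M] {N N' : Type u} [AddCommGroup N]
    [Module A N] [AddCommGroup N'] [Module A N'] (e : N ≃ₗ[A] N') (i : ℕ) :
    Nonempty ((((Tor (ModuleCat.{u} A) i).obj (ModuleCat.of A M)).obj (ModuleCat.of A N))
      ≃ₗ[A] (((Tor (ModuleCat.{u} A) i).obj (ModuleCat.of A M)).obj (ModuleCat.of A N'))) :=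
  ⟨(((Tor (ModuleCat.{u} A) i).obj (ModuleCat.of A M)).mapIso e.toModuleIso).toLinearEquiv⟩

end Splice

/-! ### The resolution by higher homotopies in matrix form -/

section PerMat

variable {B : Type u} [CommRing B] {ι : Type} [Fintype ι] {c : ℕ}

lemma dmap_map {M M' : Type*} [AddCommGroup M] [Module B M] [AddCommGroup M'] [Module B M']
    (h : M →ₗ[B] M') (σ : Matrix ι ι (MvPolynomial (Fin c) B)) (v : ι → (Fin c →₀ ℕ) → M)
    (b : ι) (α : Fin c →₀ ℕ) :
    dmap M' σ (fun b α => h (v b α)) b α = h (dmap M σ v b α) := by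
  simp only [dmap_apply, Finset.sum_apply, act_apply, map_sum, map_smul]

open Classical in
/-- The differential `dmap σ` in degree `i + 1`, as a matrix. -/
noncomputable def perMat (deg : ι → ℕ) (σ : Matrix ι ι (MvPolynomial (Fin c) B)) (i : ℕ) :
    Matrix (BasisIndex c deg i) (BasisIndex c deg (i + 1)) B :=
  fun x y => dmap B σ ((degPartEquiv B B c deg (i + 1)).symm (Pi.single y 1)).1 x.1.1 x.1.2

lemma mact_perMat {M : Type*} [AddCommGroup M] [Module B M] (deg : ι → ℕ)
    (σ : Matrix ι ι (MvPolynomial (Fin c) B)) (i : ℕ) (v : BasisIndex c deg (i + 1) → M)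
    (x : BasisIndex c deg i) : mact M (perMat deg σ i) v x =
      dmap M σ ((degPartEquiv B M c deg (i + 1)).symm v).1 x.1.1 x.1.2 := by
  classical
  let L : (BasisIndex c deg (i + 1) → M) →ₗ[B] (BasisIndex c deg i → M) :=
    LinearMap.pi fun x => LinearMap.proj x.1.2 ∘ₗ LinearMap.proj x.1.1 ∘ₗ dmap M σ ∘ₗ
      (degPart B M c deg c (i + 1)).subtype ∘ₗ (degPartEquiv B M c deg (i + 1)).symm.toLinearMap
  have : mact M (perMat deg σ i) = L := by
    refine LinearMap.pi_ext fun y m => ?_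
    funext x
    have h1 : ((degPartEquiv B M c deg (i + 1)).symm (Pi.single y m)).1 = fun b α =>
        LinearMap.toSpanSingleton B M m
          (((degPartEquiv B B c deg (i + 1)).symm (Pi.single y 1)).1 b α) := by
      funext b α
      simp only [degPartEquiv, LinearEquiv.coe_symm_mk, LinearMap.toSpanSingleton_apply]
      by_cases hb : 2 * α.degree + deg b = i + 1
      · simp only [hb, dif_pos]
        have key (y' : BasisIndex c deg (i + 1)) :
            (Pi.single y m : BasisIndex c deg (i + 1) → M) y' =
              (Pi.single y 1 : BasisIndex c deg (i + 1) → B) y' • m := by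
          simp only [Pi.single_apply, ite_smul, one_smul, zero_smul]
        exact key _
      · simp [hb]
    change _ = dmap M σ ((degPartEquiv B M c deg (i + 1)).symm (Pi.single y m)).1 x.1.1 x.1.2
    rw [h1, dmap_map, mact_apply]
    simp [Pi.single_apply, perMat]
  rw [this]
  rfl

lemma mact_perMat_degPartEquiv {M : Type*} [AddCommGroup M] [Module B M] {deg : ι → ℕ}
    {σ : Matrix ι ι (MvPolynomial (Fin c) B)} (hσ : IsHomMat deg σ) (i : ℕ)
    (v : degPart B M c deg c (i + 1)) :
    mact M (perMat deg σ i) (degPartEquiv B M c deg (i + 1) v) =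
      degPartEquiv B M c deg i ⟨dmap M σ v.1, dmap_mem_degPart hσ v.2⟩ := by
  funext x
  rw [mact_perMat, LinearEquiv.symm_apply_apply]
  rfl

lemma mact_perMat_eq_iff {M : Type*} [AddCommGroup M] [Module B M] {deg : ι → ℕ}
    {σ : Matrix ι ι (MvPolynomial (Fin c) B)} (hσ : IsHomMat deg σ) (i : ℕ)
    (z : degPart B M c deg c i) :
    (∃ u, mact M (perMat deg σ i) u = degPartEquiv B M c deg i z) ↔
      ∃ u ∈ degPart B M c deg c (i + 1), dmap M σ u = z := by
  constructor
  · rintro ⟨u, hu⟩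
    obtain ⟨v, rfl⟩ := (degPartEquiv B M c deg (i + 1)).surjective u
    rw [mact_perMat_degPartEquiv hσ] at hu
    exact ⟨v.1, v.2, congrArg Subtype.val ((degPartEquiv B M c deg i).injective hu)⟩
  · rintro ⟨u, hu, e⟩
    refine ⟨degPartEquiv B M c deg (i + 1) ⟨u, hu⟩, ?_⟩
    rw [mact_perMat_degPartEquiv hσ]
    exact congrArg _ (Subtype.ext e)

lemma mact_perMat_eq_zero_iff {M : Type*} [AddCommGroup M] [Module B M] {deg : ι → ℕ}
    {σ : Matrix ι ι (MvPolynomial (Fin c) B)} (hσ : IsHomMat deg σ) (i : ℕ)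
    (z : degPart B M c deg c (i + 1)) :
    mact M (perMat deg σ i) (degPartEquiv B M c deg (i + 1) z) = 0 ↔ dmap M σ z.1 = 0 := by
  rw [mact_perMat_degPartEquiv hσ, LinearEquiv.map_eq_zero_iff]
  exact ⟨fun h => congrArg Subtype.val h, fun h => Subtype.ext h⟩

lemma IsPerRes.isRes {N : Type u} [AddCommGroup N] [Module B N] {deg : ι → ℕ}
    {σ : Matrix ι ι (MvPolynomial (Fin c) B)} {ε : (ι → B) →ₗ[B] N} (h : IsPerRes deg σ ε) :
    ∃ ε' : (BasisIndex c deg 0 → B) →ₗ[B] N, IsRes (perMat deg σ) ε' := by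
  let E := degPartEquiv B B c deg
  let π : (ι → (Fin c →₀ ℕ) → B) →ₗ[B] (ι → B) :=
    LinearMap.pi fun b => LinearMap.proj 0 ∘ₗ LinearMap.proj b
  let ε' : (BasisIndex c deg 0 → B) →ₗ[B] N :=
    ε ∘ₗ π ∘ₗ (degPart B B c deg c 0).subtype ∘ₗ (E 0).symm.toLinearMap
  have hε' : ∀ z : degPart B B c deg c 0, ε' (E 0 z) = ε (fun b => z.1 b 0) := by
    intro z
    change ε (π ((E 0).symm (E 0 z)).1) = _
    rw [LinearEquiv.symm_apply_apply]
    rfl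
  refine ⟨ε', ?_, ?_, ?_, ?_, ?_⟩
  · intro i
    refine mul_eq_zero_of_mact _ _ fun v => ?_
    obtain ⟨w, rfl⟩ := (E (i + 2)).surjective v
    rw [mact_perMat_degPartEquiv h.hom, mact_perMat_eq_zero_iff h.hom]
    change dmap B σ (dmap B σ w.1) = 0
    rw [dmap_dmap, h.sq]
    funext b α
    simp [dmap_apply, act_zero]
  · intro i z hz
    obtain ⟨w, rfl⟩ := (E (i + 1)).surjective z
    rw [mact_perMat_eq_zero_iff h.hom] at hz
    exact (mact_perMat_eq_iff h.hom _ w).2 (h.exact_succ i w.1 w.2 hz)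
  · intro u
    obtain ⟨w, rfl⟩ := (E 1).surjective u
    rw [mact_perMat_degPartEquiv h.hom, hε']
    exact h.ε_d w.1 w.2
  · intro z hz
    obtain ⟨w, rfl⟩ := (E 0).surjective z
    rw [hε'] at hz
    exact (mact_perMat_eq_iff h.hom _ w).2 (h.exact_zero w.1 w.2 hz)
  · intro n
    obtain ⟨z, hz, e⟩ := h.surj n
    exact ⟨E 0 ⟨z, hz⟩, (hε' _).trans e⟩

theorem resHom_dichotomy [IsNoetherianRing B] [IsLocalRing B] (M : Type u) [AddCommGroup M]
    [Module B M] [Module.Finite B M] {N : Type u} [AddCommGroup N] [Module B N] {deg : ι → ℕ}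
    {σ : Matrix ι ι (MvPolynomial (Fin c) B)} {ε : (ι → B) →ₗ[B] N} (h : IsPerRes deg σ ε) :
    (∃ n, ∀ i ≥ n, Subsingleton (ResHom M (perMat deg σ) i)) ∨
    ∃ (p : Ideal B) (a : ℕ), ∀ k, p ∈ associatedPrimes B (ResHom M (perMat deg σ) (a + 2 * k)) := by
  rcases degPart_dichotomy (M := M) h.hom h.sq with ⟨n, hn⟩ | ⟨p, hp, a, hp'⟩
  · refine Or.inl ⟨n, fun i hi => ?_⟩
    rw [Submodule.Quotient.subsingleton_iff, eq_top_iff]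
    rintro ⟨z, hz⟩ -
    obtain ⟨w, rfl⟩ := (degPartEquiv B M c deg (i + 1)).surjective z
    have h1 := (mact_perMat_eq_zero_iff h.hom i w).1 hz
    exact (mact_perMat_eq_iff h.hom _ w).2 (hn (i + 1) (by omega) w.1 w.2 h1)
  · refine Or.inr ⟨p, a + 1, fun k => ?_⟩
    obtain ⟨z, hz, hdz, hr⟩ := hp' (k + 1)
    have e : a + 2 * (k + 1) = a + 1 + 2 * k + 1 := by ring
    rw [e] at hz hr
    have hz' := (mact_perMat_eq_zero_iff h.hom _ ⟨z, hz⟩).2 hdz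
    change IsAssociatedPrime _ _
    rw [isAssociatedPrime_iff]
    refine ⟨hp, Submodule.Quotient.mk ⟨_, hz'⟩, ?_⟩
    ext r
    rw [hr, Submodule.mem_colon_singleton, Submodule.mem_bot, ← Submodule.Quotient.mk_smul,
      Submodule.Quotient.mk_eq_zero]
    have := mact_perMat_eq_iff h.hom _ (r • (⟨z, hz⟩ : degPart B M c deg c (a + 1 + 2 * k + 1)))
    rw [map_smul] at this
    exact this.symm

end PerMat

/-! ### Flat base change -/

section BaseChange

open TensorProduct

variable {A : Type u} [CommRing A] {B : Type u} [CommRing B] [Algebra A B]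

lemma exists_equiv_tensor_homology [Module.Flat A B] {C'' C C' : Type*} [AddCommGroup C'']
    [AddCommGroup C] [AddCommGroup C'] [Module A C''] [Module A C] [Module A C']
    (f : C'' →ₗ[A] C) (g : C →ₗ[A] C') (hgf : ∀ x, g (f x) = 0)
    {X'' X X' : Type*} [AddCommGroup X''] [AddCommGroup X] [AddCommGroup X']
    [Module B X''] [Module B X] [Module B X'] (F : X'' →ₗ[B] X) (G : X →ₗ[B] X')
    (θ'' : B ⊗[A] C'' ≃ₗ[B] X'') (θ : B ⊗[A] C ≃ₗ[B] X) (θ' : B ⊗[A] C' ≃ₗ[B] X')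
    (hF : ∀ x, F (θ'' x) = θ (f.lTensor B x)) (hG : ∀ x, G (θ x) = θ' (g.lTensor B x)) :
    Nonempty ((LinearMap.ker G ⧸ (LinearMap.range F).comap (LinearMap.ker G).subtype) ≃ₗ[B]
      B ⊗[A] (LinearMap.ker g ⧸ (LinearMap.range f).comap (LinearMap.ker g).subtype)) := by
  let K := LinearMap.ker g
  let q := ((LinearMap.range f).comap K.subtype).mkQ
  let f' : C'' →ₗ[A] K := f.codRestrict K hgf
  have hinj : Function.Injective (K.subtype.lTensor B) :=
    Module.Flat.lTensor_preserves_injective_linearMap _ K.injective_subtype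
  have hexK : Function.Exact (K.subtype.lTensor B) (g.lTensor B) :=
    Module.Flat.lTensor_exact B (LinearMap.exact_subtype_ker_map g)
  have hex' : Function.Exact f' q := by
    intro y
    simp only [q, Submodule.mkQ_apply, Submodule.Quotient.mk_eq_zero, Submodule.mem_comap]
    constructor
    · rintro ⟨x, hx⟩
      exact ⟨x, Subtype.ext hx⟩
    · rintro ⟨x, rfl⟩
      exact ⟨x, rfl⟩
  have hq : Function.Surjective q := Submodule.mkQ_surjective _
  have hexq : Function.Exact (f'.lTensor B) (q.lTensor B) := lTensor_exact B hex' hq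
  let Φ : B ⊗[A] K →ₗ[B] LinearMap.ker G :=
    (θ.toLinearMap ∘ₗ AlgebraTensorModule.lTensor B B K.subtype).codRestrict _ (fun x => by
      change G (θ (K.subtype.lTensor B x)) = 0
      rw [hG, (hexK _).2 ⟨x, rfl⟩, map_zero])
  let Ψ := ((LinearMap.range F).comap (LinearMap.ker G).subtype).mkQ ∘ₗ Φ
  have hΦ : Function.Surjective Φ := by
    rintro ⟨y, hy⟩
    obtain ⟨y, rfl⟩ := θ.surjective y
    rw [LinearMap.mem_ker, hG, LinearEquiv.map_eq_zero_iff] at hy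
    obtain ⟨x, hx⟩ := (hexK y).1 hy
    exact ⟨x, Subtype.ext (congrArg θ hx)⟩
  have hΨ : Function.Surjective Ψ := (Submodule.mkQ_surjective _).comp hΦ
  let Q := AlgebraTensorModule.lTensor B B q
  have hQ : Function.Surjective Q := LinearMap.lTensor_surjective B hq
  have hker : LinearMap.ker Ψ = LinearMap.ker Q := by
    ext x
    have h1 : x ∈ LinearMap.ker Q ↔ ∃ w, f'.lTensor B w = x := hexq x
    rw [h1]
    have h2 : x ∈ LinearMap.ker Ψ ↔ ∃ u, F u = θ (K.subtype.lTensor B x) := by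
      simp only [Ψ, LinearMap.mem_ker, LinearMap.comp_apply, Submodule.mkQ_apply,
        Submodule.Quotient.mk_eq_zero, Submodule.mem_comap]
      rfl
    rw [h2, θ''.surjective.exists]
    refine exists_congr fun w => ?_
    rw [hF, θ.injective.eq_iff, ← hinj.eq_iff, ← LinearMap.lTensor_comp_apply]
    rfl
  exact ⟨((Ψ.quotKerEquivOfSurjective hΨ).symm.trans (Submodule.quotEquivOfEq _ _ hker)).trans
    (Q.quotKerEquivOfSurjective hQ)⟩

open Classical in
lemma piRight_mact (M : Type*) [AddCommGroup M] [Module A M] {J J' : Type} [Fintype J]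
    [Fintype J'] (D : Matrix J J' A) (x : B ⊗[A] (J' → M)) :
    mact (B ⊗[A] M) (D.map (algebraMap A B)) (TensorProduct.piRight A B B (fun _ : J' => M) x) =
      TensorProduct.piRight A B B (fun _ : J => M) ((mact M D).lTensor B x) := by
  induction x with
  | zero => simp
  | add x y hx hy => simp only [map_add, hx, hy]
  | tmul m v =>
    funext b
    simp [mact_apply, TensorProduct.tmul_sum]

open Classical in
lemma piScalarRight_mact' {J J' : Type} [Fintype J]
    [Fintype J'] (D : Matrix J J' A) (x : B ⊗[A] (J' → A)) :
    mact B (D.map (algebraMap A B)) (TensorProduct.piScalarRight A B B J' x) =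
      TensorProduct.piScalarRight A B B J ((mact A D).lTensor B x) := by
  induction x with
  | zero => simp
  | add x y hx hy => simp only [map_add, hx, hy]
  | tmul m v =>
    funext b
    simp [mact_apply, TensorProduct.piScalarRightHom_tmul, Finset.sum_mul, mul_assoc,
      Algebra.smul_def]

variable {J : ℕ → Type} [∀ i, Fintype (J i)] {δ : ∀ i, Matrix (J i) (J (i + 1)) A}

lemma IsRes.baseChange [Module.Flat A B] {N : Type u} [AddCommGroup N] [Module A N]
    {ε : (J 0 → A) →ₗ[A] N} (h : IsRes δ ε) :
    ∃ ε' : (J 0 → B) →ₗ[B] B ⊗[A] N, IsRes (fun i => (δ i).map (algebraMap A B)) ε' := by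
  classical
  let θ := fun i => TensorProduct.piScalarRight A B B (J i)
  have hθ : ∀ i x, mact B ((δ i).map (algebraMap A B)) (θ (i + 1) x) =
      θ i ((mact A (δ i)).lTensor B x) := fun i x => piScalarRight_mact' (δ i) x
  let ε' : (J 0 → B) →ₗ[B] B ⊗[A] N :=
    AlgebraTensorModule.lTensor B B ε ∘ₗ (θ 0).symm.toLinearMap
  have hε' : ∀ x, ε' (θ 0 x) = ε.lTensor B x := by
    intro x
    change ε.lTensor B ((θ 0).symm (θ 0 x)) = _
    rw [LinearEquiv.symm_apply_apply]
  have hex : ∀ i, Function.Exact ((mact A (δ (i + 1))).lTensor B) ((mact A (δ i)).lTensor B) :=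
    fun i => Module.Flat.lTensor_exact B fun z => ⟨fun hz => h.exact i z hz, by
      rintro ⟨u, rfl⟩
      exact h.mact_mact_eq_zero A i u⟩
  have hex0 : Function.Exact ((mact A (δ 0)).lTensor B) (ε.lTensor B) :=
    Module.Flat.lTensor_exact B fun z => ⟨fun hz => h.exact_zero z hz, by
      rintro ⟨u, rfl⟩
      exact h.ε_d u⟩
  refine ⟨ε', fun i => ?_, fun i z hz => ?_, fun u => ?_, fun z hz => ?_, ?_⟩
  · rw [← Matrix.map_mul, h.d_d, Matrix.map_zero _ (map_zero _)]
  · obtain ⟨z, rfl⟩ := (θ (i + 1)).surjective z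
    rw [hθ, LinearEquiv.map_eq_zero_iff] at hz
    obtain ⟨u, rfl⟩ := (hex i z).1 hz
    exact ⟨θ (i + 2) u, hθ (i + 1) u⟩
  · obtain ⟨u, rfl⟩ := (θ 1).surjective u
    rw [hθ, hε']
    exact (hex0 _).2 ⟨u, rfl⟩
  · obtain ⟨z, rfl⟩ := (θ 0).surjective z
    rw [hε'] at hz
    obtain ⟨u, rfl⟩ := (hex0 z).1 hz
    exact ⟨θ 1 u, hθ 0 u⟩
  · exact (LinearMap.lTensor_surjective B h.surj).comp (θ 0).symm.surjective

lemma IsRes.resHom_baseChange [Module.Flat A B] {N : Type u} [AddCommGroup N] [Module A N]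
    {ε : (J 0 → A) →ₗ[A] N} (h : IsRes δ ε) (M : Type u) [AddCommGroup M] [Module A M] (i : ℕ) :
    Nonempty (ResHom (B ⊗[A] M) (fun i => (δ i).map (algebraMap A B)) i ≃ₗ[B]
      B ⊗[A] ResHom M δ i) := by
  classical
  exact exists_equiv_tensor_homology (mact M (δ (i + 1))) (mact M (δ i))
    (h.mact_mact_eq_zero M i) _ _ _ _ _ (piRight_mact M (δ (i + 1))) (piRight_mact M (δ i))

/-- An associated prime of a flat base change lies over an associated prime. -/
lemma comap_mem_associatedPrimes [IsNoetherianRing A] [IsNoetherianRing B] [Module.Flat A B]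
    {T : Type*} [AddCommGroup T] [Module A T] {q : Ideal B}
    (hq : q ∈ associatedPrimes B (B ⊗[A] T)) :
    q.comap (algebraMap A B) ∈ associatedPrimes A T := by
  obtain ⟨hqp, x, hx⟩ := isAssociatedPrime_iff.1 hq
  set p := q.comap (algebraMap A B) with hp
  have hpp : p.IsPrime := Ideal.comap_isPrime _ _
  have hmem : ∀ a : A, a ∈ p ↔ a • x = 0 := by
    intro a
    rw [hp, Ideal.mem_comap, hx, Submodule.mem_colon_singleton, Submodule.mem_bot,
      algebraMap_smul]
  obtain ⟨n, s, hs⟩ := Submodule.fg_iff_exists_fin_generating_family.1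
    (IsNoetherian.noetherian p)
  -- `T₀` is the submodule of `T` killed by `p`; by flatness `x` comes from `B ⊗ T₀`
  let g : T →ₗ[A] (Fin n → T) := LinearMap.pi fun j => LinearMap.lsmul A T (s j)
  have hgx : g.lTensor B x = 0 := by
    classical
    apply (TensorProduct.piRight A A B (fun _ : Fin n => T)).injective
    rw [map_zero]
    funext j
    have h1 : ∀ y, TensorProduct.piRight A A B (fun _ : Fin n => T) (g.lTensor B y) j = s j • y := by
      intro y
      induction y with
      | zero => simp
      | add y z hy hz => simp only [map_add, Pi.add_apply, hy, hz, smul_add]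
      | tmul b t => simp [g]
    rw [h1]
    exact (hmem _).1 (hs ▸ Submodule.subset_span ⟨j, rfl⟩)
  obtain ⟨y, rfl⟩ := (Module.Flat.lTensor_exact B (LinearMap.exact_subtype_ker_map g) x).1 hgx
  have hT₀ : ∀ a ∈ p, ∀ t ∈ LinearMap.ker g, a • t = 0 := by
    intro a ha t ht
    rw [← hs] at ha
    induction ha using Submodule.span_induction with
    | mem a h =>
      obtain ⟨j, rfl⟩ := h
      exact congrFun ht j
    | zero => exact zero_smul _ _
    | add a b _ _ h1 h2 => rw [add_smul, h1, h2, add_zero]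
    | smul c a _ h => rw [smul_assoc, h, smul_zero]
  by_contra hcon
  -- otherwise every element of `T₀` is killed by some element outside `p`
  have hkill : ∀ t ∈ LinearMap.ker g, ∃ r ∉ p, r • t = 0 := by
    intro t ht
    by_contra! hne
    refine hcon (isAssociatedPrime_iff.2 ⟨hpp, t, ?_⟩)
    ext a
    rw [Submodule.mem_colon_singleton, Submodule.mem_bot]
    exact ⟨fun ha => hT₀ a ha t ht, fun ha => by
      by_contra h
      exact hne a h ha⟩
  have hkill' : ∀ y : B ⊗[A] LinearMap.ker g, ∃ r ∉ p, r • y = 0 := by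
    intro y
    induction y with
    | zero => exact ⟨1, hpp.one_notMem, smul_zero _⟩
    | tmul b t =>
      obtain ⟨r, hr, h⟩ := hkill t.1 t.2
      refine ⟨r, hr, ?_⟩
      have h' : r • t = 0 := Subtype.ext h
      rw [← TensorProduct.tmul_smul, h', TensorProduct.tmul_zero]
    | add y z hy hz =>
      obtain ⟨r, hr, h⟩ := hy
      obtain ⟨r', hr', h'⟩ := hz
      refine ⟨r * r', fun hm => (hpp.mem_or_mem hm).elim hr hr', ?_⟩
      rw [smul_add, mul_smul, mul_smul, h', smul_zero, add_zero, smul_comm, h, smul_zero]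
  obtain ⟨r, hr, h⟩ := hkill' y
  exact hr ((hmem r).2 (by rw [← map_smul, h, map_zero]))

end BaseChange

/-! ### Tor over a complete intersection -/

section CompleteIntersection

lemma IsRegularLocal.isRegularLocalRing {Q : Type u} [CommRing Q] [IsLocalRing Q]
    [IsNoetherianRing Q] (h : IsRegularLocal Q) : IsRegularLocalRing Q := by
  obtain ⟨s, hs, hc⟩ := h
  refine IsRegularLocalRing.of_spanFinrank_maximalIdeal_le (R := Q) ?_
  rw [← hc, ← hs]
  have := Submodule.spanFinrank_span_le_ncard_of_finite (R := Q) s.finite_toSet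
  rw [Set.ncard_coe_finset] at this
  exact_mod_cast this

lemma firstIdeal_get {Q : Type u} [CommRing Q] (rs : List Q) (k : ℕ) :
    firstIdeal (fun j : Fin rs.length => rs[j]) k = Ideal.ofList (rs.take k) := by
  simp only [firstIdeal, Ideal.ofList]
  congr 1
  ext x
  simp only [Set.mem_ofPred_eq, List.mem_take_iff_getElem]
  constructor
  · rintro ⟨j, hj, rfl⟩
    exact ⟨j, by simp; omega, rfl⟩
  · rintro ⟨j, hj, rfl⟩
    exact ⟨⟨j, by omega⟩, by simp at hj ⊢; omega, rfl⟩

lemma mem_firstIdeal_of_mul_mem {Q : Type u} [CommRing Q] {rs : List Q}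
    (h : RingTheory.Sequence.IsRegular Q rs) (j : Fin rs.length) (x : Q)
    (hx : rs[j] * x ∈ firstIdeal (fun j : Fin rs.length => rs[j]) j) :
    x ∈ firstIdeal (fun j : Fin rs.length => rs[j]) j := by
  rw [firstIdeal_get] at hx ⊢
  have h1 := h.regular_mod_prev j j.2
  have h2 : (Ideal.ofList (rs.take j) • ⊤ : Submodule Q Q) = Ideal.ofList (rs.take j) := by
    simp
  rw [h2] at h1
  have h3 : rs[j] • (Submodule.Quotient.mk x : Q ⧸ Ideal.ofList (rs.take j)) = rs[j] • 0 := by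
    rw [smul_zero, ← Submodule.Quotient.mk_smul, Submodule.Quotient.mk_eq_zero]
    exact hx
  exact (Submodule.Quotient.mk_eq_zero _).1 (h1 h3)

/-- Over the completion of a local complete intersection, every finitely generated module has a
resolution by higher homotopies. -/
lemma exists_isPerRes_completion {A : Type u} [CommRing A] [IsLocalRing A] [IsNoetherianRing A]
    (hA : IsLocalCompleteIntersection A) :
    IsNoetherianRing (AdicCompletion (IsLocalRing.maximalIdeal A) A) ∧ ∃ c : ℕ,
    ∀ (N : Type u) [AddCommGroup N] [Module (AdicCompletion (IsLocalRing.maximalIdeal A) A) N]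
      [Module.Finite (AdicCompletion (IsLocalRing.maximalIdeal A) A) N],
      ∃ (ι : Type) (_ : Fintype ι) (deg : ι → ℕ)
        (σ : Matrix ι ι
          (MvPolynomial (Fin c) (AdicCompletion (IsLocalRing.maximalIdeal A) A)))
        (ε : (ι → AdicCompletion (IsLocalRing.maximalIdeal A) A) →ₗ[
          AdicCompletion (IsLocalRing.maximalIdeal A) A] N), IsPerRes deg σ ε := by
  obtain ⟨Q, _, _, _, hQ, rs, hrs, ⟨e⟩⟩ := hA
  have := hQ.isRegularLocalRing
  let φ : Q →+* AdicCompletion (IsLocalRing.maximalIdeal A) A :=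
    e.symm.toRingHom.comp (Ideal.Quotient.mk _)
  have hφ : Function.Surjective φ := e.symm.surjective.comp Ideal.Quotient.mk_surjective
  have hker : RingHom.ker φ = firstIdeal (fun j : Fin rs.length => rs[j]) rs.length := by
    rw [firstIdeal_get, List.take_length]
    ext x
    have : φ x = e.symm (Ideal.Quotient.mk _ x) := rfl
    rw [RingHom.mem_ker, this, map_eq_zero_iff _ e.symm.injective, Ideal.Quotient.eq_zero_iff_mem]
  exact ⟨isNoetherianRing_of_surjective _ _ φ hφ, rs.length, fun N _ _ _ =>
    exists_isPerRes φ hφ _ hker (mem_firstIdeal_of_mul_mem hrs) N⟩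

lemma faithfullyFlat_completion (A : Type u) [CommRing A] [IsLocalRing A] [IsNoetherianRing A] :
    Module.FaithfullyFlat A (AdicCompletion (IsLocalRing.maximalIdeal A) A) := by
  have : IsLocalHom (algebraMap A (AdicCompletion (IsLocalRing.maximalIdeal A) A)) := by
    refine ⟨fun a ha => ?_⟩
    by_contra h
    have h1 : a ∈ IsLocalRing.maximalIdeal A := h
    have h2 := ha.map (AdicCompletion.evalₐ (IsLocalRing.maximalIdeal A) 1)
    rw [AlgHom.commutes] at h2
    have h3 : algebraMap A (A ⧸ IsLocalRing.maximalIdeal A ^ 1) a = 0 :=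
      Ideal.Quotient.eq_zero_iff_mem.2 (by simpa using h1)
    rw [h3, isUnit_zero_iff, eq_comm] at h2
    have h4 : (1 : A) ∈ IsLocalRing.maximalIdeal A ^ 1 := Ideal.Quotient.eq_zero_iff_mem.1 h2
    rw [pow_one] at h4
    exact (Ideal.ne_top_iff_one _).1 (IsLocalRing.maximalIdeal.isMaximal A).ne_top h4
  have : Module.Flat A (AdicCompletion (IsLocalRing.maximalIdeal A) A) :=
    AdicCompletion.flat_of_isNoetherian _
  exact Module.FaithfullyFlat.of_flat_of_isLocalHom

/-- Asymptotic stability for a pair of fixed modules: far out, `Tor_i(M, N)` vanishes, or some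
prime is associated to every second `Tor_i(M, N)`. -/
theorem tor_dichotomy {A : Type u} [CommRing A] [IsLocalRing A] [IsNoetherianRing A]
    (hA : IsLocalCompleteIntersection A)
    (M : Type u) [AddCommGroup M] [Module A M] [Module.Finite A M]
    (N : Type u) [AddCommGroup N] [Module A N] [Module.Finite A N] :
    (∃ n, ∀ i ≥ n, Subsingleton (((Tor (ModuleCat.{u} A) (i + 1)).obj
        (ModuleCat.of A M)).obj (ModuleCat.of A N))) ∨
      ∃ (p : Ideal A) (a : ℕ), ∀ k, p ∈ associatedPrimes A
        (((Tor (ModuleCat.{u} A) (a + 2 * k + 1)).obj (ModuleCat.of A M)).obj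
          (ModuleCat.of A N)) := by
  obtain ⟨hnoeth, c, hres⟩ := exists_isPerRes_completion hA
  have hff := faithfullyFlat_completion A
  let B := AdicCompletion (IsLocalRing.maximalIdeal A) A
  obtain ⟨J, _, δ, ε, h⟩ := exists_isRes (A := A) N
  obtain ⟨ε', h'⟩ := h.baseChange (B := B)
  obtain ⟨ι, _, deg, σ, ε₁, h₁⟩ := hres (TensorProduct A B N)
  obtain ⟨ε₂, h₂⟩ := h₁.isRes
  -- both resolutions of `B ⊗ N` compute `B ⊗ Tor(M, N)`
  have key (i : ℕ) : Nonempty (ResHom (TensorProduct A B M) (perMat deg σ) i ≃ₗ[B]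
      TensorProduct A B (((Tor (ModuleCat.{u} A) (i + 1)).obj (ModuleCat.of A M)).obj
        (ModuleCat.of A N))) := by
    obtain ⟨e₁⟩ := h₂.tor_equiv (TensorProduct A B M) i
    obtain ⟨e₂⟩ := h'.tor_equiv (TensorProduct A B M) i
    obtain ⟨e₃⟩ := h.resHom_baseChange (B := B) M i
    obtain ⟨e₄⟩ := h.tor_equiv M i
    exact ⟨e₁.symm ≪≫ₗ e₂ ≪≫ₗ e₃ ≪≫ₗ e₄.symm.baseChange A B _ _⟩
  rcases resHom_dichotomy (TensorProduct A B M) h₁ with ⟨n, hn⟩ | ⟨p, a, hp⟩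
  · refine Or.inl ⟨n, fun i hi => ?_⟩
    obtain ⟨e⟩ := key i
    have := hn i hi
    have : Subsingleton (TensorProduct A B (((Tor (ModuleCat.{u} A) (i + 1)).obj
        (ModuleCat.of A M)).obj (ModuleCat.of A N))) := e.symm.toEquiv.subsingleton
    exact Module.FaithfullyFlat.lTensor_reflects_triviality A B _
  · refine Or.inr ⟨p.comap (algebraMap A B), a, fun k => ?_⟩
    obtain ⟨e⟩ := key (a + 2 * k)
    refine comap_mem_associatedPrimes ?_
    rw [← LinearEquiv.AssociatedPrimes.eq e]
    exact hp k

end CompleteIntersection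

/-! ### Powers of the ideal -/

section Powers

variable {A : Type u} [CommRing A] [IsLocalRing A] [IsNoetherianRing A]

/-- `Tor_{i+2}(M, A/I) ≅ Tor_{i+1}(M, I)`. -/
lemma tor_quotient (M : Type u) [AddCommGroup M] [Module A M] (I : Ideal A) (i : ℕ) :
    Nonempty (((Tor (ModuleCat.{u} A) (i + 2)).obj (ModuleCat.of A M)).obj
        (ModuleCat.of A (A ⧸ I)) ≃ₗ[A]
      ((Tor (ModuleCat.{u} A) (i + 1)).obj (ModuleCat.of A M)).obj (ModuleCat.of A I)) :=
  tor_shift M I.subtype I.injective_subtype I.mkQ I.mkQ_surjective (fun x => by simp [Ideal.Quotient.eq_zero_iff_mem]) i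

/-- `Tor_{i+2}(M, (x)) ≅ Tor_{i+1}(M, (0 : x))`. -/
lemma tor_span_singleton (M : Type u) [AddCommGroup M] [Module A M] (x : A) (i : ℕ) :
    Nonempty (((Tor (ModuleCat.{u} A) (i + 2)).obj (ModuleCat.of A M)).obj
        (ModuleCat.of A (Ideal.span {x} : Ideal A)) ≃ₗ[A]
      ((Tor (ModuleCat.{u} A) (i + 1)).obj (ModuleCat.of A M)).obj
        (ModuleCat.of A (LinearMap.ker (LinearMap.toSpanSingleton A A x)))) := by
  refine tor_shift M (LinearMap.ker (LinearMap.toSpanSingleton A A x)).subtype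
    (Submodule.injective_subtype _)
    ((LinearMap.toSpanSingleton A A x).codRestrict (Ideal.span {x})
      (fun r => Ideal.mul_mem_left _ _ (Ideal.mem_span_singleton_self x))) ?_ (fun r => ?_) i
  · rintro ⟨z, hz⟩
    obtain ⟨r, rfl⟩ := Ideal.mem_span_singleton'.1 hz
    exact ⟨r, rfl⟩
  · constructor
    · exact fun h => ⟨⟨r, congrArg Subtype.val h⟩, rfl⟩
    · rintro ⟨w, rfl⟩
      exact Subtype.ext w.2

/-- If the `A/I^n` are, for large `n`, uniformly syzygy-equivalent to a fixed module `N`, then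
the asymptotic result for the pair `M, N` gives the one for `M, A/I^n`. -/
lemma asymptotic_of_tor_equiv (hA : IsLocalCompleteIntersection A)
    (M : Type u) [AddCommGroup M] [Module A M] [Module.Finite A M] (I : Ideal A)
    (N : Type u) [AddCommGroup N] [Module A N] [Module.Finite A N] (s n₀ : ℕ)
    (hN : ∀ n ≥ n₀, ∀ i, Nonempty (((Tor (ModuleCat.{u} A) (i + s)).obj
        (ModuleCat.of A M)).obj (ModuleCat.of A (A ⧸ I ^ n)) ≃ₗ[A]
      ((Tor (ModuleCat.{u} A) (i + 1)).obj (ModuleCat.of A M)).obj (ModuleCat.of A N))) :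
    ∃ (i₀ n₀ : ℕ),
      (∀ i ≥ i₀, ∀ n ≥ n₀, Subsingleton (((Tor (ModuleCat.{u} A) i).obj
        (ModuleCat.of A M)).obj (ModuleCat.of A (A ⧸ I ^ n)))) ∨
      (∃ 𝒜 : Set (Ideal A), 𝒜.Finite ∧ 𝒜.Nonempty ∧ (∀ p ∈ 𝒜, p.IsPrime) ∧
        ∀ p ∈ 𝒜,
          (∀ i ≥ i₀, ∀ n ≥ n₀, p ∈ associatedPrimes A
            (((Tor (ModuleCat.{u} A) (2 * i)).obj (ModuleCat.of A M)).obj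
              (ModuleCat.of A (A ⧸ I ^ n)))) ∨
          (∀ i ≥ i₀, ∀ n ≥ n₀, p ∈ associatedPrimes A
            (((Tor (ModuleCat.{u} A) (2 * i + 1)).obj (ModuleCat.of A M)).obj
              (ModuleCat.of A (A ⧸ I ^ n))))) := by
  rcases tor_dichotomy hA M N with ⟨m, hm⟩ | ⟨p, a, hp⟩
  · refine ⟨m + s, n₀, Or.inl fun i hi n hn => ?_⟩
    obtain ⟨j, rfl⟩ : ∃ j, i = j + s := ⟨i - s, by omega⟩
    obtain ⟨e⟩ := hN n hn j
    have := hm j (by omega)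
    exact e.toEquiv.subsingleton
  · have hp' (k n : ℕ) (hn : n ≥ n₀) : p ∈ associatedPrimes A
        (((Tor (ModuleCat.{u} A) (a + 2 * k + s)).obj (ModuleCat.of A M)).obj
          (ModuleCat.of A (A ⧸ I ^ n))) := by
      obtain ⟨e⟩ := hN n hn (a + 2 * k)
      rw [LinearEquiv.AssociatedPrimes.eq e]
      exact hp k
    refine ⟨a + s, n₀, Or.inr ⟨{p}, Set.finite_singleton p, Set.singleton_nonempty p, ?_, ?_⟩⟩
    · rintro _ rfl
      exact (hp 0).isPrime
    · rintro _ rfl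
      -- the parity of `a + s` decides between even and odd degrees
      rcases Nat.even_or_odd' (a + s) with ⟨b, hb | hb⟩
      · refine Or.inl fun i hi n hn => ?_
        obtain ⟨k, rfl⟩ : ∃ k, i = b + k := ⟨i - b, by omega⟩
        rw [show 2 * (b + k) = a + 2 * k + s by omega]
        exact hp' k n hn
      · refine Or.inr fun i hi n hn => ?_
        obtain ⟨k, rfl⟩ : ∃ k, i = b + k := ⟨i - b, by omega⟩
        rw [show 2 * (b + k) + 1 = a + 2 * k + s by omega]
        exact hp' k n hn

/-- Annihilators of the powers of an element stabilise. -/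
lemma ker_toSpanSingleton_pow_stable (a : A) :
    ∃ n₀, ∀ n ≥ n₀, LinearMap.ker (LinearMap.toSpanSingleton A A (a ^ n)) =
      LinearMap.ker (LinearMap.toSpanSingleton A A (a ^ n₀)) := by
  let F : ℕ →o Submodule A A :=
    { toFun := fun n => LinearMap.ker (LinearMap.toSpanSingleton A A (a ^ n))
      monotone' := by
        refine monotone_nat_of_le_succ fun n x hx => ?_
        simp only [LinearMap.mem_ker, LinearMap.toSpanSingleton_apply, smul_eq_mul] at hx ⊢
        rw [pow_succ, ← mul_assoc, hx, zero_mul] }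
  obtain ⟨n₀, h⟩ := monotone_stabilizes_iff_noetherian.2 ‹IsNoetherianRing A› F
  exact ⟨n₀, fun n hn => (h n hn).symm⟩

/-- Multiplication by a nonzerodivisor `y` is an isomorphism `J ≅ yJ`. -/
lemma nonempty_equiv_span_singleton_mul {y : A} (hy : y ∈ nonZeroDivisors A) (J : Ideal A) :
    Nonempty (J ≃ₗ[A] (Ideal.span {y} * J : Ideal A)) := by
  have hmem (x : J) : y * (x : A) ∈ Ideal.span {y} * J :=
    Ideal.mul_mem_mul (Ideal.mem_span_singleton_self y) x.2
  refine ⟨LinearEquiv.ofBijective (((LinearMap.mulLeft A y).comp J.subtype).codRestrict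
    (Ideal.span {y} * J) hmem) ⟨fun x x' h => ?_, fun ⟨z, hz⟩ => ?_⟩⟩
  · refine Subtype.ext ((mul_cancel_left_mem_nonZeroDivisors hy).1 ?_)
    exact congrArg Subtype.val h
  · obtain ⟨x, hx, rfl⟩ := Ideal.mem_span_singleton_mul.1 hz
    exact ⟨⟨x, hx⟩, rfl⟩

/-- A principal reduction by a nonzerodivisor makes all large powers isomorphic modules. -/
lemma nonempty_equiv_pow {I : Ideal A} {y : A} (hy : y ∈ nonZeroDivisors A) {m₀ : ℕ}
    (h : ∀ n ≥ m₀, I ^ (n + 1) = Ideal.span {y} * I ^ n) (n : ℕ) (hn : m₀ ≤ n) :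
    Nonempty ((I ^ n : Ideal A) ≃ₗ[A] (I ^ m₀ : Ideal A)) := by
  induction n, hn using Nat.le_induction with
  | base => exact ⟨LinearEquiv.refl _ _⟩
  | succ n hn ih =>
    obtain ⟨e⟩ := ih
    obtain ⟨e'⟩ := nonempty_equiv_span_singleton_mul hy (I ^ n)
    exact ⟨LinearEquiv.ofEq _ _ (h n hn) ≪≫ₗ e'.symm ≪≫ₗ e⟩

end Powers

/-! ### The asymptotic result for powers -/

/-- **Asymptotic associated primes of `Tor_i(M, A/Iⁿ)` over complete intersections.**
Let `A` be a Noetherian local complete intersection ring, `M` a finitely generated `A`-module,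
and `I` an ideal that is either principal or has a principal reduction generated by an
`A`-regular element. Then there exist `i₀, n₀` such that either `Tor_i^A(M,A/Iⁿ) = 0` for all
`i ≥ i₀, n ≥ n₀`, or there is a nonempty finite set `𝒜` of primes such that each `p ∈ 𝒜` lies
in `Ass_A(Tor_{2i}^A(M,A/Iⁿ))` for all `i ≥ i₀, n ≥ n₀`, or in
`Ass_A(Tor_{2i+1}^A(M,A/Iⁿ))` for all `i ≥ i₀, n ≥ n₀`. -/
theorem asymptotic_ass_tor_powers_of_complete_intersection
    (A : Type u) [CommRing A] [IsLocalRing A] [IsNoetherianRing A]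
    (hA : IsLocalCompleteIntersection A)
    (M : Type u) [AddCommGroup M] [Module A M] [Module.Finite A M]
    (I : Ideal A)
    (hI : (∃ a : A, I = Ideal.span {a}) ∨
      (∃ y ∈ I, y ∈ nonZeroDivisors A ∧ ∃ m₀ : ℕ, 1 ≤ m₀ ∧
        ∀ n ≥ m₀, I ^ (n + 1) = Ideal.span {y} * I ^ n)) :
    ∃ (i₀ n₀ : ℕ),
      (∀ i ≥ i₀, ∀ n ≥ n₀, Subsingleton (((Tor (ModuleCat.{u} A) i).obj
        (ModuleCat.of A M)).obj (ModuleCat.of A (A ⧸ I ^ n)))) ∨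
      (∃ 𝒜 : Set (Ideal A), 𝒜.Finite ∧ 𝒜.Nonempty ∧ (∀ p ∈ 𝒜, p.IsPrime) ∧
        ∀ p ∈ 𝒜,
          (∀ i ≥ i₀, ∀ n ≥ n₀, p ∈ associatedPrimes A
            (((Tor (ModuleCat.{u} A) (2 * i)).obj (ModuleCat.of A M)).obj
              (ModuleCat.of A (A ⧸ I ^ n)))) ∨
          (∀ i ≥ i₀, ∀ n ≥ n₀, p ∈ associatedPrimes A
            (((Tor (ModuleCat.{u} A) (2 * i + 1)).obj (ModuleCat.of A M)).obj
              (ModuleCat.of A (A ⧸ I ^ n))))) := by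
  rcases hI with ⟨a, rfl⟩ | ⟨y, -, hy, m₀, -, h⟩
  · obtain ⟨n₀, hn₀⟩ := ker_toSpanSingleton_pow_stable a
    refine asymptotic_of_tor_equiv hA M _
      (LinearMap.ker (LinearMap.toSpanSingleton A A (a ^ n₀))) 3 n₀ fun n hn i => ?_
    obtain ⟨e₁⟩ := tor_quotient M (Ideal.span {a} ^ n) (i + 1)
    obtain ⟨e₂⟩ := tor_congr M (LinearEquiv.ofEq _ _ (Ideal.span_singleton_pow a n)) (i + 2)
    obtain ⟨e₃⟩ := tor_span_singleton M (a ^ n) i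
    obtain ⟨e₄⟩ := tor_congr M (LinearEquiv.ofEq _ _ (hn₀ n hn)) (i + 1)
    exact ⟨e₁ ≪≫ₗ e₂ ≪≫ₗ e₃ ≪≫ₗ e₄⟩
  · refine asymptotic_of_tor_equiv hA M I (I ^ m₀ : Ideal A) 2 m₀ fun n hn i => ?_
    obtain ⟨e⟩ := nonempty_equiv_pow hy h n hn
    obtain ⟨e₁⟩ := tor_quotient M (I ^ n) i
    obtain ⟨e₂⟩ := tor_congr M e (i + 1)
    exact ⟨e₁ ≪≫ₗ e₂⟩
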